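/- arXiv:2504.10138 — 11 statements merged into one kernel-verified Lean document; each statement's English description precedes it below -/
import Mathlib

section
/- For every integer k ≥ 2, if α > 1 is the unique real root greater than 1 of the polynomial Ψ_k(x) = x^k − x^{k−1} − ⋯ − x − 1, then 1/2 < f_k(α) < 3/4, where f_k(x) = (x − 1)/(2 + (k + 1)(x − 2)). -/
/-- For k ≥ 2, if α > 1 is the unique real root greater than 1 of
Ψ_k(x) = x^k − x^{k−1} − ⋯ − x − 1, then 1/2 < f_k(α) < 3/4, where
f_k(x) = (x − 1)/(2 + (k + 1)(x − 2)). -/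
theorem fk_alpha_bounds
    (k : ℕ) (hk : 2 ≤ k) (α : ℝ) (hα : 1 < α)
    (hroot : α ^ k = ∑ i ∈ Finset.range k, α ^ i)
    (huniq : ∀ β : ℝ, 1 < β → β ^ k = ∑ i ∈ Finset.range k, β ^ i → β = α) :
    1 / 2 < (α - 1) / (2 + ((k : ℝ) + 1) * (α - 2)) ∧
      (α - 1) / (2 + ((k : ℝ) + 1) * (α - 2)) < 3 / 4 := by
  have hg := geom_sum_mul α k
  rw [← hroot] at hg
  have h1 : α ^ k * (2 - α) = 1 := by linarith
  have hpos : 0 < α ^ k := by positivity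
  have hd : 0 < 2 - α := by
    by_contra h
    nlinarith
  have hk2 : α ^ 2 ≤ α ^ k := pow_le_pow_right₀ hα.le hk
  have h2 : α ^ 2 * (2 - α) ≤ 1 := by nlinarith
  have h3 : 0 ≤ α ^ 2 - α - 1 := by
    by_contra h
    push Not at h
    nlinarith [mul_pos (sub_pos.2 hα) (neg_pos.2 h)]
  have h4 : (8 / 5 : ℝ) ≤ α := by nlinarith
  have h5 : (8 / 5 : ℝ) ^ k ≤ α ^ k := pow_le_pow_left₀ (by norm_num) h4 k
  have h6 : (3 * (k : ℝ) - 1) / 2 < (8 / 5 : ℝ) ^ k := by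
    clear * - hk
    induction k, hk using Nat.le_induction with
    | base => norm_num
    | succ n hn ih =>
      have : (2 : ℝ) ≤ n := by exact_mod_cast hn
      rw [pow_succ]
      push_cast
      linarith
  have hkr : (2 : ℝ) ≤ k := by exact_mod_cast hk
  have h7 : (3 * (k : ℝ) - 1) * (2 - α) < 2 := by
    nlinarith [mul_pos hd (sub_pos.2 (h6.trans_le h5))]
  have h8 : 0 < 2 + ((k : ℝ) + 1) * (α - 2) := by
    nlinarith [mul_nonneg hd.le (sub_nonneg.2 hkr)]
  constructor
  · rw [div_lt_div_iff₀ two_pos h8]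
    nlinarith [mul_nonneg hd.le (sub_nonneg.2 hkr)]
  · rw [div_lt_div_iff₀ h8 (by norm_num)]
    nlinarith
end

section
/- For every integer k ≥ 2, every complex root z of Ψ_k(x) = x^k − x^{k−1} − ⋯ − x − 1 other than the real root α > 1 satisfies |z| < 1 and |f_k(z)| < 1, where f_k(x) = (x − 1)/(2 + (k + 1)(x − 2)). -/
theorem aux_lt (k : ℕ) (hk : 2 ≤ k) (a b : ℝ) (ha : 0 < a) (hab : a < b)
    (h1 : a ^ k = ∑ i ∈ Finset.range k, a ^ i)
    (h2 : b ^ k = ∑ i ∈ Finset.range k, b ^ i) : False := by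
  have h : ∑ i ∈ Finset.range k, b ^ i * a ^ k < ∑ i ∈ Finset.range k, a ^ i * b ^ k := by
    apply Finset.sum_lt_sum_of_nonempty
    · exact ⟨0, Finset.mem_range.2 (by omega)⟩
    · intro i hi
      have hi := Finset.mem_range.1 hi
      obtain ⟨m, rfl⟩ := Nat.exists_eq_add_of_lt hi
      have hp : a ^ (m+1) < b ^ (m+1) := pow_lt_pow_left₀ hab ha.le (by omega)
      have hb : 0 < b := ha.trans hab
      have : 0 < a ^ i * b ^ i := by positivity
      have e1 : b ^ i * a ^ (i + m + 1) = (a ^ i * b ^ i) * a ^ (m+1) := by ring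
      have e2 : a ^ i * b ^ (i + m + 1) = (a ^ i * b ^ i) * b ^ (m+1) := by ring
      rw [e1, e2]
      exact mul_lt_mul_of_pos_left hp this
  rw [← Finset.sum_mul, ← Finset.sum_mul, ← h1, ← h2] at h
  linarith [mul_comm (a^k) (b^k)]

theorem aux_real (z : ℂ) (h : ‖2 - z‖ ≤ 2 - ‖z‖) : z = (‖z‖ : ℂ) := by
  have h0 := norm_nonneg (2 - z)
  have hs : ‖2 - z‖ ^ 2 ≤ (2 - ‖z‖) ^ 2 := pow_le_pow_left₀ h0 h 2
  have e1 : ‖2 - z‖ ^ 2 = (2 - z.re) ^ 2 + z.im ^ 2 := by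
    rw [Complex.sq_norm, Complex.normSq_apply]; simp; ring
  have e2 : ‖z‖ ^ 2 = z.re ^ 2 + z.im ^ 2 := by
    rw [Complex.sq_norm, Complex.normSq_apply]; ring
  have h3 : ‖z‖ ≤ z.re := by nlinarith
  have h4 : z.re = ‖z‖ := le_antisymm (Complex.re_le_norm z) h3
  have h5 : z.im = 0 := by
    rw [← h4] at e2
    have : z.im ^ 2 = 0 := by linarith
    exact pow_eq_zero_iff (two_ne_zero) |>.1 this
  apply Complex.ext
  · simpa using h4
  · simpa using h5

/-- For k ≥ 2, every complex root z of Ψ_k(x) = x^k − x^{k−1} − ⋯ − x − 1 other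
than the real root α > 1 satisfies |z| < 1 and |f_k(z)| < 1, where
f_k(x) = (x − 1)/(2 + (k + 1)(x − 2)). -/
theorem psi_roots_inside_unit_disc
    (k : ℕ) (hk : 2 ≤ k) (α : ℝ) (hα : 1 < α)
    (hroot : α ^ k = ∑ i ∈ Finset.range k, α ^ i)
    (z : ℂ) (hz : z ^ k = ∑ i ∈ Finset.range k, z ^ i) (hzα : z ≠ (α : ℂ)) :
    ‖z‖ < 1 ∧
      ‖(z - 1) / (2 + ((k : ℂ) + 1) * (z - 2))‖ < 1 := by
  have hk' : (2:ℝ) ≤ k := by exact_mod_cast hk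
  have hlt : ‖z‖ < 1 := by
    by_contra! hr
    have hg := geom_sum_mul z k
    rw [← hz] at hg
    have hz1 : z ^ k * (2 - z) = 1 := by linear_combination -hg
    have hn : ‖z‖ ^ k * ‖2 - z‖ = 1 := by
      rw [← norm_pow, ← norm_mul, hz1, norm_one]
    have htri : ‖z‖ ^ k ≤ ∑ i ∈ Finset.range k, ‖z‖ ^ i := by
      rw [← norm_pow, hz]
      refine (norm_sum_le _ _).trans (le_of_eq ?_)
      simp
    have hg2 := geom_sum_mul ‖z‖ k
    have hpos : 0 < ‖z‖ ^ k := by positivity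
    have hle : ‖z‖ ^ k * (‖z‖ - 1) ≤ ‖z‖ ^ k - 1 := by
      rw [← hg2]; exact mul_le_mul_of_nonneg_right htri (by linarith)
    have hle2 : ‖2 - z‖ ≤ 2 - ‖z‖ := by
      refine le_of_mul_le_mul_left ?_ hpos
      rw [hn]; linarith
    have hreal := aux_real z hle2
    have hR : ‖z‖ ^ k = ∑ i ∈ Finset.range k, ‖z‖ ^ i := by
      rw [hreal] at hz
      exact_mod_cast hz
    rcases lt_trichotomy ‖z‖ α with h | h | h
    · exact aux_lt k hk _ _ (by linarith) h hR hroot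
    · exact hzα (by rw [hreal, h])
    · exact aux_lt k hk _ _ (by linarith) h hroot hR
  refine ⟨hlt, ?_⟩
  have h0 := norm_nonneg z
  have e2 : ‖z‖ ^ 2 = z.re ^ 2 + z.im ^ 2 := by
    rw [Complex.sq_norm, Complex.normSq_apply]; ring
  have key : ‖z - 1‖ < ‖2 + ((k : ℂ) + 1) * (z - 2)‖ := by
    refine lt_of_pow_lt_pow_left₀ 2 (norm_nonneg _) ?_
    have e3 : ‖z - 1‖ ^ 2 = (z.re - 1) ^ 2 + z.im ^ 2 := by
      rw [Complex.sq_norm, Complex.normSq_apply]; simp; ring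
    have e4 : ‖2 + ((k : ℂ) + 1) * (z - 2)‖ ^ 2
        = (2 + (k + 1) * (z.re - 2)) ^ 2 + ((k + 1) * z.im) ^ 2 := by
      rw [Complex.sq_norm, Complex.normSq_apply]; simp; ring
    rw [e3, e4]
    have hx := Complex.re_le_norm z
    have hf : 0 < (2 * k - 1 - k * ‖z‖) * (2 * k + 1 - (k + 2) * ‖z‖) := by
      apply mul_pos <;> nlinarith
    have hm : 0 ≤ (‖z‖ - z.re) * (2 * k ^ 2 + 2 * k - 1) :=
      mul_nonneg (by linarith) (by nlinarith)
    have him : z.im ^ 2 = ‖z‖ ^ 2 - z.re ^ 2 := by linarith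
    rw [mul_pow, him]
    nlinarith
  rw [norm_div, div_lt_one (lt_of_le_of_lt (norm_nonneg _) key)]
  exact key
end

section
/- Suppose the integers k ≥ 2, n ≥ 9, ℓ ≥ 1, m ≥ 1 and digits d1, d2 ∈ {0,…,9} with d1 > 0, d1 ≠ d2 satisfy F_n^(k) = d1·((10^ℓ−1)/9)·10^{ℓ+m} + d2·((10^m−1)/9)·10^ℓ + d1·((10^ℓ−1)/9). Then 2ℓ + m < n < 5(2ℓ + m) + 2. -/
/-- If F_n^(k) (k ≥ 2, n ≥ 9) is a palindromic concatenation of two distinct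
repdigits with parameters ℓ, m ≥ 1, then 2ℓ + m < n < 5(2ℓ + m) + 2. -/
theorem digit_length_bounds
    (k : ℕ) (hk : 2 ≤ k) (F : ℤ → ℤ)
    (hF0 : ∀ n : ℤ, 2 - (k : ℤ) ≤ n → n ≤ 0 → F n = 0)
    (hF1 : F 1 = 1)
    (hFrec : ∀ n : ℤ, 2 ≤ n → F n = ∑ i ∈ Finset.range k, F (n - 1 - (i : ℤ)))
    (n : ℤ) (hn : 9 ≤ n)
    (d1 d2 : ℕ) (hd1 : d1 ≤ 9) (hd2 : d2 ≤ 9) (hd1pos : 0 < d1) (hne : d1 ≠ d2)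
    (ℓ m : ℕ) (hℓ : 1 ≤ ℓ) (hm : 1 ≤ m)
    (heq : F n = (d1 : ℤ) * ((10 ^ ℓ - 1) / 9) * 10 ^ (ℓ + m)
        + (d2 : ℤ) * ((10 ^ m - 1) / 9) * 10 ^ ℓ
        + (d1 : ℤ) * ((10 ^ ℓ - 1) / 9)) :
    (2 * (ℓ : ℤ) + m) < n ∧ n < 5 * (2 * (ℓ : ℤ) + m) + 2 := by
  have hnn : ∀ j : ℕ, 0 ≤ F (2 - (k : ℤ) + j) := by
    intro j
    induction j using Nat.strong_induction_on with
    | _ j ih =>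
      rcases le_or_gt (2 - (k : ℤ) + j) 0 with h | h
      · rw [hF0 _ (by omega) h]
      · rcases eq_or_lt_of_le (show (1 : ℤ) ≤ 2 - (k : ℤ) + j by omega) with h1 | h1
        · rw [← h1, hF1]; norm_num
        · rw [hFrec _ (by omega)]
          apply Finset.sum_nonneg
          intro i hi
          have hi' := Finset.mem_range.mp hi
          have := ih (j - 1 - i) (by omega)
          have e : (2 - (k : ℤ) + ((j - 1 - i : ℕ) : ℤ)) = 2 - (k : ℤ) + j - 1 - i := by omega
          rwa [e] at this
  have hnn' : ∀ a : ℤ, 2 - (k : ℤ) ≤ a → 0 ≤ F a := by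
    intro a ha
    have := hnn (a - (2 - (k : ℤ))).toNat
    have e : 2 - (k : ℤ) + ((a - (2 - (k : ℤ))).toNat : ℤ) = a := by omega
    rwa [e] at this
  obtain ⟨q, rfl⟩ : ∃ q, k = q + 2 := ⟨k - 2, by omega⟩
  have hlow : ∀ a : ℤ, 2 ≤ a → F (a - 1) + F (a - 2) ≤ F a := by
    intro a ha
    rw [hFrec a ha, Finset.sum_range_succ', Finset.sum_range_succ']
    have : 0 ≤ ∑ i ∈ Finset.range q, F (a - 1 - ((i + 1 + 1 : ℕ) : ℤ)) := by
      apply Finset.sum_nonneg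
      intro i hi
      have hi' := Finset.mem_range.mp hi
      apply hnn'
      push_cast
      omega
    have e1 : a - 1 - ((0 + 1 : ℕ) : ℤ) = a - 2 := by push_cast; ring
    have e2 : a - 1 - ((0 : ℕ) : ℤ) = a - 1 := by simp
    rw [e1, e2]
    linarith
  have hup : ∀ a : ℤ, 2 ≤ a → F a ≤ 2 * F (a - 1) := by
    intro a ha
    rcases eq_or_lt_of_le ha with h | h
    · subst h
      rw [hFrec 2 le_rfl, Finset.sum_range_succ']
      have : ∑ i ∈ Finset.range (q + 1), F (2 - 1 - ((i + 1 : ℕ) : ℤ)) = 0 := by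
        apply Finset.sum_eq_zero
        intro i hi
        have hi' := Finset.mem_range.mp hi
        apply hF0 <;> push_cast <;> omega
      rw [this]
      norm_num [hF1]
    · rw [hFrec a ha, Finset.sum_range_succ']
      have h2 := hFrec (a - 1) (by omega)
      rw [Finset.sum_range_succ] at h2
      have h3 : 0 ≤ F (a - 1 - 1 - ((q + 1 : ℕ) : ℤ)) := by
        apply hnn'
        push_cast
        omega
      have h4 : ∑ i ∈ Finset.range (q + 1), F (a - 1 - ((i + 1 : ℕ) : ℤ))
          = ∑ i ∈ Finset.range (q + 1), F (a - 1 - 1 - (i : ℤ)) := by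
        apply Finset.sum_congr rfl
        intro i _
        congr 1
        push_cast
        ring
      have e2 : a - 1 - ((0 : ℕ) : ℤ) = a - 1 := by simp
      rw [h4, e2]
      linarith
  have hpow : ∀ j : ℕ, F (j + 1) ≤ 2 ^ j := by
    intro j
    induction j with
    | zero => simp [hF1]
    | succ j ih =>
      have := hup ((j + 1 : ℕ) + 1) (by push_cast; omega)
      have e : (((j + 1 : ℕ) : ℤ) + 1 - 1) = j + 1 := by push_cast; ring
      rw [e] at this
      rw [pow_succ]
      linarith
  have hten : ∀ j : ℕ, (10 : ℤ) ^ j ≤ F (5 * j + 2) := by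
    intro j
    induction j with
    | zero =>
      have h1 := hlow 2 le_rfl
      norm_num [hF1] at h1 ⊢
      have := hnn' 0 (by push_cast; omega)
      linarith
    | succ j ih =>
      set a : ℤ := 5 * j + 2 with ha
      have e : 5 * ((j + 1 : ℕ) : ℤ) + 2 = a + 5 := by push_cast; ring
      rw [e, pow_succ]
      have h1 := hlow (a + 1) (by omega)
      have h2 := hlow (a + 2) (by omega)
      have h3 := hlow (a + 3) (by omega)
      have h4 := hlow (a + 4) (by omega)
      have h5 := hlow (a + 5) (by omega)
      have h6 := hup a (by omega)
      have h7 := hnn' a (by push_cast; omega)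
      ring_nf at h1 h2 h3 h4 h5 h6 ih ⊢
      linarith
  have hmono : ∀ (a : ℤ) (j : ℕ), 1 ≤ a → F a ≤ F (a + j) := by
    intro a j ha
    induction j with
    | zero => simp
    | succ j ih =>
      have h := hlow (a + (j + 1 : ℕ)) (by push_cast; omega)
      have e : a + ((j + 1 : ℕ) : ℤ) - 1 = a + j := by push_cast; ring
      rw [e] at h
      have := hnn' (a + ((j + 1 : ℕ) : ℤ) - 2) (by push_cast; omega)
      linarith
  have hrep : ∀ j : ℕ, 9 * (((10 : ℤ) ^ j - 1) / 9) = 10 ^ j - 1 := by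
    intro j
    apply Int.mul_ediv_cancel'
    have := sub_dvd_pow_sub_pow (10 : ℤ) 1 j
    norm_num at this
    exact this
  have hA := hrep ℓ
  have hB := hrep m
  set A : ℤ := ((10 : ℤ) ^ ℓ - 1) / 9
  set B : ℤ := ((10 : ℤ) ^ m - 1) / 9
  have hx1 : (1 : ℤ) ≤ 10 ^ ℓ := one_le_pow₀ (by norm_num)
  have hy1 : (1 : ℤ) ≤ 10 ^ m := one_le_pow₀ (by norm_num)
  have hA0 : 0 ≤ A := by linarith
  have hB0 : 0 ≤ B := by linarith
  have hd1' : (d1 : ℤ) ≤ 9 := by exact_mod_cast hd1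
  have hd2' : (d2 : ℤ) ≤ 9 := by exact_mod_cast hd2
  have hd1p : (1 : ℤ) ≤ d1 := by exact_mod_cast hd1pos
  have hd2p : (0 : ℤ) ≤ d2 := by positivity
  have hFlt : F n < 10 ^ (2 * ℓ + m) := by
    rw [heq]
    calc _ ≤ 9 * A * 10 ^ (ℓ + m) + 9 * B * 10 ^ ℓ + 9 * A := by gcongr
      _ = 10 ^ (2 * ℓ + m) - 1 := by rw [hA, hB]; ring
      _ < _ := by linarith
  have hFge : (10 : ℤ) ^ (2 * ℓ + m - 1) ≤ F n := by
    obtain ⟨r, rfl⟩ : ∃ r, ℓ = r + 1 := ⟨ℓ - 1, by omega⟩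
    have hr : (1 : ℤ) ≤ 10 ^ r := one_le_pow₀ (by norm_num)
    have hAr : (10 : ℤ) ^ r ≤ A := by
      rw [pow_succ] at hA
      linarith
    have e : 2 * (r + 1) + m - 1 = r + (r + 1 + m) := by omega
    rw [heq, e, pow_add]
    have t1 : (10 : ℤ) ^ r * 10 ^ (r + 1 + m) ≤ d1 * A * 10 ^ (r + 1 + m) := by
      gcongr
      nlinarith
    have t2 : 0 ≤ (d2 : ℤ) * B * 10 ^ (r + 1) := by positivity
    have t3 : 0 ≤ (d1 : ℤ) * A := by positivity
    linarith
  constructor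
  · by_contra hcon
    obtain ⟨j, rfl⟩ : ∃ j : ℕ, n = j + 1 := ⟨(n - 1).toNat, by omega⟩
    have h1 := hpow j
    have h2 : (2 : ℤ) ^ j ≤ 2 ^ (2 * ℓ + m - 1) := pow_le_pow_right₀ (by norm_num) (by omega)
    have h3 : (2 : ℤ) ^ (2 * ℓ + m - 1) < 10 ^ (2 * ℓ + m - 1) :=
      pow_lt_pow_left₀ (by norm_num) (by norm_num) (by omega)
    linarith
  · by_contra hcon
    have h1 := hten (2 * ℓ + m)
    have h2 := hmono (5 * ((2 * ℓ + m : ℕ) : ℤ) + 2) (n - (5 * ((2 * ℓ + m : ℕ) : ℤ) + 2)).toNat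
      (by omega)
    have e : 5 * ((2 * ℓ + m : ℕ) : ℤ) + 2 + ((n - (5 * ((2 * ℓ + m : ℕ) : ℤ) + 2)).toNat : ℤ) = n := by
      push_cast
      omega
    rw [e] at h2
    linarith
end

section
/- Let n ≥ 6 be an integer and suppose 2^{n−2} = d1·((10^ℓ−1)/9)·10^{ℓ+m} + d2·((10^m−1)/9)·10^ℓ + d1·((10^ℓ−1)/9) for digits d1, d2 ∈ {0,…,9} with d1 > 0, d1 ≠ d2 and integers ℓ, m ≥ 1. Then ℓ ≤ 3. -/
/-- If n ≥ 6 and 2^{n−2} is a palindromic concatenation of two distinct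
repdigits with parameters ℓ, m ≥ 1, then ℓ ≤ 3. -/
theorem pow_two_palindrome_ell_le_three
    (n : ℕ) (hn : 6 ≤ n)
    (d1 d2 : ℕ) (hd1 : d1 ≤ 9) (hd2 : d2 ≤ 9) (hd1pos : 0 < d1) (hne : d1 ≠ d2)
    (ℓ m : ℕ) (hℓ : 1 ≤ ℓ) (hm : 1 ≤ m)
    (heq : 2 ^ (n - 2) = d1 * ((10 ^ ℓ - 1) / 9) * 10 ^ (ℓ + m)
        + d2 * ((10 ^ m - 1) / 9) * 10 ^ ℓ
        + d1 * ((10 ^ ℓ - 1) / 9)) :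
    ℓ ≤ 3 := by
  by_contra hcon
  have h4 : 4 ≤ ℓ := by omega
  have h16 : (16 : ℕ) ∣ 10 ^ ℓ :=
    dvd_trans (by norm_num : (16 : ℕ) ∣ 10 ^ 4) (pow_dvd_pow 10 h4)
  have h2 : (16 : ℕ) ∣ 2 ^ (n - 2) :=
    dvd_trans (by norm_num : (16 : ℕ) ∣ 2 ^ 4) (pow_dvd_pow 2 (by omega))
  have hA : (16 : ℕ) ∣ d1 * ((10 ^ ℓ - 1) / 9) * 10 ^ (ℓ + m) := by
    rw [pow_add]
    exact Dvd.dvd.mul_left (Dvd.dvd.mul_right h16 _) _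
  have hB : (16 : ℕ) ∣ d2 * ((10 ^ m - 1) / 9) * 10 ^ ℓ := Dvd.dvd.mul_left h16 _
  rw [heq] at h2
  have hC := (Nat.dvd_add_right (dvd_add hA hB)).1 h2
  have h9 : 9 ∣ 10 ^ ℓ - 1 := by
    simpa using Nat.sub_dvd_pow_sub_pow 10 1 ℓ
  have hpos : 0 < 10 ^ ℓ := by positivity
  obtain ⟨R, hR⟩ := h9
  rw [hR, Nat.mul_div_cancel_left R (by norm_num)] at hC
  obtain ⟨c, hc⟩ := h16
  obtain ⟨e, he⟩ := hC
  interval_cases d1 <;> omega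
end

section
/- Let n ≥ 16 be an integer and suppose 2^{n−2} = d1·((10^ℓ−1)/9)·10^{ℓ+m} + d2·((10^m−1)/9)·10^ℓ + d1·((10^ℓ−1)/9) for digits d1, d2 ∈ {0,…,9} with d1 > 0, d1 ≠ d2 and integers ℓ, m ≥ 1. Then ℓ + m ≤ 13. -/
theorem rep_nine_aux (k : ℕ) : 9 * ((10 ^ k - 1) / 9) + 1 = 10 ^ k := by
  have h : 10 ^ k % 9 = 1 := by
    rw [Nat.pow_mod]; simp
  generalize 10 ^ k = x at *
  omega

/-- If n ≥ 16 and 2^{n−2} is a palindromic concatenation of two distinct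
repdigits with parameters ℓ, m ≥ 1, then ℓ + m ≤ 13. -/
theorem pow_two_palindrome_ell_add_m_le_thirteen
    (n : ℕ) (hn : 16 ≤ n)
    (d1 d2 : ℕ) (hd1 : d1 ≤ 9) (hd2 : d2 ≤ 9) (hd1pos : 0 < d1) (hne : d1 ≠ d2)
    (ℓ m : ℕ) (hℓ : 1 ≤ ℓ) (hm : 1 ≤ m)
    (heq : 2 ^ (n - 2) = d1 * ((10 ^ ℓ - 1) / 9) * 10 ^ (ℓ + m)
        + d2 * ((10 ^ m - 1) / 9) * 10 ^ ℓ
        + d1 * ((10 ^ ℓ - 1) / 9)) :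
    ℓ + m ≤ 13 := by
  by_contra hcon
  have hA := rep_nine_aux ℓ
  have hB := rep_nine_aux m
  generalize (10 ^ ℓ - 1) / 9 = A at *
  generalize (10 ^ m - 1) / 9 = B at *
  obtain ⟨e, he⟩ : 2 ^ 14 ∣ 2 ^ (n - 2) := pow_dvd_pow 2 (by omega)
  obtain ⟨c, hc⟩ : 2 ^ 14 ∣ 10 ^ (ℓ + m) :=
    (pow_dvd_pow 2 (by omega)).trans (pow_dvd_pow_of_dvd (by norm_num) (ℓ + m))
  rw [he, hc] at heq
  rw [pow_add, ← hB] at hc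
  zify at heq hA hB hc
  -- main congruence
  have key : (9 * A * d1 : ℤ) - d2 * 10 ^ ℓ
      = 2 ^ 14 * (9 * e - 9 * d1 * A * c - d2 * c) := by
    linear_combination (-9 : ℤ) * heq - (d2 : ℤ) * hc
  by_cases h4 : 4 ≤ ℓ
  · obtain ⟨f, hf⟩ : 2 ^ 4 ∣ 10 ^ ℓ :=
      (pow_dvd_pow 2 h4).trans (pow_dvd_pow_of_dvd (by norm_num) ℓ)
    zify at hf
    have h2 : (d1 : ℤ) = 16 * (f * d1 - d2 * f
        - 2 ^ 10 * (9 * e - 9 * d1 * A * c - d2 * c)) := by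
      linear_combination (-1 : ℤ) * key + (d1 : ℤ) * hA + ((d1 : ℤ) - d2) * hf
    omega
  · have h2 : (10 ^ ℓ - 1 : ℤ) * d1 - d2 * 10 ^ ℓ
      = 16384 * (9 * e - 9 * d1 * A * c - d2 * c) := by
      linear_combination key - (d1 : ℤ) * hA
    generalize (9 * e - 9 * d1 * A * c - d2 * c : ℤ) = t at h2
    clear key heq hA hB hc he
    have : ℓ = 1 ∨ ℓ = 2 ∨ ℓ = 3 := by omega
    rcases this with rfl | rfl | rfl <;> norm_num at h2 <;> omega
end

section
/- No power of 2 is a palindromic concatenation of two distinct repdigits; that is, there are no integers t ≥ 0, ℓ, m ≥ 1 and digits d1, d2 ∈ {0,…,9} with d1 > 0, d1 ≠ d2 such that 2^t = d1·((10^ℓ−1)/9)·10^{ℓ+m} + d2·((10^m−1)/9)·10^ℓ + d1·((10^ℓ−1)/9). -/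
set_option synthInstance.maxHeartbeats 400000 in
set_option synthInstance.maxSize 2000 in
theorem pc_fin : ∀ l < 4, ∀ m < 14, ∀ d1 < 10, ∀ d2 < 10, 1 ≤ l → 1 ≤ m → 0 < d1 → d1 ≠ d2 →
    (d1 * ((10 ^ l - 1) / 9) * 10 ^ (l + m) + d2 * ((10 ^ m - 1) / 9) * 10 ^ l
        + d1 * ((10 ^ l - 1) / 9) < 2 ^ 70 ∧
    ¬ (d1 * ((10 ^ l - 1) / 9) * 10 ^ (l + m) + d2 * ((10 ^ m - 1) / 9) * 10 ^ l
        + d1 * ((10 ^ l - 1) / 9) ∣ 2 ^ 70)) := by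
  decide +kernel

theorem pc_rep (n : ℕ) : 9 * ((10 ^ n - 1) / 9) + 1 = 10 ^ n := by
  have h : (10 ^ n) % 9 = 1 := by
    rw [Nat.pow_mod]; norm_num
  have : 0 < 10 ^ n := by positivity
  omega

/-- No power of 2 is a palindromic concatenation of two distinct repdigits. -/
theorem pow_two_not_palindromic_concat
    (t ℓ m d1 d2 : ℕ) (hℓ : 1 ≤ ℓ) (hm : 1 ≤ m)
    (hd1 : d1 ≤ 9) (hd2 : d2 ≤ 9) (hd1pos : 0 < d1) (hne : d1 ≠ d2) :
    2 ^ t ≠ d1 * ((10 ^ ℓ - 1) / 9) * 10 ^ (ℓ + m)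
        + d2 * ((10 ^ m - 1) / 9) * 10 ^ ℓ
        + d1 * ((10 ^ ℓ - 1) / 9) := by
  intro h
  by_cases hs : ℓ < 4 ∧ m < 14
  · obtain ⟨h1, h2⟩ := pc_fin ℓ hs.1 m hs.2 d1 (by omega) d2 (by omega) hℓ hm hd1pos hne
    rw [← h] at h1 h2
    have := (Nat.pow_lt_pow_iff_right (by norm_num : 1 < 2)).1 h1
    exact h2 (pow_dvd_pow 2 this.le)
  have hl := pc_rep ℓ
  have hm' := pc_rep m
  generalize (10 ^ ℓ - 1) / 9 = A at *
  generalize (10 ^ m - 1) / 9 = B at *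
  have hApos : 0 < A := by
    rcases Nat.eq_zero_or_pos A with h0 | h0
    · subst h0
      have : 10 ^ 1 ≤ 10 ^ ℓ := Nat.pow_le_pow_right (by norm_num) hℓ
      omega
    · exact h0
  have hbig : 10 ^ (ℓ + m) ≤ 2 ^ t := by
    have : 1 ≤ d1 * A := Nat.mul_pos hd1pos hApos
    nlinarith [Nat.zero_le (d2 * B * 10 ^ ℓ), Nat.zero_le (10 ^ (ℓ + m))]
  have ht : ℓ + m < t + 1 := by
    have h3 : 2 ^ (ℓ + m) ≤ 10 ^ (ℓ + m) := Nat.pow_le_pow_left (by norm_num) _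
    have := (Nat.pow_le_pow_iff_right (by norm_num : 1 < 2)).1 (h3.trans hbig)
    omega
  by_cases h4 : ℓ < 4
  · have h14 : 14 ≤ m := by omega
    obtain ⟨x, hx⟩ : 2 ^ 14 ∣ 2 ^ t := pow_dvd_pow 2 (by omega)
    obtain ⟨y, hy⟩ : 2 ^ 14 ∣ 10 ^ m :=
      (pow_dvd_pow 2 h14).trans (pow_dvd_pow_of_dvd (by norm_num) m)
    rw [pow_add, hx, hy] at h
    rw [hy] at hm'
    zify at h hm' hl
    have key : (2 ^ 14 : ℤ) ∣ 10 ^ ℓ * ((d1 : ℤ) - d2) - d1 := by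
      refine ⟨9 * x - 9 * d1 * A * 10 ^ ℓ * y - d2 * y * 10 ^ ℓ, ?_⟩
      linear_combination (-9) * h + (-(d1 : ℤ)) * hl - d2 * 10 ^ ℓ * hm'
    interval_cases ℓ <;> norm_num at key <;> omega
  · obtain ⟨x, hx⟩ : 2 ^ 4 ∣ 2 ^ t := pow_dvd_pow 2 (by omega)
    obtain ⟨y, hy⟩ : 2 ^ 4 ∣ 10 ^ ℓ :=
      (pow_dvd_pow 2 (by omega)).trans (pow_dvd_pow_of_dvd (by norm_num) ℓ)
    rw [pow_add, hx, hy] at h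
    rw [hy] at hl
    zify at h hl
    have key : (2 ^ 4 : ℤ) ∣ d1 := by
      refine ⟨-9 * x + 9 * d1 * A * y * 10 ^ m + 9 * d2 * B * y + d1 * y, ?_⟩
      linear_combination 9 * h + (d1 : ℤ) * hl
    norm_num at key
    omega
end

section
/- For all integers k ≥ 2, n ≥ 2, ℓ ≥ 1, m ≥ 1 and every digit d1 ∈ {1,…,9}, one has d1·10^{2ℓ+m} ≠ 9·f_k(α)·α^{n−1}, where α is the unique real root greater than 1 of Ψ_k(x) = x^k − x^{k−1} − ⋯ − x − 1 and f_k(x) = (x − 1)/(2 + (k + 1)(x − 2)). -/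
open Polynomial in
theorem aux_uniq (k : ℕ) (hk : 2 ≤ k) (x y : ℝ) (hy : 0 < y) (hxy : y < x)
    (hx : x ^ k = ∑ i ∈ Finset.range k, x ^ i) (hy' : y ^ k = ∑ i ∈ Finset.range k, y ^ i) :
    False := by
  have hx0 : 0 < x := hy.trans hxy
  have h : ∑ i ∈ Finset.range k, y ^ k * x ^ i < ∑ i ∈ Finset.range k, x ^ k * y ^ i := by
    apply Finset.sum_lt_sum_of_nonempty ⟨0, by simp; omega⟩
    intro i hi
    have hi := Finset.mem_range.1 hi
    obtain ⟨j, rfl⟩ := Nat.exists_eq_add_of_lt hi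
    have h1 : y ^ (j + 1) < x ^ (j + 1) := pow_lt_pow_left₀ hxy hy.le (by omega)
    have h2 : 0 < x ^ i * y ^ i := by positivity
    calc y ^ (i + j + 1) * x ^ i = (x ^ i * y ^ i) * y ^ (j + 1) := by ring
      _ < (x ^ i * y ^ i) * x ^ (j + 1) := by gcongr
      _ = _ := by ring
  rw [← Finset.mul_sum, ← Finset.mul_sum, ← hx, ← hy'] at h
  linarith [mul_comm (x ^ k) (y ^ k)]

theorem aux_geom {R : Type*} [CommRing R] (k : ℕ) (x : R)
    (hx : x ^ k = ∑ i ∈ Finset.range k, x ^ i) : x ^ k * (2 - x) = 1 := by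
  have := geom_sum_mul x k
  rw [← hx] at this
  linear_combination -this

theorem aux_norm (k : ℕ) (hk : 2 ≤ k) (α : ℝ) (hα : 1 < α)
    (hroot : α ^ k = ∑ i ∈ Finset.range k, α ^ i) (β : ℂ) (hne : β ≠ α)
    (hβ : β ^ k = ∑ i ∈ Finset.range k, β ^ i) : ‖β‖ ≤ 1 := by
  by_contra! hr
  have h1 : ‖β‖ ^ k ≤ ∑ i ∈ Finset.range k, ‖β‖ ^ i := by
    rw [← norm_pow, hβ]
    refine (norm_sum_le _ _).trans (le_of_eq ?_)
    simp
  have h2 : ‖β‖ ^ k * ‖2 - β‖ = 1 := by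
    rw [← norm_pow, ← norm_mul, aux_geom k β hβ]; simp
  have h3 : 2 - ‖β‖ ≤ ‖2 - β‖ := by
    have := norm_sub_norm_le (2 : ℂ) β
    simpa using this
  have hg := geom_sum_mul ‖β‖ k
  have hp : 0 < ‖β‖ ^ k := by positivity
  have h4 : 1 ≤ ‖β‖ ^ k * (2 - ‖β‖) := by
    nlinarith [mul_le_mul_of_nonneg_right h1 (sub_nonneg.2 hr.le)]
  have h5 : ‖2 - β‖ = 2 - ‖β‖ := by
    apply le_antisymm _ h3
    exact le_of_mul_le_mul_left (h2.le.trans h4) hp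
  rw [h5] at h2
  have h6 : ‖β‖ ^ k = ∑ i ∈ Finset.range k, ‖β‖ ^ i := by
    apply mul_right_cancel₀ (sub_ne_zero.2 hr.ne')
    rw [hg]; linear_combination -h2
  have h7 : ‖β‖ = α := by
    rcases lt_trichotomy ‖β‖ α with h | h | h
    · exact (aux_uniq k hk _ _ (by linarith) h hroot h6).elim
    · exact h
    · exact (aux_uniq k hk _ _ (by linarith) h h6 hroot).elim
  have e1 := Complex.sq_norm (2 - β)
  have e2 := Complex.sq_norm β
  rw [h5, Complex.normSq_apply] at e1
  rw [Complex.normSq_apply] at e2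
  simp at e1
  have e3 : β.re = α := by rw [← h7]; linarith
  have e4 : β.im = 0 := by
    rw [h7, e3] at e2
    have : β.im * β.im = 0 := by linarith
    simpa using this
  exact hne (Complex.ext (by simpa using e3) (by simpa using e4))

open Polynomial in
theorem aux_conj (k : ℕ) (hk : 2 ≤ k) (α : ℝ) (hα : 1 < α)
    (hroot : α ^ k = ∑ i ∈ Finset.range k, α ^ i) :
    ∃ β : ℂ, β ≠ α ∧ ∀ P : ℤ[X], aeval (α : ℂ) P = 0 → aeval β P = 0 := by
  have hint : IsIntegral ℤ (α : ℂ) := by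
    refine ⟨X ^ k - ∑ i ∈ Finset.range k, X ^ i, ?_, ?_⟩
    · apply monic_X_pow_sub
      rw [← mem_degreeLT]
      refine Submodule.sum_mem _ fun i hi => ?_
      rw [mem_degreeLT, degree_X_pow]
      exact_mod_cast Finset.mem_range.1 hi
    · have : (α : ℂ) ^ k = ∑ i ∈ Finset.range k, (α : ℂ) ^ i := by exact_mod_cast hroot
      simp [eval₂_finsetSum, this]
  have hintQ : IsIntegral ℚ (α : ℂ) := hint.tower_top
  have hnot : (α : ℂ) ∉ (algebraMap ℚ ℂ).range := by
    rintro ⟨q, hq⟩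
    rw [← hq] at hint
    have hq2 : IsIntegral ℤ q := (isIntegral_algebraMap_iff (algebraMap ℚ ℂ).injective).1 hint
    obtain ⟨z, hz⟩ := IsIntegrallyClosed.isIntegral_iff.1 hq2
    have hzα : α = z := by
      have : (α : ℂ) = ((z : ℝ) : ℂ) := by rw [← hq, ← hz]; simp
      exact_mod_cast this
    have h1 : (1 : ℤ) < z := by rw [hzα] at hα; exact_mod_cast hα
    have h2 := aux_geom k α hroot
    have h3 : α < 2 := by
      by_contra! h
      have : 0 < α ^ k := by positivity
      nlinarith
    have h4 : z < 2 := by rw [hzα] at h3; exact_mod_cast h3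
    omega
  have hdeg : (minpoly ℚ (α : ℂ)).natDegree ≠ 1 := fun h => hnot (minpoly.natDegree_eq_one_iff.1 h)
  have hpos := minpoly.natDegree_pos hintQ
  have hcard := card_rootSet_eq_natDegree (K := ℂ) (minpoly.irreducible hintQ).separable
    (IsAlgClosed.splits _)
  have : ∃ β ∈ (minpoly ℚ (α : ℂ)).rootSet ℂ, β ≠ (α : ℂ) := by
    have h1 : 1 < Fintype.card ((minpoly ℚ (α : ℂ)).rootSet ℂ) := by omega
    have hm : (α : ℂ) ∈ (minpoly ℚ (α : ℂ)).rootSet ℂ := by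
      rw [mem_rootSet]; exact ⟨minpoly.ne_zero hintQ, minpoly.aeval _ _⟩
    obtain ⟨b, hb⟩ := Fintype.exists_ne_of_one_lt_card h1 ⟨_, hm⟩
    exact ⟨b, b.2, fun h => hb (Subtype.ext h)⟩
  obtain ⟨β, hβ, hne⟩ := this
  refine ⟨β, hne, fun P hP => ?_⟩
  have hd : minpoly ℚ (α : ℂ) ∣ P.map (algebraMap ℤ ℚ) := by
    apply minpoly.dvd
    rwa [aeval_map_algebraMap]
  obtain ⟨c, hc⟩ := hd
  have := congrArg (aeval β) hc
  rw [aeval_map_algebraMap, map_mul, (mem_rootSet.1 hβ).2, zero_mul] at this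
  exact this

open Polynomial in
/-- For k ≥ 2, n ≥ 2, ℓ, m ≥ 1 and a digit 1 ≤ d1 ≤ 9,
d1·10^{2ℓ+m} ≠ 9·f_k(α)·α^{n−1}, where α > 1 is the unique real root of
Ψ_k(x) = x^k − x^{k−1} − ⋯ − x − 1 and f_k(x) = (x−1)/(2+(k+1)(x−2)). -/
theorem Gamma1_ne_zero
    (k : ℕ) (hk : 2 ≤ k) (α : ℝ) (hα : 1 < α)
    (hroot : α ^ k = ∑ i ∈ Finset.range k, α ^ i)
    (n : ℕ) (hn : 2 ≤ n) (ℓ m : ℕ) (hℓ : 1 ≤ ℓ) (hm : 1 ≤ m)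
    (d1 : ℕ) (hd1pos : 1 ≤ d1) (hd1 : d1 ≤ 9) :
    (d1 : ℝ) * 10 ^ (2 * ℓ + m)
      ≠ 9 * ((α - 1) / (2 + ((k : ℝ) + 1) * (α - 2))) * α ^ (n - 1) := by
  intro heq
  obtain ⟨D, hD⟩ : ∃ D : ℕ, D = d1 * 10 ^ (2 * ℓ + m) := ⟨_, rfl⟩
  have hD3 : 1000 ≤ D := by
    have : 10 ^ 3 ≤ 10 ^ (2 * ℓ + m) := Nat.pow_le_pow_right (by norm_num) (by omega)
    rw [hD]; nlinarith
  have hDR : (d1 : ℝ) * 10 ^ (2 * ℓ + m) = D := by rw [hD]; push_cast; rfl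
  have hD3R : (1000 : ℝ) ≤ D := by exact_mod_cast hD3
  rw [hDR] at heq
  have hden : 2 + ((k : ℝ) + 1) * (α - 2) ≠ 0 := by
    intro h
    rw [h] at heq
    simp at heq
    omega
  have heq2 : (D : ℝ) * (2 + ((k : ℝ) + 1) * (α - 2)) = 9 * (α - 1) * α ^ (n - 1) := by
    rw [heq]; field_simp
  obtain ⟨β, hne, hβ⟩ := aux_conj k hk α hα hroot
  have hβ1 : β ^ k = ∑ i ∈ Finset.range k, β ^ i := by
    have : (α : ℂ) ^ k = ∑ i ∈ Finset.range k, (α : ℂ) ^ i := by exact_mod_cast hroot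
    have := hβ (X ^ k - ∑ i ∈ Finset.range k, X ^ i) (by simp [this])
    simpa [sub_eq_zero] using this
  have hβ2 : (D : ℂ) * (2 + ((k : ℂ) + 1) * (β - 2)) = 9 * (β - 1) * β ^ (n - 1) := by
    have h : (D : ℂ) * (2 + ((k : ℂ) + 1) * (α - 2)) = 9 * (α - 1) * α ^ (n - 1) := by
      exact_mod_cast heq2
    have := hβ ((D : ℤ[X]) * (2 + ((k : ℤ[X]) + 1) * (X - 2)) - 9 * (X - 1) * X ^ (n - 1))
      (by simp [h, map_ofNat])
    simpa [sub_eq_zero, map_ofNat] using this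
  have hr := aux_norm k hk α hα hroot β hne hβ1
  have h3 : 1 ≤ ‖β - 2‖ := by
    have := norm_sub_norm_le (2 : ℂ) β
    rw [norm_sub_rev] at this
    simp at this
    linarith
  have hk' : (2 : ℝ) ≤ k := by exact_mod_cast hk
  have h4 : 1 ≤ ‖2 + ((k : ℂ) + 1) * (β - 2)‖ := by
    have h := norm_sub_norm_le (((k : ℂ) + 1) * (β - 2)) (-2)
    rw [norm_mul, sub_neg_eq_add, add_comm _ (2 : ℂ)] at h
    have hkn : ‖(k : ℂ) + 1‖ = k + 1 := by
      have := Complex.norm_natCast (k + 1)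
      push_cast at this; exact this
    rw [hkn] at h
    simp at h
    nlinarith
  have h5 : ‖β - 1‖ ≤ 2 := by
    have := norm_sub_le β 1
    simp at this
    linarith
  have h6 : ‖β‖ ^ (n - 1) ≤ 1 := pow_le_one₀ (norm_nonneg _) hr
  have h7 := congrArg norm hβ2
  simp only [norm_mul, norm_pow, Complex.norm_natCast] at h7
  have h8 : ‖(9 : ℂ)‖ = 9 := by simp
  rw [h8] at h7
  have h9 : ‖β - 1‖ * ‖β‖ ^ (n - 1) ≤ 2 * 1 := by gcongr
  nlinarith
end

section
/- For all integers k ≥ 2, n ≥ 2, ℓ ≥ 1, m ≥ 1 and digits d1, d2 ∈ {0,…,9} with d1 > 0 and d1 ≠ d2, one has d1·10^{2ℓ+m} − (d1 − d2)·10^{ℓ+m} ≠ 9·f_k(α)·α^{n−1}, where α is the unique real root greater than 1 of Ψ_k(x) = x^k − x^{k−1} − ⋯ − x − 1 and f_k(x) = (x − 1)/(2 + (k + 1)(x − 2)). -/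
open Polynomial in
lemma aux_root_bound (k : ℕ) (hk : 2 ≤ k) (z : ℂ)
    (h : z ^ k = ∑ i ∈ Finset.range k, z ^ i) : ‖z‖ < 2 := by
  by_contra hz
  push Not at hz
  have h1 : ‖z‖ ^ k ≤ ∑ i ∈ Finset.range k, ‖z‖ ^ i := by
    rw [← norm_pow, h]
    refine (norm_sum_le _ _).trans (le_of_eq ?_)
    simp
  have h2 := geom_sum_mul ‖z‖ k
  have h3 : 0 ≤ ∑ i ∈ Finset.range k, ‖z‖ ^ i := Finset.sum_nonneg (fun i _ => by positivity)
  nlinarith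

open Polynomial in
lemma aux_int (k : ℕ) (hk : 2 ≤ k) (α β : ℝ) (hα : 1 < α)
    (hroot : α ^ k = ∑ i ∈ Finset.range k, α ^ i)
    (hβ : α = 1 + 10 * β) (hint : IsIntegral ℤ β) : False := by
  set P : ℤ[X] := (1 + 10 * X) ^ k - ∑ i ∈ Finset.range k, (1 + 10 * X) ^ i with hP
  have hPβ : aeval β P = 0 := by
    simp only [hP, map_sub, map_pow, map_add, map_one, map_mul, map_sum, aeval_X, map_ofNat]
    rw [← hβ, hroot, sub_self]
  have hdvd : minpoly ℤ β ∣ P := minpoly.isIntegrallyClosed_dvd hint hPβ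
  have hmon := minpoly.monic hint
  set q := (minpoly ℤ β).map (Int.castRingHom ℂ) with hq
  have hqm : q.Monic := hmon.map _
  have hsp : q.Splits := IsAlgClosed.splits q
  have hroots : ∀ z ∈ q.roots, ‖z‖ < 1 := by
    intro z hz
    have hz0 : aeval z (minpoly ℤ β) = 0 := by
      have := (mem_roots hqm.ne_zero).1 hz
      rw [IsRoot, hq, eval_map] at this
      simpa [aeval_def] using this
    have hz1 : aeval z P = 0 := by
      obtain ⟨r, hr⟩ := hdvd
      rw [hr, map_mul, hz0, zero_mul]
    simp only [hP, map_sub, map_pow, map_add, map_one, map_mul, map_sum, aeval_X, map_ofNat] at hz1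
    have h2 := aux_root_bound k hk _ (sub_eq_zero.1 hz1)
    have h3 : ‖(10 : ℂ) * z‖ ≤ ‖1 + 10 * z‖ + ‖(1 : ℂ)‖ := by
      have := norm_sub_le (1 + 10 * z) 1
      simpa using this
    rw [norm_mul] at h3
    norm_num at h3
    linarith
  have hc := hsp.coeff_zero_eq_prod_roots_of_monic hqm
  have hβ0 : β ≠ 0 := by rintro rfl; linarith
  have hc0 : (minpoly ℤ β).coeff 0 ≠ 0 := by
    intro h0
    have hf := minpoly.isIntegrallyClosed_eq_field_fractions' ℚ hint
    have h1 := minpoly.coeff_zero_ne_zero (A := ℚ) hint.tower_top hβ0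
    rw [hf, coeff_map, h0] at h1
    simp at h1
  have hcard : q.roots.card = q.natDegree := hsp.natDegree_eq_card_roots.symm
  have hdeg : 0 < q.natDegree := by
    rw [hq, hmon.natDegree_map]
    exact minpoly.natDegree_pos hint
  have hprod : ∀ s : Multiset ℂ, (∀ z ∈ s, ‖z‖ < 1) → 0 < s.card → ‖s.prod‖ < 1 := by
    intro s
    induction s using Multiset.induction with
    | empty => simp
    | cons a s ih =>
      intro h _
      rw [Multiset.prod_cons, norm_mul]
      have ha := h a (by simp)
      have hs : ‖s.prod‖ ≤ 1 := by
        rcases Nat.eq_zero_or_pos s.card with h0 | h0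
        · rw [Multiset.card_eq_zero] at h0; simp [h0]
        · exact (ih (fun z hz => h z (by simp [hz])) h0).le
      nlinarith [norm_nonneg a, norm_nonneg s.prod]
  have hlt := hprod _ hroots (by omega)
  have h4 : ‖q.coeff 0‖ < 1 := by
    rw [hc, norm_mul, norm_pow, norm_neg, norm_one, one_pow, one_mul]; exact hlt
  rw [hq, coeff_map, eq_intCast, Complex.norm_intCast] at h4
  have h5 : |(minpoly ℤ β).coeff 0| < 1 := by exact_mod_cast h4
  exact hc0 (Int.abs_lt_one_iff.1 h5)

/-- For k ≥ 2, n ≥ 2, ℓ, m ≥ 1 and digits d1, d2 ∈ {0,…,9} with d1 > 0, d1 ≠ d2,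
d1·10^{2ℓ+m} − (d1 − d2)·10^{ℓ+m} ≠ 9·f_k(α)·α^{n−1}, where α > 1 is the unique
real root of Ψ_k and f_k(x) = (x−1)/(2+(k+1)(x−2)). -/
theorem Gamma2_ne_zero
    (k : ℕ) (hk : 2 ≤ k) (α : ℝ) (hα : 1 < α)
    (hroot : α ^ k = ∑ i ∈ Finset.range k, α ^ i)
    (n : ℕ) (hn : 2 ≤ n) (ℓ m : ℕ) (hℓ : 1 ≤ ℓ) (hm : 1 ≤ m)
    (d1 d2 : ℕ) (hd1 : d1 ≤ 9) (hd2 : d2 ≤ 9) (hd1pos : 0 < d1) (hne : d1 ≠ d2) :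
    (d1 : ℝ) * 10 ^ (2 * ℓ + m) - ((d1 : ℝ) - (d2 : ℝ)) * 10 ^ (ℓ + m)
      ≠ 9 * ((α - 1) / (2 + ((k : ℝ) + 1) * (α - 2))) * α ^ (n - 1) := by
  intro heq
  have hαint : IsIntegral ℤ α := by
    refine ⟨Polynomial.X ^ k - ∑ i ∈ Finset.range k, Polynomial.X ^ i, ?_, ?_⟩
    · apply Polynomial.monic_X_pow_sub
      refine lt_of_le_of_lt (Polynomial.degree_sum_le _ _) ?_
      refine (Finset.sup_lt_iff (WithBot.bot_lt_coe k)).2 ?_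
      intro i hi
      rw [Polynomial.degree_X_pow]
      exact WithBot.coe_lt_coe.2 (Finset.mem_range.1 hi)
    · simp [Polynomial.eval₂_finsetSum, hroot]
  obtain ⟨j, rfl⟩ : ∃ j, k = j + 1 := ⟨k - 1, by omega⟩
  obtain ⟨ι, hι, hι1⟩ : ∃ ι : ℝ, IsIntegral ℤ ι ∧ α * ι = 1 := by
    refine ⟨α ^ j - ∑ i ∈ Finset.range j, α ^ i,
      (hαint.pow j).sub (IsIntegral.sum _ fun i _ => hαint.pow i), ?_⟩
    rw [Finset.sum_range_succ'] at hroot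
    rw [mul_sub, Finset.mul_sum]
    simp only [pow_succ] at hroot
    simp only [mul_comm α]
    simp at hroot
    linarith
  set γ : ℝ := 2 + (((j + 1 : ℕ) : ℝ) + 1) * (α - 2) with hγ
  have hγint : IsIntegral ℤ γ := by
    have : γ = ((2 - 2 * ((j:ℤ) + 2) : ℤ) : ℝ) + (((j:ℤ) + 2 : ℤ) : ℝ) * α := by
      rw [hγ]; push_cast; ring
    rw [this]
    exact (isIntegral_algebraMap (R := ℤ) (A := ℝ)).add
      ((isIntegral_algebraMap (R := ℤ) (A := ℝ)).mul hαint)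
  obtain ⟨a, rfl⟩ : ∃ a, ℓ = a + 1 := ⟨ℓ - 1, by omega⟩
  set M : ℤ := 10 ^ (a + m) * (d1 * 10 ^ (a + 1) - (d1 - d2)) with hM
  have hN : (d1 : ℝ) * 10 ^ (2 * (a + 1) + m) - ((d1 : ℝ) - (d2 : ℝ)) * 10 ^ (a + 1 + m)
      = 10 * (M : ℝ) := by
    rw [hM]; push_cast; ring
  have hMpos : 0 < M := by
    rw [hM]
    have h1 : (1 : ℤ) ≤ 10 ^ a := one_le_pow₀ (by norm_num)
    have h2 : (0 : ℤ) < d1 := by exact_mod_cast hd1pos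
    have h3 : (0 : ℤ) ≤ d2 := by positivity
    apply mul_pos (by positivity)
    rw [pow_succ]
    nlinarith
  rw [hN] at heq
  have hMpos' : (0 : ℝ) < M := by exact_mod_cast hMpos
  have hγ0 : γ ≠ 0 := by
    intro h
    rw [h] at heq
    simp at heq
    linarith [show (M : ℝ) = 0 by exact_mod_cast heq]
  have key : 10 * (M : ℝ) * γ = 9 * (α - 1) * α ^ (n - 1) := by
    rw [heq]; field_simp
  have hpow : α ^ (n - 1) * ι ^ (n - 1) = 1 := by rw [← mul_pow, hι1, one_pow]
  refine aux_int (j + 1) hk α ((α - 1) - M * γ * ι ^ (n - 1)) hα hroot ?_ ?_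
  · linear_combination (ι ^ (n - 1)) * key + 9 * (α - 1) * hpow
  · exact (hαint.sub isIntegral_one).sub
      (((isIntegral_algebraMap (R := ℤ) (A := ℝ) (x := M)).mul hγint).mul (hι.pow _))
end

section
/- Suppose the integers k ≥ 2, n ≥ 9 with n ≥ k + 1, ℓ ≥ 1, m ≥ 1 and digits d1, d2 ∈ {0,…,9} with d1 > 0, d1 ≠ d2 satisfy F_n^(k) = d1·((10^ℓ−1)/9)·10^{ℓ+m} + d2·((10^m−1)/9)·10^ℓ + d1·((10^ℓ−1)/9). Then |(9/d1)·10^{−(2ℓ+m)}·f_k(α)·α^{n−1} − 1| < 11·10^{−ℓ}, where α is the unique real root greater than 1 of Ψ_k(x) = x^k − x^{k−1} − ⋯ − x − 1 and f_k(x) = (x − 1)/(2 + (k + 1)(x − 2)). -/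
lemma aux_bound (k : ℕ) (hk : 2 ≤ k) (u : ℕ → ℝ) (hu0 : ∀ i, i + 1 < k → u i = 0)
    (hu1 : u (k - 1) = 1) (hrec : ∀ i, u (i + k) = ∑ j ∈ Finset.range k, u (i + j))
    (α : ℝ) (hα : 1 < α) (hroot : α ^ k = ∑ i ∈ Finset.range k, α ^ i) (i : ℕ) :
    |u (i + (k - 1)) - ((α - 1) / (2 + ((k : ℝ) + 1) * (α - 2))) * α ^ i| ≤ 1 := by
  have hα0 : 0 < α := by linarith
  have hP : 0 < α ^ k := by positivity
  have h2 : α ^ k * (2 - α) = 1 := by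
    have := geom_sum_mul α k
    rw [← hroot] at this
    linarith
  have hkP : (k : ℝ) ≤ α ^ k := by
    rw [hroot]
    calc (k : ℝ) = ∑ i ∈ Finset.range k, (1 : ℝ) := by simp
      _ ≤ _ := Finset.sum_le_sum fun i _ => one_le_pow₀ hα.le
  have hq : (α⁻¹) ^ k = 2 - α := by
    rw [inv_pow]; field_simp; linarith
  have hq0 : 0 < 2 - α := by rw [← hq]; positivity
  have hkq : (k : ℝ) * (2 - α) ≤ 1 := by nlinarith
  set D := 2 + ((k : ℝ) + 1) * (α - 2) with hD
  have hD0 : α - 1 ≤ D := by rw [hD]; linarith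
  have hDpos : 0 < D := by linarith
  set f := (α - 1) / D with hf
  have hf0 : 0 < f := div_pos (by linarith) hDpos
  have hf1 : f ≤ 1 := (div_le_one hDpos).2 hD0
  have hfD : f * D = α - 1 := div_mul_cancel₀ _ hDpos.ne'
  set c := f * (α⁻¹) ^ (k - 1) with hc
  have hck : c * α ^ (k - 1) = f := by
    rw [hc, mul_assoc, ← mul_pow, inv_mul_cancel₀ hα0.ne', one_pow, mul_one]
  have hkk : α ^ k = α ^ (k - 1) * α := by rw [← pow_succ]; congr 1; omega
  set e : ℕ → ℝ := fun i => u i - c * α ^ i with he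
  have herec : ∀ i, e (i + k) = ∑ j ∈ Finset.range k, e (i + j) := by
    intro i
    simp only [he, Finset.sum_sub_distrib, hrec, ← Finset.mul_sum, pow_add, hroot]
  have herec2 : ∀ i, e (i + k + 1) = 2 * e (i + k) - e i := by
    intro i
    have h1 := Finset.sum_range_succ (fun j => e (i + j)) k
    have h2 := Finset.sum_range_succ' (fun j => e (i + j)) k
    have h3 := herec i
    have h4 := herec (i + 1)
    have h5 : ∀ j, i + 1 + j = i + (j + 1) := fun j => by ring
    have h6 : i + 1 + k = i + k + 1 := by ring
    simp only [h6] at h4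
    simp only [h5] at h4
    simp only [add_zero] at h2
    linarith
  have hT : ∀ i, e (i + k) = ∑ j ∈ Finset.range k, (α⁻¹) ^ (j + 1) * e (i + j) := by
    intro i
    induction i with
    | zero =>
      have hk0 : u k = 1 := by
        have := hrec 0
        rw [zero_add] at this
        rw [this]
        obtain ⟨r, rfl⟩ : ∃ r, k = r + 1 := ⟨k - 1, by omega⟩
        rw [Finset.sum_range_succ, Finset.sum_eq_zero]
        · simpa using hu1
        · intro j hj
          apply hu0
          simp at hj ⊢
          omega
      have hs1 : ∑ j ∈ Finset.range k, (α⁻¹) ^ (j + 1) * u j = 2 - α := by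
        rw [← hq]
        obtain ⟨r, rfl⟩ : ∃ r, k = r + 1 := ⟨k - 1, by omega⟩
        rw [Finset.sum_range_succ, Finset.sum_eq_zero]
        · simp at hu1
          simp [hu1]
        · intro j hj
          rw [hu0, mul_zero]
          simp at hj ⊢
          omega
      have hs2 : ∑ j ∈ Finset.range k, (α⁻¹) ^ (j + 1) * (c * α ^ j) = k * (c * α⁻¹) := by
        rw [← nsmul_eq_mul, ← Finset.card_range k, ← Finset.sum_const, Finset.card_range]
        apply Finset.sum_congr rfl
        intro j _
        have : (α⁻¹) ^ j * α ^ j = 1 := by rw [← mul_pow, inv_mul_cancel₀ hα0.ne', one_pow]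
        rw [pow_succ]
        linear_combination (c * α⁻¹) * this
      have hca : c * α⁻¹ = f * (2 - α) := by
        rw [← hq, hc, mul_assoc, ← pow_succ]; congr 2; omega
      simp only [zero_add, he, mul_sub, Finset.sum_sub_distrib, hs1, hs2, hk0, hca, hkk]
      rw [← mul_assoc, hck]
      rw [hD] at hfD
      linarith
    | succ i ih =>
      have h1 := Finset.sum_range_succ (fun j => (α⁻¹) ^ j * e (i + j)) k
      have h2 := Finset.sum_range_succ' (fun j => (α⁻¹) ^ j * e (i + j)) k
      have h3 := herec2 i
      have h5 : ∀ j, i + 1 + j = i + (j + 1) := fun j => by ring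
      have h6 : i + 1 + k = i + k + 1 := by ring
      have h7 : ∑ j ∈ Finset.range k, (α⁻¹) ^ j * e (i + j) = α * e (i + k) := by
        rw [ih, Finset.mul_sum]
        apply Finset.sum_congr rfl
        intro j _
        rw [pow_succ]
        field_simp
      rw [h6]
      simp only [h5]
      simp only [add_zero, pow_zero, one_mul] at h2
      rw [hq] at h1
      linarith
  have hsum1 : ∑ j ∈ Finset.range k, (α⁻¹) ^ (j + 1) = 1 := by
    have hr := geom_sum_mul (α⁻¹) k
    simp only [pow_succ, ← Finset.sum_mul]
    rw [hq] at hr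
    have h1 : α⁻¹ * α = 1 := inv_mul_cancel₀ hα0.ne'
    have : (∑ i ∈ Finset.range k, α⁻¹ ^ i) * (α - 1) = α * (α - 1) := by
      linear_combination (-α) * hr + (∑ i ∈ Finset.range k, α⁻¹ ^ i) * h1
    have := mul_right_cancel₀ (by linarith : α - 1 ≠ 0) this
    rw [this, mul_comm, h1]
  have hall : ∀ i, |e i| ≤ 1 := by
    intro i
    induction i using Nat.strong_induction_on with
    | _ i ih =>
      rcases lt_or_ge i k with h | h
      · have hcp : 0 < c := by positivity
        have hlow : 0 < c * α ^ i := by positivity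
        have hup : c * α ^ i ≤ f := by
          rw [← hck]
          exact mul_le_mul_of_nonneg_left (pow_le_pow_right₀ hα.le (by omega)) hcp.le
        simp only [he]
        rw [abs_le]
        by_cases h' : i + 1 < k
        · rw [hu0 i h']; constructor <;> linarith
        · obtain rfl : i = k - 1 := by omega
          rw [hu1]; constructor <;> linarith
      · obtain ⟨r, rfl⟩ : ∃ r, i = r + k := ⟨i - k, by omega⟩
        rw [hT, ← hsum1]
        refine (Finset.abs_sum_le_sum_abs _ _).trans (Finset.sum_le_sum fun j hj => ?_)
        have hp : 0 < (α⁻¹) ^ (j + 1) := by positivity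
        rw [abs_mul, abs_of_pos hp]
        have := ih (r + j) (by simp at hj; omega)
        nlinarith
  have := hall (i + (k - 1))
  simp only [he] at this
  rw [pow_add, mul_comm (α ^ i), ← mul_assoc, hck] at this
  exact this


/-- Under the hypotheses of the main equation (k ≥ 2, n ≥ 9, n ≥ k + 1),
|(9/d1)·10^{−(2ℓ+m)}·f_k(α)·α^{n−1} − 1| < 11·10^{−ℓ}. -/
theorem Gamma1_small
    (k : ℕ) (hk : 2 ≤ k) (F : ℤ → ℤ)
    (hF0 : ∀ n : ℤ, 2 - (k : ℤ) ≤ n → n ≤ 0 → F n = 0)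
    (hF1 : F 1 = 1)
    (hFrec : ∀ n : ℤ, 2 ≤ n → F n = ∑ i ∈ Finset.range k, F (n - 1 - (i : ℤ)))
    (α : ℝ) (hα : 1 < α) (hroot : α ^ k = ∑ i ∈ Finset.range k, α ^ i)
    (n : ℤ) (hn : 9 ≤ n) (hnk : (k : ℤ) + 1 ≤ n)
    (d1 d2 : ℕ) (hd1 : d1 ≤ 9) (hd2 : d2 ≤ 9) (hd1pos : 0 < d1) (hne : d1 ≠ d2)
    (ℓ m : ℕ) (hℓ : 1 ≤ ℓ) (hm : 1 ≤ m)
    (heq : F n = (d1 : ℤ) * ((10 ^ ℓ - 1) / 9) * 10 ^ (ℓ + m)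
        + (d2 : ℤ) * ((10 ^ m - 1) / 9) * 10 ^ ℓ
        + (d1 : ℤ) * ((10 ^ ℓ - 1) / 9)) :
    |9 / (d1 : ℝ) * (10 : ℝ) ^ (-(2 * (ℓ : ℤ) + m))
        * ((α - 1) / (2 + ((k : ℝ) + 1) * (α - 2))) * α ^ (n - 1) - 1|
      < 11 * (10 : ℝ) ^ (-(ℓ : ℤ)) := by
  have hb := aux_bound k hk (fun i => (F (2 - (k : ℤ) + i) : ℝ))
    (fun i hi => by
      have := hF0 (2 - (k : ℤ) + i) (by omega) (by omega)
      simp [this])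
    (by
      have : (2 - (k : ℤ) + ((k - 1 : ℕ) : ℤ)) = 1 := by omega
      simp only [this, hF1, Int.cast_one])
    (fun i => by
      have h1 : (2 - (k : ℤ) + ((i + k : ℕ) : ℤ)) = i + 2 := by push_cast; ring
      simp only [h1]
      rw [hFrec _ (by omega), ← Finset.sum_range_reflect]
      push_cast
      apply Finset.sum_congr rfl
      intro j hj
      simp at hj
      congr 2
      omega)
    α hα hroot (n - 1).toNat
  have hidx : (2 - (k : ℤ) + (((n - 1).toNat + (k - 1) : ℕ) : ℤ)) = n := by omega
  have hpw : α ^ (n - 1).toNat = α ^ (n - 1) := by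
    rw [← zpow_natCast]; congr 1; omega
  simp only [hidx, hpw] at hb
  rw [mul_assoc _ ((α - 1) / _) _]
  set G := ((α - 1) / (2 + ((k : ℝ) + 1) * (α - 2))) * α ^ (n - 1) with hG
  have hdiv : ∀ r : ℕ, ((((10 : ℤ) ^ r - 1) / 9 : ℤ) : ℝ) = ((10 : ℝ) ^ r - 1) / 9 := by
    intro r
    have hd : (9 : ℤ) ∣ 10 ^ r - 1 := by
      have := sub_dvd_pow_sub_pow (10 : ℤ) 1 r
      simpa using this
    rw [Int.cast_div hd (by norm_num)]
    push_cast; rfl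
  have hR : (F n : ℝ) = (d1 : ℝ) * (((10 : ℝ) ^ ℓ - 1) / 9) * 10 ^ (ℓ + m)
        + (d2 : ℝ) * (((10 : ℝ) ^ m - 1) / 9) * 10 ^ ℓ
        + (d1 : ℝ) * (((10 : ℝ) ^ ℓ - 1) / 9) := by
    rw [heq]
    simp only [Int.cast_add, Int.cast_mul, hdiv]
    push_cast; rfl
  have hz1 : (10 : ℝ) ^ (-(2 * (ℓ : ℤ) + m)) = ((10 : ℝ) ^ ℓ * 10 ^ ℓ * 10 ^ m)⁻¹ := by
    rw [zpow_neg, zpow_add₀ (by norm_num), two_mul, zpow_add₀ (by norm_num)]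
    simp only [zpow_natCast]
  have hz2 : (10 : ℝ) ^ (-(ℓ : ℤ)) = ((10 : ℝ) ^ ℓ)⁻¹ := by
    rw [zpow_neg, zpow_natCast]
  rw [hz1, hz2]
  rw [pow_add] at hR
  have hA : (10 : ℝ) ≤ 10 ^ ℓ := le_self_pow₀ (by norm_num) (by omega)
  have hB : (10 : ℝ) ≤ 10 ^ m := le_self_pow₀ (by norm_num) (by omega)
  generalize (10 : ℝ) ^ ℓ = A at *
  generalize (10 : ℝ) ^ m = B at *
  have ha1 : (1 : ℝ) ≤ d1 := by exact_mod_cast hd1pos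
  have ha2 : (d1 : ℝ) ≤ 9 := by exact_mod_cast hd1
  have hb1 : (0 : ℝ) ≤ d2 := by positivity
  have hb2 : (d2 : ℝ) ≤ 9 := by exact_mod_cast hd2
  generalize (d1 : ℝ) = a at *
  generalize (d2 : ℝ) = b at *
  have hA0 : 0 < A := by linarith
  have hB0 : 0 < B := by linarith
  have ha0 : 0 < a := by linarith
  have e1 : 9 / a * (A * A * B)⁻¹ * G - 1 = (9 * G - a * (A * A * B)) / (a * (A * A * B)) := by
    field_simp
  have e2 : 11 * A⁻¹ = (11 * a * (A * B)) / (a * (A * A * B)) := by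
    field_simp
  have hpos : 0 < a * (A * A * B) := by positivity
  rw [e1, e2, abs_div, abs_of_pos hpos]
  apply div_lt_div_of_pos_right _ hpos
  have hAB : 100 ≤ A * B := by nlinarith
  have haAB : A * B ≤ a * (A * B) := by nlinarith
  have hbAB : b * (A * (B - 1)) ≤ 9 * (A * (B - 1)) := by
    apply mul_le_mul_of_nonneg_right hb2
    exact mul_nonneg hA0.le (by linarith)
  have hbAB0 : 0 ≤ b * (A * (B - 1)) :=
    mul_nonneg hb1 (mul_nonneg hA0.le (by linarith))
  have haA : 0 ≤ a * (A * (B - 1)) :=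
    mul_nonneg ha0.le (mul_nonneg hA0.le (by linarith))
  have haA' : 0 ≤ a * A := by positivity
  have key : 9 * (F n : ℝ) - a * (A * A * B) = b * (A * (B - 1)) - a * (A * (B - 1)) - a := by
    rw [hR]; ring
  rw [abs_le] at hb
  rw [abs_lt]
  constructor <;> linarith [hb.1, hb.2]
end

section
/- Suppose the integers k ≥ 2, n ≥ 9 with n ≥ k + 1, ℓ ≥ 1, m ≥ 1 and digits d1, d2 ∈ {0,…,9} with d1 > 0, d1 ≠ d2 satisfy F_n^(k) = d1·((10^ℓ−1)/9)·10^{ℓ+m} + d2·((10^m−1)/9)·10^ℓ + d1·((10^ℓ−1)/9). Then |(9/(d1·10^ℓ − (d1 − d2)))·10^{−(ℓ+m)}·f_k(α)·α^{n−1} − 1| < 11·10^{−m}, where α is the unique real root greater than 1 of Ψ_k(x) = x^k − x^{k−1} − ⋯ − x − 1 and f_k(x) = (x − 1)/(2 + (k + 1)(x − 2)). -/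
theorem aux_up (k : ℕ) (hk : 2 ≤ k) (r B : ℝ) (hr0 : 0 < r) (hr1 : r < 1) (hB : 0 ≤ B) (e : ℕ → ℝ)
    (hrec : ∀ i, e (i + k + 1) = 2 * e (i + k) - e i)
    (i : ℕ) (hi : k < i) (hL : ∑ j ∈ Finset.range k, (1 - r ^ (j + 1)) * e (i + j) = 0)
    (hb : ∀ j < i, |e j| ≤ B) : e i ≤ B := by
  by_contra hcon
  push Not at hcon
  have key : ∀ t, t < k → B < e (i + t) := by
    intro t
    induction t with
    | zero => intro _; simpa using hcon
    | succ t ih =>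
      intro ht
      have h1 := ih (by omega)
      obtain ⟨s, hs⟩ : ∃ s, i + t = s + k := ⟨i + t - k, by omega⟩
      have h2 := hrec s
      have h3 := (abs_le.mp (hb s (by omega))).2
      rw [← add_assoc, hs, h2, ← hs]
      linarith
  have : 0 < ∑ j ∈ Finset.range k, (1 - r ^ (j + 1)) * e (i + j) := by
    apply Finset.sum_pos
    · intro j hj
      have h1 := key j (Finset.mem_range.mp hj)
      have h2 : r ^ (j + 1) < 1 := pow_lt_one₀ hr0.le hr1 (by omega)
      exact mul_pos (by linarith) (by linarith)
    · exact ⟨0, Finset.mem_range.mpr (by omega)⟩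
  linarith

theorem aux_bound_s13 (k : ℕ) (hk : 2 ≤ k) (a r B : ℝ) (hr0 : 0 < r) (hr1 : r < 1) (har : a * r = 1)
    (hrk : r ^ k = 2 - a) (hB : 0 ≤ B) (e : ℕ → ℝ)
    (hrec : ∀ i, e (i + k) = ∑ j ∈ Finset.range k, e (i + j))
    (hL0 : ∑ j ∈ Finset.range k, (1 - r ^ (j + 1)) * e j = 0)
    (hinit : ∀ i ≤ k, |e i| ≤ B) : ∀ i, |e i| ≤ B := by
  have hL : ∀ i, ∑ j ∈ Finset.range k, (1 - r ^ (j + 1)) * e (i + j) = 0 := by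
    intro i
    induction i with
    | zero => simpa using hL0
    | succ i ih =>
      have h1 : ∑ j ∈ Finset.range (k + 1), (1 - r ^ j) * e (i + j)
          = ∑ j ∈ Finset.range k, (1 - r ^ (j + 1)) * e (i + 1 + j) := by
        rw [Finset.sum_range_succ']
        simp only [pow_zero, sub_self, zero_mul, add_zero]
        refine Finset.sum_congr rfl fun j _ => ?_
        rw [show i + (j + 1) = i + 1 + j by ring]
      rw [← h1, Finset.sum_range_succ, hrec, Finset.mul_sum, ← Finset.sum_add_distrib]
      have h2 : ∑ j ∈ Finset.range k, a * ((1 - r ^ (j + 1)) * e (i + j)) = 0 := by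
        rw [← Finset.mul_sum, ih, mul_zero]
      rw [← h2]
      refine Finset.sum_congr rfl fun j _ => ?_
      rw [hrk, pow_succ]
      linear_combination (r ^ j * e (i + j)) * har
  have hrec2 : ∀ i, e (i + k + 1) = 2 * e (i + k) - e i := by
    intro i
    have h1 := hrec (i + 1)
    have h2 := hrec i
    have h3 : ∑ j ∈ Finset.range (k + 1), e (i + j)
        = ∑ j ∈ Finset.range k, e (i + 1 + j) + e i := by
      rw [Finset.sum_range_succ']
      simp only [add_zero]
      congr 1
      refine Finset.sum_congr rfl fun j _ => ?_
      rw [show i + (j + 1) = i + 1 + j by ring]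
    rw [Finset.sum_range_succ] at h3
    rw [show i + k + 1 = i + 1 + k by ring, h1]
    linarith
  intro i
  induction i using Nat.strong_induction_on with
  | _ i ih =>
    by_cases hi : i ≤ k
    · exact hinit i hi
    · push Not at hi
      rw [abs_le]
      constructor
      · have := aux_up k hk r B hr0 hr1 hB (fun i => - e i)
          (fun i => by have := hrec2 i; linarith) i hi
          (by simp only [mul_neg, Finset.sum_neg_distrib, hL i, neg_zero])
          (fun j hj => by simpa using ih j hj)
        linarith
      · exact aux_up k hk r B hr0 hr1 hB e hrec2 i hi (hL i) ih

theorem aux_E (k : ℕ) (hk : 2 ≤ k) (F : ℤ → ℤ)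
    (hF0 : ∀ n : ℤ, 2 - (k : ℤ) ≤ n → n ≤ 0 → F n = 0)
    (hF1 : F 1 = 1)
    (hFrec : ∀ n : ℤ, 2 ≤ n → F n = ∑ i ∈ Finset.range k, F (n - 1 - (i : ℤ)))
    (α : ℝ) (hα : 1 < α) (hroot : α ^ k = ∑ i ∈ Finset.range k, α ^ i)
    (n : ℤ) (hn : 9 ≤ n) :
    |(F n : ℝ) - ((α - 1) / (2 + ((k : ℝ) + 1) * (α - 2))) * α ^ (n - 1)| ≤ 2 := by
  have hα0 : 0 < α := by linarith
  have hgeom : (∑ i ∈ Finset.range k, α ^ i) * (α - 1) = α ^ k - 1 := geom_sum_mul α k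
  have hak : α ^ k * (2 - α) = 1 := by rw [← hroot] at hgeom; linarith
  have hakpos : 0 < α ^ k := by positivity
  have hα2 : α < 2 := by
    by_contra h
    push Not at h
    nlinarith
  have hkle : (k : ℝ) ≤ α ^ k := by
    rw [hroot]
    calc (k : ℝ) = ∑ i ∈ Finset.range k, (1 : ℝ) := by simp
      _ ≤ _ := Finset.sum_le_sum fun i _ => one_le_pow₀ hα.le
  have hT : α - 1 ≤ 2 + ((k : ℝ) + 1) * (α - 2) := by nlinarith
  set T := 2 + ((k : ℝ) + 1) * (α - 2) with hTdef
  have hTpos : 0 < T := by linarith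
  set f := (α - 1) / T with hf
  have hfT : f * T = α - 1 := by rw [hf]; field_simp
  have hf0 : 0 < f := div_pos (by linarith) hTpos
  have hf1 : f ≤ 1 := by rw [hf, div_le_one hTpos]; exact hT
  have har : α * α⁻¹ = 1 := mul_inv_cancel₀ hα0.ne'
  have hrk : α⁻¹ ^ k = 2 - α := by
    rw [inv_pow]; exact inv_eq_of_mul_eq_one_right hak
  have hFrec' : ∀ i : ℕ, F ((i : ℤ) + 2) = ∑ j ∈ Finset.range k, F ((i : ℤ) + j + 2 - k) := by
    intro i
    rw [hFrec _ (by omega), ← Finset.sum_range_reflect]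
    refine Finset.sum_congr rfl fun j hj => ?_
    have := Finset.mem_range.mp hj
    congr 1
    omega
  have hF2 : F 2 = 1 := by
    have := hFrec' 0
    simp only [Nat.cast_zero, zero_add] at this
    rw [this, Finset.sum_eq_single (k - 1)]
    · rw [← hF1]; congr 1; omega
    · intro j hj hne
      have := Finset.mem_range.mp hj
      exact hF0 _ (by omega) (by omega)
    · intro h; exact absurd (Finset.mem_range.mpr (by omega)) h
  let e : ℕ → ℝ := fun i => (F ((i : ℤ) + 2 - k) : ℝ) - f * α ^ ((i : ℤ) + 1 - k)
  have hzp : ∀ i : ℕ, α ^ ((i : ℤ) + 1 - k) = α ^ (i + 1) * (2 - α) := by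
    intro i
    rw [zpow_sub₀ hα0.ne', ← hrk, inv_pow, div_eq_mul_inv, zpow_natCast]
    congr 1
  have hmain : ∀ i, |e i| ≤ 2 := by
    apply aux_bound_s13 k hk α α⁻¹ 2 (by positivity) (inv_lt_one_of_one_lt₀ hα) har hrk (by norm_num) e
    · intro i
      simp only [e, hzp]
      rw [Finset.sum_sub_distrib]
      congr 1
      · have := hFrec' i
        rw [show ((i + k : ℕ) : ℤ) + 2 - k = i + 2 by push_cast; ring, this]
        push_cast
        rfl
      · have : ∑ x ∈ Finset.range k, f * (α ^ (i + x + 1) * (2 - α))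
            = f * (2 - α) * α ^ (i + 1) * ∑ x ∈ Finset.range k, α ^ x := by
          rw [Finset.mul_sum]
          refine Finset.sum_congr rfl fun j _ => ?_
          ring
        rw [this, ← hroot]
        ring
    · simp only [e, hzp, mul_sub]
      rw [Finset.sum_sub_distrib]
      have h1 : ∑ x ∈ Finset.range k, (1 - α⁻¹ ^ (x + 1)) * (F ((x : ℤ) + 2 - k) : ℝ) = α - 1 := by
        rw [Finset.sum_eq_single (k - 1)]
        · rw [show ((k - 1 : ℕ) : ℤ) + 2 - k = 1 by omega, hF1, Nat.sub_add_cancel (by omega), hrk]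
          push_cast; ring
        · intro j hj hne
          have := Finset.mem_range.mp hj
          rw [hF0 _ (by omega) (by omega)]
          simp
        · intro h; exact absurd (Finset.mem_range.mpr (by omega)) h
      have h2 : ∑ x ∈ Finset.range k, ((1 - α⁻¹ ^ (x + 1)) * (f * (α ^ (x + 1) * (2 - α)))) = α - 1 := by
        have h3 : ∀ x ∈ Finset.range k, ((1 - α⁻¹ ^ (x + 1)) * (f * (α ^ (x + 1) * (2 - α))))
            = f * (2 - α) * (α * α ^ x - 1) := by
          intro x _
          have h4 : α⁻¹ ^ (x + 1) * α ^ (x + 1) = 1 := by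
            rw [← mul_pow, mul_comm, har, one_pow]
          rw [pow_succ α x] at *
          linear_combination (- f * (2 - α)) * h4
        rw [Finset.sum_congr rfl h3, ← Finset.mul_sum, Finset.sum_sub_distrib, ← Finset.mul_sum,
          ← hroot, ← hfT, hTdef]
        simp only [Finset.sum_const, Finset.card_range, nsmul_eq_mul, mul_one]
        linear_combination (f * α) * hak
      simp only [← mul_sub] at *
      linarith
    · intro i hi
      have hFi : 0 ≤ (F ((i : ℤ) + 2 - k) : ℝ) ∧ (F ((i : ℤ) + 2 - k) : ℝ) ≤ 1 := by
        rcases (show i = k ∨ i + 1 = k ∨ i + 2 ≤ k by omega) with h | h | h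
        · rw [show (i : ℤ) + 2 - k = 2 by omega, hF2]; norm_num
        · rw [show (i : ℤ) + 2 - k = 1 by omega, hF1]; norm_num
        · rw [hF0 _ (by omega) (by omega)]; norm_num
      have hp : 0 < α ^ ((i : ℤ) + 1 - k) := by positivity
      have hp2 : α ^ ((i : ℤ) + 1 - k) ≤ α ^ (1 : ℤ) := zpow_le_zpow_right₀ hα.le (by omega)
      rw [zpow_one] at hp2
      have h5 : 0 < f * α ^ ((i : ℤ) + 1 - k) := by positivity
      have h6 : f * α ^ ((i : ℤ) + 1 - k) ≤ 2 := by nlinarith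
      simp only [e]
      rw [abs_le]
      constructor <;> linarith [hFi.1, hFi.2]
  have hfin := hmain (n + k - 2).toNat
  simp only [e] at hfin
  rw [show (((n + k - 2).toNat : ℕ) : ℤ) = n + k - 2 by omega] at hfin
  rw [show n + k - 2 + 2 - (k : ℤ) = n by ring, show n + k - 2 + 1 - (k : ℤ) = n - 1 by ring] at hfin
  exact hfin


/-- Under the hypotheses of the main equation (k ≥ 2, n ≥ 9, n ≥ k + 1),
|(9/(d1·10^ℓ − (d1 − d2)))·10^{−(ℓ+m)}·f_k(α)·α^{n−1} − 1| < 11·10^{−m}. -/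
theorem Gamma2_small
    (k : ℕ) (hk : 2 ≤ k) (F : ℤ → ℤ)
    (hF0 : ∀ n : ℤ, 2 - (k : ℤ) ≤ n → n ≤ 0 → F n = 0)
    (hF1 : F 1 = 1)
    (hFrec : ∀ n : ℤ, 2 ≤ n → F n = ∑ i ∈ Finset.range k, F (n - 1 - (i : ℤ)))
    (α : ℝ) (hα : 1 < α) (hroot : α ^ k = ∑ i ∈ Finset.range k, α ^ i)
    (n : ℤ) (hn : 9 ≤ n) (hnk : (k : ℤ) + 1 ≤ n)
    (d1 d2 : ℕ) (hd1 : d1 ≤ 9) (hd2 : d2 ≤ 9) (hd1pos : 0 < d1) (hne : d1 ≠ d2)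
    (ℓ m : ℕ) (hℓ : 1 ≤ ℓ) (hm : 1 ≤ m)
    (heq : F n = (d1 : ℤ) * ((10 ^ ℓ - 1) / 9) * 10 ^ (ℓ + m)
        + (d2 : ℤ) * ((10 ^ m - 1) / 9) * 10 ^ ℓ
        + (d1 : ℤ) * ((10 ^ ℓ - 1) / 9)) :
    |9 / ((d1 : ℝ) * 10 ^ ℓ - ((d1 : ℝ) - (d2 : ℝ))) * (10 : ℝ) ^ (-((ℓ : ℤ) + m))
        * ((α - 1) / (2 + ((k : ℝ) + 1) * (α - 2))) * α ^ (n - 1) - 1|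
      < 11 * (10 : ℝ) ^ (-(m : ℤ)) := by
  have hE := aux_E k hk F hF0 hF1 hFrec α hα hroot n hn
  set X := ((α - 1) / (2 + ((k : ℝ) + 1) * (α - 2))) * α ^ (n - 1) with hX
  have hdvd : ∀ t : ℕ, (9 : ℤ) * ((10 ^ t - 1) / 9) = 10 ^ t - 1 := fun t =>
    Int.mul_ediv_cancel' (by simpa using sub_dvd_pow_sub_pow (10 : ℤ) 1 t)
  have h9 : (9 : ℤ) * F n = 10 ^ (ℓ + m) * (d1 * 10 ^ ℓ - (d1 - d2)) + (d1 - d2) * 10 ^ ℓ - d1 := by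
    rw [heq, pow_add]
    linear_combination (d1 * (10 ^ ℓ * 10 ^ m) + d1 : ℤ) * hdvd ℓ + (d2 * 10 ^ ℓ : ℤ) * hdvd m
  have h9r : (9 : ℝ) * F n
      = 10 ^ (ℓ + m) * (d1 * 10 ^ ℓ - (d1 - d2)) + (d1 - d2) * 10 ^ ℓ - d1 := by
    exact_mod_cast congrArg (Int.cast : ℤ → ℝ) h9
  have hL10 : (10 : ℝ) ≤ 10 ^ ℓ := le_self_pow₀ (by norm_num) (by omega)
  have c1 : (1 : ℝ) ≤ d1 := by exact_mod_cast hd1pos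
  have c2 : (d1 : ℝ) ≤ 9 := by exact_mod_cast hd1
  have c3 : (0 : ℝ) ≤ d2 := by positivity
  have c4 : (d2 : ℝ) ≤ 9 := by exact_mod_cast hd2
  have hD : (9 : ℝ) ≤ d1 * 10 ^ ℓ - (d1 - d2) := by nlinarith
  have e1 : (10 : ℝ) ^ (-((ℓ : ℤ) + m)) = (10 ^ (ℓ + m))⁻¹ := by
    rw [zpow_neg]; congr 1
  have e2 : (10 : ℝ) ^ (-(m : ℤ)) = (10 ^ m)⁻¹ := by
    rw [zpow_neg, zpow_natCast]
  rw [mul_assoc _ ((α - 1) / _), ← hX, e1, e2]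
  set D : ℝ := d1 * 10 ^ ℓ - (d1 - d2) with hDdef
  have hDpos : 0 < D := by linarith
  set P : ℝ := 10 ^ ℓ with hP
  have hM : (0 : ℝ) < 10 ^ m := by positivity
  rw [pow_add, ← hP] at *
  set M : ℝ := 10 ^ m with hMdef
  have hPpos : 0 < P := by linarith
  have e3 : 9 / D * (P * M)⁻¹ * X - 1 = (9 * X - P * M * D) / (P * M * D) := by
    field_simp
  rw [e3, abs_div, abs_of_pos (by positivity : 0 < P * M * D), div_lt_iff₀ (by positivity)]
  have e4 : 11 * M⁻¹ * (P * M * D) = 11 * P * D := by field_simp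
  rw [e4]
  rw [abs_le] at hE
  have b1 : (d1 - d2 : ℝ) * P ≤ 9 * P := mul_le_mul_of_nonneg_right (by linarith) hPpos.le
  have b2 : (-9 : ℝ) * P ≤ (d1 - d2 : ℝ) * P := mul_le_mul_of_nonneg_right (by linarith) hPpos.le
  have b3 : P * 9 ≤ P * D := mul_le_mul_of_nonneg_left hD hPpos.le
  rw [abs_lt]
  constructor <;> nlinarith [hE.1, hE.2]
end

section
/- Suppose the integers k > 900, n ≥ 9 with n ≥ k + 2, ℓ ≥ 1, m ≥ 1 and digits d1, d2 ∈ {0,…,9} with d1 > 0, d1 ≠ d2 satisfy F_n^(k) = d1·((10^ℓ−1)/9)·10^{ℓ+m} + d2·((10^m−1)/9)·10^ℓ + d1·((10^ℓ−1)/9), and assume additionally that k/2 > ℓ·log 10/log 2. Then |(1/9)·(d1·10^ℓ − (d1 − d2))·10^{ℓ+m}·2^{−(n−2)} − 1| < 8·2^{−k/2}. -/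
open Polynomial in
theorem G4_coeff_prod {R ι : Type*} [CommRing R] (s : Finset ι) (f : ι → R[X]) (n : ι → ℕ)
    (h : ∀ i ∈ s, (f i).natDegree ≤ n i) :
    (∏ i ∈ s, f i).coeff (∑ i ∈ s, n i) = ∏ i ∈ s, (f i).coeff (n i) := by
  classical
  induction s using Finset.induction_on with
  | empty => simp
  | insert a s ha ih =>
    rw [Finset.prod_insert ha, Finset.sum_insert ha, Finset.prod_insert ha,
      coeff_mul_add_eq_of_natDegree_le (h a (by simp)), ih (fun i hi => h i (by simp [hi]))]
    refine (natDegree_prod_le _ _).trans (Finset.sum_le_sum fun i hi => h i (by simp [hi]))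

open Polynomial in
theorem G4_coeff_det {R ι : Type*} [CommRing R] [Fintype ι] [DecidableEq ι]
    (M : Matrix ι ι R[X]) (n : ι → ℕ)
    (h : ∀ i j, (M i j).natDegree ≤ n j) :
    M.det.coeff (∑ j, n j) = (Matrix.of fun i j => (M i j).coeff (n j)).det := by
  rw [Matrix.det_apply, Matrix.det_apply, finsetSum_coeff]
  refine Finset.sum_congr rfl fun σ _ => ?_
  have := G4_coeff_prod Finset.univ (fun i => M (σ i) i) n (fun i _ => h _ _)
  simp only [Matrix.of_apply]
  rw [← this, Units.smul_def, Units.smul_def, coeff_smul]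

open Polynomial in
theorem G4_natDegree_det {R ι : Type*} [CommRing R] [Fintype ι] [DecidableEq ι]
    (M : Matrix ι ι R[X]) (n : ι → ℕ)
    (h : ∀ i j, (M i j).natDegree ≤ n j) :
    M.det.natDegree ≤ ∑ j, n j := by
  rw [Matrix.det_apply]
  refine natDegree_sum_le_of_forall_le _ _ fun σ _ => ?_
  rw [Units.smul_def]
  refine (natDegree_smul_le _ _).trans ?_
  exact (natDegree_prod_le _ _).trans (Finset.sum_le_sum fun i hi => h _ _)

/-- zero estimate -/
theorem G4_zero_estimate {F : Type*} [Field F] [CharZero F] (K L R S q : ℕ) (θ₁ θ₂ : F)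
    (h1 : θ₁ ≠ 0) (h2 : θ₂ ≠ 0) (hinj : Function.Injective (fun n : ℕ => θ₁ ^ n))
    (hR : R ≤ q) (hLR : L ≤ R) (hcard : K * L < (R - L) * S)
    (p : Fin K × Fin L → F)
    (hp : ∀ r < R, ∀ s < S, ∑ i, p i * (((r : ℤ) - s * q : ℤ) : F) ^ (i.1 : ℕ)
      * (θ₁ ^ r * θ₂ ^ s) ^ (i.2 : ℕ) = 0) : p = 0 := by
  classical
  by_contra hne
  let P : Fin L → Polynomial F := fun l => ∑ a : Fin K, Polynomial.monomial (a : ℕ) (p (a, l))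
  have hPdeg : ∀ l, (P l).natDegree ≤ K := fun l =>
    Polynomial.natDegree_sum_le_of_forall_le _ _ fun a _ =>
      (Polynomial.natDegree_monomial_le _).trans a.2.le
  have hPcoeff : ∀ l (a : Fin K), (P l).coeff a = p (a, l) := by
    intro l a
    simp only [P, Polynomial.finsetSum_coeff, Polynomial.coeff_monomial]
    rw [Finset.sum_eq_single a]
    · simp
    · intro b _ hb
      rw [if_neg]
      exact fun h => hb (Fin.ext h)
    · simp
  have hPeval : ∀ l x, (P l).eval x = ∑ a : Fin K, p (a, l) * x ^ (a : ℕ) := by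
    intro l x
    simp [P, Polynomial.eval_finsetSum]
  let supp := {l : Fin L // P l ≠ 0}
  have hsupp : ∃ l, P l ≠ 0 := by
    by_contra hcon
    push Not at hcon
    apply hne
    funext ⟨a, l⟩
    rw [← hPcoeff, hcon l]; simp
  obtain ⟨l0, hl0⟩ := hsupp
  let e : supp ≃ Fin (Fintype.card supp) := Fintype.equivFin supp
  have hcs : Fintype.card supp ≤ L := by
    have h := Fintype.card_subtype_le (fun l : Fin L => P l ≠ 0)
    rw [Fintype.card_fin] at h
    exact h
  let M : Matrix supp supp (Polynomial F) := Matrix.of fun j l =>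
    Polynomial.C (θ₁ ^ ((e j : ℕ) * (l.1 : ℕ))) *
      (P l.1).comp (Polynomial.X + Polynomial.C ((e j : ℕ) : F))
  have hMdeg : ∀ j l, (M j l).natDegree ≤ (P l.1).natDegree := by
    intro j l
    refine (Polynomial.natDegree_C_mul_le _ _).trans ?_
    refine Polynomial.natDegree_comp_le.trans ?_
    rw [Polynomial.natDegree_X_add_C, mul_one]
  have hdet : M.det ≠ 0 := by
    intro h0
    have := G4_coeff_det M (fun l => (P l.1).natDegree) hMdeg
    rw [h0, Polynomial.coeff_zero] at this
    have hc : ∀ j l, (M j l).coeff (P l.1).natDegree =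
        (P l.1).leadingCoeff * (θ₁ ^ (l.1 : ℕ)) ^ ((e j : ℕ)) := by
      intro j l
      simp only [M, Matrix.of_apply, Polynomial.coeff_C_mul]
      have h3 : ((P l.1).comp (Polynomial.X + Polynomial.C ((e j : ℕ) : F))).coeff
          (P l.1).natDegree = (P l.1).leadingCoeff := by
        have h4 : ((P l.1).comp (Polynomial.X + Polynomial.C ((e j : ℕ) : F))).natDegree
          = (P l.1).natDegree := by
          rw [Polynomial.natDegree_comp, Polynomial.natDegree_X_add_C, mul_one]
        rw [← h4, Polynomial.coeff_natDegree, Polynomial.leadingCoeff_comp, Polynomial.leadingCoeff_X_add_C]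
        · simp
        · rw [Polynomial.natDegree_X_add_C]; simp
      rw [h3, mul_comm, ← pow_mul, mul_comm (e j : ℕ)]
    simp only [hc] at this
    have hmr := Matrix.det_mul_row (fun l : supp => (P l.1).leadingCoeff)
      (Matrix.of fun j l : supp => (θ₁ ^ (l.1 : ℕ)) ^ ((e j : ℕ)))
    simp only [Matrix.of_apply] at hmr
    rw [hmr] at this
    have hprod : (∏ l : supp, (P l.1).leadingCoeff) ≠ 0 :=
      Finset.prod_ne_zero_iff.2 fun l _ => Polynomial.leadingCoeff_ne_zero.2 l.2
    have hv : (Matrix.of fun j l : supp => (θ₁ ^ (l.1 : ℕ)) ^ ((e j : ℕ))).det ≠ 0 := by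
      have hvv := Matrix.det_vandermonde_ne_zero_iff (R := F)
        (v := fun i : Fin (Fintype.card supp) => θ₁ ^ ((e.symm i).1 : ℕ))
      have hi : Function.Injective
          (fun i : Fin (Fintype.card supp) => θ₁ ^ ((e.symm i).1 : ℕ)) := by
        intro i j hij
        have := hinj hij
        exact e.symm.injective (Subtype.ext (Fin.ext this))
      have hd := hvv.2 hi
      rw [← Matrix.det_transpose, ← Matrix.det_submatrix_equiv_self e] at hd
      convert hd using 2
      ext j l
      simp [Matrix.vandermonde]
    exact mul_ne_zero hprod hv this.symm
  -- roots
  let pts : Finset F := ((Finset.range (R - L)) ×ˢ (Finset.range S)).image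
    (fun rs => (((rs.1 : ℤ) - rs.2 * q : ℤ) : F))
  have hptc : pts.card = (R - L) * S := by
    rw [Finset.card_image_of_injOn]
    · simp
    · rintro ⟨r, s⟩ hr ⟨r', s'⟩ hr' heq
      simp only [Finset.coe_product, Finset.coe_range, Set.mem_prod, Set.mem_Iio] at hr hr'
      have h5 : (r : ℤ) - s * q = r' - s' * q := by
        have h11 : (((r : ℤ) - s * q : ℤ) : F) = (((r' : ℤ) - s' * q : ℤ) : F) := heq
        exact Int.cast_injective h11
      have hrq : r < q := by omega
      have hrq' : r' < q := by omega
      have h6 : (r : ℤ) + s' * q = r' + s * q := by linarith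
      have h7 : r + s' * q = r' + s * q := by exact_mod_cast h6
      have h8 : (r + s' * q) % q = (r' + s * q) % q := by rw [h7]
      simp only [Nat.add_mul_mod_self_right, Nat.mod_eq_of_lt hrq, Nat.mod_eq_of_lt hrq'] at h8
      subst h8
      have h9 : s' * q = s * q := by omega
      have : s' = s := Nat.eq_of_mul_eq_mul_right (by omega) h9
      rw [this]
  have hroot : ∀ x ∈ pts, M.det.eval x = 0 := by
    intro x hx
    obtain ⟨⟨r, s⟩, hrs, rfl⟩ := Finset.mem_image.1 hx
    simp only [Finset.mem_product, Finset.mem_range] at hrs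
    have : M.det.eval ((((r : ℤ) - s * q : ℤ) : F)) =
      (M.map (Polynomial.eval (((r : ℤ) - s * q : ℤ) : F))).det := by
      have := RingHom.map_det (Polynomial.evalRingHom (((r : ℤ) - s * q : ℤ) : F)) M
      simpa using this
    simp only [this]
    apply Matrix.exists_mulVec_eq_zero_iff.1
    refine ⟨fun l => (θ₁ ^ r * θ₂ ^ s) ^ (l.1 : ℕ), ?_, ?_⟩
    · intro h
      have := congrFun h ⟨l0, hl0⟩
      simp [h1, h2] at this
    · funext j
      simp only [Matrix.mulVec, dotProduct, Matrix.map_apply, Pi.zero_apply]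
      have hj : r + (e j : ℕ) < R := by
        have := (e j).2
        omega
      have h0 := hp (r + (e j : ℕ)) hj s hrs.2
      rw [Fintype.sum_prod_type_right] at h0
      have h10 : ∀ l : Fin L, ∑ x : Fin K, p (x, l) * ((((r + (e j : ℕ) : ℕ) : ℤ) - s * q : ℤ) : F) ^ (x : ℕ) * (θ₁ ^ (r + (e j : ℕ)) * θ₂ ^ s) ^ (l : ℕ) = (P l).eval ((((r : ℤ) - s * q : ℤ) : F) + ((e j : ℕ) : F)) * ((θ₁ ^ ((e j : ℕ) * (l : ℕ))) *(θ₁ ^ r * θ₂ ^ s) ^ (l : ℕ)) := by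
        intro l
        rw [hPeval, Finset.sum_mul]
        refine Finset.sum_congr rfl fun x _ => ?_
        have : ((((r + (e j : ℕ) : ℕ) : ℤ) - s * q : ℤ) : F) = (((r : ℤ) - s * q : ℤ) : F) + ((e j : ℕ) : F) := by
          push_cast; ring
        rw [this]
        ring
      simp only [h10] at h0
      rw [← h0]
      have : ∀ l : Fin L, P l = 0 → (P l).eval ((((r : ℤ) - s * q : ℤ) : F) + ((e j : ℕ) : F)) * ((θ₁ ^ ((e j : ℕ) * (l : ℕ))) *(θ₁ ^ r * θ₂ ^ s) ^ (l : ℕ)) = 0 := by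
        intro l hl; rw [hl]; simp
      rw [← Finset.sum_subset (Finset.subset_univ (Finset.univ.filter fun l : Fin L => P l ≠ 0))
        (fun l _ hl => this l (by simpa using hl)), Finset.sum_subtype (p := fun l => P l ≠ 0)]
      · refine Finset.sum_congr rfl fun l _ => ?_
        simp only [M, Matrix.of_apply, Polynomial.eval_mul, Polynomial.eval_C,
          Polynomial.eval_comp, Polynomial.eval_add, Polynomial.eval_X]
        ring
      · intro x; simp
  have hle : pts.card ≤ M.det.natDegree := by
    refine le_trans ?_ (Polynomial.card_roots' _)
    refine le_trans (Finset.card_le_card (t := M.det.roots.toFinset) ?_) (Multiset.toFinset_card_le _)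
    intro x hx
    rw [Multiset.mem_toFinset, Polynomial.mem_roots hdet]
    exact hroot x hx
  have hle2 := G4_natDegree_det M (fun l => (P l.1).natDegree) hMdeg
  have hle3 : ∑ l : supp, (P l.1).natDegree ≤ Fintype.card supp * K := by
    refine (Finset.sum_le_card_nsmul _ _ K fun l _ => hPdeg _).trans ?_
    simp
  have : Fintype.card supp * K ≤ L * K := Nat.mul_le_mul_right _ hcs
  rw [hptc] at hle
  rw [mul_comm K L] at hcard
  omega

theorem G4_select {F ι π : Type*} [Field F] [Fintype ι] [DecidableEq ι] (v : π → ι → F)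
    (h : ∀ p : ι → F, (∀ x, ∑ i, p i * v x i = 0) → p = 0) :
    ∃ f : ι → π, (Matrix.of fun i j => v (f i) j).det ≠ 0 := by
  have hspan : Submodule.span F (Set.range v) = ⊤ := by
    by_contra hne
    obtain ⟨g, hg, hle⟩ := Submodule.exists_le_ker_of_lt_top _ (lt_top_iff_ne_top.2 hne)
    apply hg
    have hgx : ∀ w : ι → F, g w = ∑ i, g (Pi.single i 1) * w i := by
      intro w
      conv_lhs => rw [pi_eq_sum_univ' w]
      rw [map_sum]
      refine Finset.sum_congr rfl fun i _ => ?_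
      rw [map_smul, smul_eq_mul, mul_comm]
    have := h (fun i => g (Pi.single i 1)) (fun x => by
      rw [← hgx]
      exact hle (Submodule.subset_span ⟨x, rfl⟩))
    ext i
    simpa using congrFun this i
  obtain ⟨κ, a, ha, hs, hli⟩ := exists_linearIndependent' F v
  rw [hspan] at hs
  let b := Module.Basis.mk hli hs.ge
  let e := (Pi.basisFun F ι).indexEquiv b
  refine ⟨fun i => a (e i), ?_⟩
  have hli2 : LinearIndependent F (Matrix.of fun i j => v (a (e i)) j).row := by
    exact hli.comp e e.injective
  rw [Matrix.linearIndependent_rows_iff_isUnit] at hli2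
  exact ((Matrix.isUnit_iff_isUnit_det _).1 hli2).ne_zero

theorem G4_det_le {ι : Type*} [Fintype ι] [DecidableEq ι] (M : Matrix ι ι ℂ) (b : ι → ℝ)
    (h : ∀ i j, ‖M i j‖ ≤ b i) : ‖M.det‖ ≤ (Fintype.card ι).factorial * ∏ i, b i := by
  rw [← Matrix.det_transpose, Matrix.det_apply]
  refine (norm_sum_le _ _).trans ?_
  have : ∀ σ ∈ (Finset.univ : Finset (Equiv.Perm ι)),
      ‖Equiv.Perm.sign σ • ∏ i, M.transpose (σ i) i‖ ≤ ∏ i, b i := by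
    intro σ _
    have h1 : ‖Equiv.Perm.sign σ • ∏ i, M.transpose (σ i) i‖ = ‖∏ i, M.transpose (σ i) i‖ := by
      rcases Int.units_eq_one_or (Equiv.Perm.sign σ) with h | h <;> simp [h]
    rw [h1, norm_prod]
    exact Finset.prod_le_prod (fun _ _ => norm_nonneg _) fun i _ => h _ _
  refine (Finset.sum_le_card_nsmul _ _ _ this).trans ?_
  rw [nsmul_eq_mul, Finset.card_univ, Fintype.card_perm]

theorem G4_lowrank {ι : Type*} [Fintype ι] [DecidableEq ι] (n : ℕ) (x : ι → ℂ)
    (p : ι → Polynomial ℂ) (hp : ∀ i, (p i).natDegree < n) (E : Matrix ι ι ℂ) (B ε : ℝ)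
    (hB : ∀ i j, ‖(p i).eval (x j)‖ ≤ B) (hε : ∀ i j, ‖E i j‖ ≤ ε) (h0 : 0 ≤ ε) (hεB : ε ≤ B)
    (hn : n ≤ Fintype.card ι) :
    ‖(Matrix.of fun i j => (p i).eval (x j) + E i j).det‖ ≤
      2 ^ (Fintype.card ι) * (Fintype.card ι).factorial * (B ^ n * ε ^ (Fintype.card ι - n)) := by
  classical
  let P : Matrix ι ι ℂ := Matrix.of fun i j => (p i).eval (x j)
  have hexp : (Matrix.of fun i j => (p i).eval (x j) + E i j).det =
      ∑ s : Finset ι, (Matrix.of (s.piecewise P E)).det := by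
    have := (Matrix.detRowAlternating (R := ℂ) (n := ι)).toMultilinearMap.map_add_univ P E
    exact this
  rw [hexp]
  refine (norm_sum_le _ _).trans ?_
  have hterm : ∀ s ∈ (Finset.univ : Finset (Finset ι)),
      ‖(Matrix.of (s.piecewise P E)).det‖ ≤
        (Fintype.card ι).factorial * (B ^ n * ε ^ (Fintype.card ι - n)) := by
    intro s _
    by_cases hs : s.card ≤ n
    · refine (G4_det_le _ (fun i => if i ∈ s then B else ε) ?_).trans ?_
      · intro i j
        by_cases hi : i ∈ s
        · simp [Finset.piecewise, hi, P, hB]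
        · simp [Finset.piecewise, hi, hε]
      · gcongr
        rw [Finset.prod_ite, Finset.prod_const, Finset.prod_const]
        have h1 : (Finset.univ.filter fun i => i ∈ s).card = s.card := by simp
        have h2 : (Finset.univ.filter fun i => i ∉ s).card = Fintype.card ι - s.card := by
          rw [← Finset.card_compl]; congr 1; ext; simp
        rw [h1, h2]
        have h3 : Fintype.card ι - s.card = (n - s.card) + (Fintype.card ι - n) := by omega
        have h4 : n = s.card + (n - s.card) := by omega
        rw [h3, pow_add ε]
        conv_rhs => rw [h4, pow_add B, ← h4]
        have : ε ^ (n - s.card) ≤ B ^ (n - s.card) := by gcongr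
        have hB0 : 0 ≤ B := h0.trans hεB
        rw [mul_assoc]
        gcongr
    · push Not at hs
      have hz : (Matrix.of (s.piecewise P E)).det = 0 := by
        have hdep : ¬ LinearIndependent ℂ (fun i : s => fun c : Fin n => (p i.1).coeff c) := by
          intro hli
          have := hli.fintype_card_le_finrank
          simp at this
          omega
        rw [Fintype.not_linearIndependent_iff] at hdep
        obtain ⟨g, hg, i0, hi0⟩ := hdep
        apply Matrix.exists_vecMul_eq_zero_iff.1
        refine ⟨fun i => if h : i ∈ s then g ⟨i, h⟩ else 0, ?_, ?_⟩
        · intro h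
          have := congrFun h i0.1
          simp at this
          exact hi0 this
        · funext j
          simp only [Matrix.vecMul, dotProduct, Pi.zero_apply]
          rw [← Finset.sum_subset (Finset.subset_univ s)]
          · rw [← Finset.sum_attach]
            have h1 : ∀ i : s, (Matrix.of (s.piecewise P E)) i.1 j =
                ∑ c : Fin n, (p i.1).coeff c * x j ^ (c : ℕ) := by
              intro i
              simp only [Matrix.of_apply, Finset.piecewise, i.2, if_true, P]
              rw [Polynomial.eval_eq_sum_range' (hp i.1), Finset.sum_range]
            have h2 : ∀ c : Fin n, ∑ i : s, g i * (p i.1).coeff c = 0 := by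
              intro c
              have := congrFun hg c
              simpa using this
            calc _ = ∑ i : s, g i * ∑ c : Fin n, (p i.1).coeff c * x j ^ (c : ℕ) := by
                  rw [← Finset.univ_eq_attach]
                  refine Finset.sum_congr rfl fun i _ => ?_
                  rw [h1]; simp
              _ = ∑ c : Fin n, (∑ i : s, g i * (p i.1).coeff c) * x j ^ (c : ℕ) := by
                  simp_rw [Finset.mul_sum, Finset.sum_mul]
                  rw [Finset.sum_comm]
                  refine Finset.sum_congr rfl fun c _ => Finset.sum_congr rfl fun i _ => by ring
              _ = 0 := Finset.sum_eq_zero fun c _ => by rw [h2, zero_mul]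
          · intro i _ hi
            simp [hi]
      rw [hz, norm_zero]
      have hB0 : 0 ≤ B := h0.trans hεB
      positivity
  refine (Finset.sum_le_card_nsmul _ _ _ hterm).trans ?_
  rw [nsmul_eq_mul, Finset.card_univ, Fintype.card_finset]
  push_cast
  rw [mul_assoc]

theorem G4_liouville {K : Type*} [Field K] [NumberField K] (D : ℕ)
    (hD : Module.finrank ℚ K ≤ D) (x : K) (hx : IsIntegral ℤ x) (hx0 : x ≠ 0)
    (σ₀ : K →ₐ[ℚ] ℂ) (B : ℝ) (hB1 : 1 ≤ B) (hB : ∀ σ : K →ₐ[ℚ] ℂ, ‖σ x‖ ≤ B) :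
    1 ≤ ‖σ₀ x‖ * B ^ (D - 1) := by
  classical
  have h1 := Algebra.norm_eq_prod_embeddings ℚ ℂ (L := K) x
  have h2 : IsIntegral ℤ (Algebra.norm ℚ x) := Algebra.isIntegral_norm ℚ hx
  obtain ⟨z, hz⟩ := IsIntegrallyClosed.isIntegral_iff.1 h2
  have hz0 : z ≠ 0 := by
    rintro rfl
    rw [map_zero] at hz
    exact (Algebra.norm_ne_zero_iff.2 hx0) hz.symm
  have h3 : (1 : ℝ) ≤ ‖algebraMap ℚ ℂ (Algebra.norm ℚ x)‖ := by
    rw [← hz]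
    simp
    exact_mod_cast Int.one_le_abs hz0
  rw [h1, norm_prod, ← Finset.mul_prod_erase _ _ (Finset.mem_univ σ₀)] at h3
  refine h3.trans ?_
  gcongr
  refine (Finset.prod_le_prod (fun σ _ => norm_nonneg _) (fun σ _ => hB σ)).trans ?_
  rw [Finset.prod_const]
  apply pow_le_pow_right₀ hB1
  rw [Finset.card_erase_of_mem (Finset.mem_univ _), Finset.card_univ, AlgHom.card]
  omega

theorem G4_exp_taylor (y Y : ℝ) (J : ℕ) (hy : |y| ≤ Y) (hJ : 8 * Y ≤ J) :
    |Real.exp y - ∑ m ∈ Finset.range J, y ^ m / m.factorial| ≤ 2 * Real.exp (-J) := by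
  have hY : 0 ≤ Y := (abs_nonneg y).trans hy
  have h1 : ‖(y : ℂ)‖ / (J.succ : ℝ) ≤ 1 / 2 := by
    rw [Complex.norm_real, Real.norm_eq_abs, div_le_iff₀ (by positivity)]
    push_cast
    linarith
  have h2 := Complex.exp_bound' h1
  have h3 : Complex.exp (y : ℂ) - ∑ m ∈ Finset.range J, (y : ℂ) ^ m / m.factorial =
      ((Real.exp y - ∑ m ∈ Finset.range J, y ^ m / m.factorial : ℝ) : ℂ) := by
    push_cast; rfl
  rw [h3, Complex.norm_real, Complex.norm_real, Real.norm_eq_abs, Real.norm_eq_abs] at h2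
  refine h2.trans ?_
  have h4 : (Real.exp 2 * |y|) ^ J / J.factorial ≤ Real.exp (Real.exp 2 * |y|) :=
    Real.pow_div_factorial_le_exp _ (by positivity) J
  have he2 : Real.exp 2 ≤ 8 := by
    have : Real.exp 2 = Real.exp 1 * Real.exp 1 := by rw [← Real.exp_add]; norm_num
    rw [this]
    have := Real.exp_one_lt_d9
    have := Real.exp_pos 1
    nlinarith
  have h5 : Real.exp (Real.exp 2 * |y|) ≤ Real.exp J := by
    apply Real.exp_le_exp.2
    nlinarith [abs_nonneg y]
  rw [mul_pow, ← Real.exp_nat_mul] at h4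
  have h6 : Real.exp (J * 2) = Real.exp J * Real.exp J := by rw [← Real.exp_add]; ring_nf
  have h7 : |y| ^ J / J.factorial ≤ Real.exp (-J) := by
    have h8 := h4.trans h5
    rw [h6, mul_assoc, mul_div_assoc] at h8
    have h9 : Real.exp J * (|y| ^ J / J.factorial) ≤ 1 := by
      have := Real.exp_pos J
      rw [← mul_le_mul_iff_right₀ this]
      rw [mul_one]
      convert h8 using 1
      ring
    rw [Real.exp_neg, ← one_div, le_div_iff₀ (Real.exp_pos _), mul_comm]
    exact h9
  linarith

theorem G4_exp_taylor_abs (y Y : ℝ) (J : ℕ) (hy : |y| ≤ Y) :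
    |∑ m ∈ Finset.range J, y ^ m / m.factorial| ≤ Real.exp Y := by
  refine (Finset.abs_sum_le_sum_abs _ _).trans ?_
  refine le_trans ?_ (Real.sum_le_exp_of_nonneg ((abs_nonneg y).trans hy) J)
  refine Finset.sum_le_sum fun m _ => ?_
  rw [abs_div, abs_pow, Nat.abs_cast]
  gcongr

theorem G4_isIntegral_det {K ι : Type*} [Field K] [Fintype ι] [DecidableEq ι]
    (M : Matrix ι ι K) (h : ∀ i j, IsIntegral ℤ (M i j)) : IsIntegral ℤ M.det := by
  rw [Matrix.det_apply]
  refine IsIntegral.sum _ fun σ _ => ?_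
  rw [Units.smul_def]
  exact (IsIntegral.prod _ fun i _ => h _ _).smul _

theorem G4_upper {K : ℕ} (L0 : ℕ) (η Λ Z Y : ℝ) (S : ℕ) (hZ : 1 ≤ Z)
    (x : Fin K × Fin (2 * (L0 + 1)) → ℝ) (s : Fin K × Fin (2 * (L0 + 1)) → ℕ)
    (hx : ∀ i, |x i| ≤ Z) (hs : ∀ i, s i ≤ S)
    (hY : (2 * (L0 + 1) : ℕ) * |η| * Z ≤ Y) (hJ : 8 * Y ≤ (K * L0 : ℕ)) (hJ2 : 2 ≤ K * L0)
    (hΛ : (2 * (L0 + 1) : ℕ) * S * |Λ| ≤ 1)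
    (hΛ2 : (2 * (L0 + 1) : ℕ) * S * |Λ| * Real.exp Y ≤ Real.exp (-(K * L0 : ℕ))) :
    ‖(Matrix.of fun i j : Fin K × Fin (2 * (L0 + 1)) =>
      (((x j) ^ (i.1 : ℕ) * Real.exp ((i.2 : ℕ) * (η * x j + s j * Λ)) : ℝ) : ℂ)).det‖ ≤
      2 ^ (2 * (K * (L0 + 1))) * (2 * (K * (L0 + 1))).factorial *
        ((Z ^ K * Real.exp Y) ^ (K * (L0 + 1)) *
          (Z ^ K * (4 * Real.exp (-(K * L0 : ℕ)))) ^ (K * (L0 + 1))) := by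
  classical
  set J := K * L0 with hJdef
  set n := K * (L0 + 1) with hn
  have hnJ : n = K + J := by rw [hn, hJdef]; ring
  have hcard : Fintype.card (Fin K × Fin (2 * (L0 + 1))) = 2 * n := by
    simp [hn]; ring
  have hY0 : 0 ≤ Y := le_trans (by positivity) hY
  let p : Fin K × Fin (2 * (L0 + 1)) → Polynomial ℂ := fun i =>
    Polynomial.X ^ (i.1 : ℕ) * ∑ m ∈ Finset.range J,
      Polynomial.monomial m ((((i.2 : ℕ) * η) ^ m / m.factorial : ℝ) : ℂ)
  have hpe : ∀ i j, (p i).eval (x j : ℂ) = (((x j) ^ (i.1 : ℕ) *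
      ∑ m ∈ Finset.range J, ((i.2 : ℕ) * η * x j) ^ m / m.factorial : ℝ) : ℂ) := by
    intro i j
    simp only [p, Polynomial.eval_mul, Polynomial.eval_pow, Polynomial.eval_X,
      Polynomial.eval_finsetSum, Polynomial.eval_monomial]
    push_cast
    congr 1
    refine Finset.sum_congr rfl fun m _ => ?_
    rw [mul_pow _ (x j : ℂ)]
    ring
  have hxp : ∀ (i : Fin K × Fin (2 * (L0 + 1))) j, |x j ^ (i.1 : ℕ)| ≤ Z ^ K := by
    intro i j
    rw [abs_pow]
    exact (pow_le_pow_left₀ (abs_nonneg _) (hx j) _).trans (pow_le_pow_right₀ hZ i.1.2.le)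
  have hyY : ∀ (i : Fin K × Fin (2 * (L0 + 1))) j, |(i.2 : ℕ) * η * x j| ≤ Y := by
    intro i j
    refine le_trans ?_ hY
    rw [abs_mul, abs_mul, Nat.abs_cast]
    have : ((i.2 : ℕ) : ℝ) ≤ (2 * (L0 + 1) : ℕ) := by exact_mod_cast i.2.2.le
    have := hx j
    gcongr
  have hexpJ : 4 * Real.exp (-(J : ℕ)) ≤ 1 := by
    have : Real.exp (-(J : ℕ)) ≤ Real.exp (-2) := by
      apply Real.exp_le_exp.2
      have : (2 : ℝ) ≤ J := by exact_mod_cast hJ2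
      linarith
    have h2 : Real.exp (-2) = (Real.exp 1 * Real.exp 1)⁻¹ := by
      rw [← Real.exp_add, ← Real.exp_neg]; norm_num
    have h3 : (4 : ℝ) ≤ Real.exp 1 * Real.exp 1 := by
      have := Real.exp_one_gt_d9
      nlinarith
    have h4 : (Real.exp 1 * Real.exp 1)⁻¹ ≤ 4⁻¹ := inv_anti₀ (by norm_num) h3
    linarith
  have key := G4_lowrank n (fun j => (x j : ℂ)) p ?_
    (Matrix.of fun i j => (((x j) ^ (i.1 : ℕ) * (Real.exp ((i.2 : ℕ) * (η * x j + s j * Λ)) -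
      ∑ m ∈ Finset.range J, ((i.2 : ℕ) * η * x j) ^ m / m.factorial) : ℝ) : ℂ))
    (Z ^ K * Real.exp Y) (Z ^ K * (4 * Real.exp (-(J : ℕ)))) ?_ ?_ ?_ ?_ ?_
  · rw [hcard] at key
    have h2n : 2 * n - n = n := by omega
    rw [h2n] at key
    convert key using 3
    congr 1
    ext i j
    simp only [Matrix.of_apply]
    rw [hpe]
    push_cast
    ring
  · intro i
    refine lt_of_le_of_lt (b := (i.1 : ℕ) + J) ?_ ?_
    · refine Polynomial.natDegree_mul_le.trans ?_
      gcongr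
      · exact Polynomial.natDegree_X_pow_le _
      · refine Polynomial.natDegree_sum_le_of_forall_le _ _ fun m hm => ?_
        exact (Polynomial.natDegree_monomial_le _).trans (Finset.mem_range.1 hm).le
    · have := i.1.2
      omega
  · intro i j
    rw [hpe, Complex.norm_real, Real.norm_eq_abs, abs_mul]
    gcongr
    · exact hxp i j
    · exact G4_exp_taylor_abs _ _ _ (hyY i j)
  · intro i j
    simp only [Matrix.of_apply]
    rw [Complex.norm_real, Real.norm_eq_abs, abs_mul]
    gcongr
    · exact hxp i j
    · have h1 := G4_exp_taylor _ _ J (hyY i j) hJ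
      set y := (i.2 : ℕ) * η * x j with hy
      have h2 : (i.2 : ℕ) * (η * x j + s j * Λ) = y + (i.2 : ℕ) * s j * Λ := by rw [hy]; ring
      rw [h2, Real.exp_add]
      have h3 : |(i.2 : ℕ) * (s j : ℝ) * Λ| ≤ (2 * (L0 + 1) : ℕ) * S * |Λ| := by
        rw [abs_mul, abs_mul, Nat.abs_cast, Nat.abs_cast]
        have h4 : ((i.2 : ℕ) : ℝ) ≤ (2 * (L0 + 1) : ℕ) := by exact_mod_cast i.2.2.le
        have h5 : (s j : ℝ) ≤ S := by exact_mod_cast hs j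
        gcongr
      have h6 := Real.abs_exp_sub_one_le (h3.trans hΛ)
      have h7 : Real.exp y ≤ Real.exp Y := Real.exp_le_exp.2 ((le_abs_self _).trans (hyY i j))
      have h8 : |Real.exp y * (Real.exp ((i.2 : ℕ) * (s j : ℝ) * Λ) - 1)| ≤
          2 * Real.exp (-(J : ℕ)) := by
        rw [abs_mul, abs_of_pos (Real.exp_pos y)]
        calc _ ≤ Real.exp Y * (2 * ((2 * (L0 + 1) : ℕ) * S * |Λ|)) := by
              gcongr
              linarith
          _ ≤ _ := by linarith
      have h9 : Real.exp y * Real.exp ((i.2 : ℕ) * (s j : ℝ) * Λ) -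
          ∑ m ∈ Finset.range J, y ^ m / m.factorial =
          Real.exp y * (Real.exp ((i.2 : ℕ) * (s j : ℝ) * Λ) - 1) +
          (Real.exp y - ∑ m ∈ Finset.range J, y ^ m / m.factorial) := by ring
      rw [h9]
      refine (abs_add_le _ _).trans ?_
      linarith
  · positivity
  · gcongr
    exact hexpJ.trans (Real.one_le_exp hY0)
  · rw [hcard]; omega

set_option maxHeartbeats 4000000 in
theorem G4_two_logs {F : Type*} [Field F] [NumberField F] (D : ℕ) (hD0 : 1 ≤ D)
    (hD : Module.finrank ℚ F ≤ D) (σ₀ : F →ₐ[ℚ] ℂ) (u₁ d₁ u₂ d₂ : F)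
    (iu₁ : IsIntegral ℤ u₁) (id₁ : IsIntegral ℤ d₁) (iu₂ : IsIntegral ℤ u₂)
    (id₂ : IsIntegral ℤ d₂) (nu₁ : u₁ ≠ 0) (nd₁ : d₁ ≠ 0) (nu₂ : u₂ ≠ 0) (nd₂ : d₂ ≠ 0)
    (η Λ : ℝ) (hη : η ≠ 0) (q : ℕ)
    (e₁ : σ₀ (u₁ / d₁) = (Real.exp η : ℂ)) (e₂ : σ₀ (u₂ / d₂) = (Real.exp (Λ - q * η) : ℂ))
    (H₁ H₂ : ℝ)
    (bu₁ : ∀ σ : F →ₐ[ℚ] ℂ, ‖σ u₁‖ ≤ Real.exp H₁) (bd₁ : ∀ σ : F →ₐ[ℚ] ℂ, ‖σ d₁‖ ≤ Real.exp H₁)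
    (bu₂ : ∀ σ : F →ₐ[ℚ] ℂ, ‖σ u₂‖ ≤ Real.exp H₂) (bd₂ : ∀ σ : F →ₐ[ℚ] ℂ, ‖σ d₂‖ ≤ Real.exp H₂)
    (K L0 R S : ℕ) (hR : R ≤ q) (hLR : 2 * (L0 + 1) ≤ R)
    (hcard : K * (2 * (L0 + 1)) < (R - 2 * (L0 + 1)) * S)
    (hH₁ : 0 ≤ H₁) (hH₂ : 0 ≤ H₂)
    (Y : ℝ) (hY : (2 * (L0 + 1) : ℕ) * |η| * (q * S : ℕ) ≤ Y) (hJ : 8 * Y ≤ (K * L0 : ℕ))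
    (hJ2 : 2 ≤ K * L0)
    (hΛ : (2 * (L0 + 1) : ℕ) * S * |Λ| ≤ 1)
    (hΛ2 : (2 * (L0 + 1) : ℕ) * S * |Λ| * Real.exp Y ≤ Real.exp (-(K * L0 : ℕ)))
    (hfin : D * (Real.log (2 * (K * (L0 + 1)) : ℕ) + K * Real.log (q * S : ℕ) +
      (2 * (L0 + 1) : ℕ) * (R * H₁ + S * H₂)) + 2 * Real.log 2 + (Y - (K * L0 : ℕ)) / 2 < 0) :
    False := by
  classical
  set L := 2 * (L0 + 1) with hL
  set ρ := 2 * (K * (L0 + 1)) with hρ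
  have hS : 0 < S := by
    rcases Nat.eq_zero_or_pos S with h | h
    · subst h; simp at hcard
    · exact h
  have hq : 0 < q := by omega
  have hqS : 0 < q * S := Nat.mul_pos hq hS
  have hZ1 : (1 : ℝ) ≤ (q * S : ℕ) := by exact_mod_cast hqS
  have hcardι : Fintype.card (Fin K × Fin L) = ρ := by
    simp [hL, hρ]; ring
  -- the points
  let X : ℕ × ℕ → ℤ := fun rs => (rs.1 : ℤ) - rs.2 * q
  have hθ₁ : u₁ / d₁ ≠ 0 := div_ne_zero nu₁ nd₁
  have hθ₂ : u₂ / d₂ ≠ 0 := div_ne_zero nu₂ nd₂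
  have hinj : Function.Injective (fun n : ℕ => (u₁ / d₁) ^ n) := by
    intro a b hab
    have := congrArg σ₀ hab
    simp only [map_pow, e₁] at this
    have h2 : (Real.exp η) ^ a = (Real.exp η) ^ b := by exact_mod_cast this
    rw [← Real.exp_nat_mul, ← Real.exp_nat_mul] at h2
    have h3 := Real.exp_injective h2
    have h4 := mul_right_cancel₀ hη h3
    exact_mod_cast h4
  obtain ⟨f, hf⟩ := G4_select (F := F) (ι := Fin K × Fin L) (π := Fin R × Fin S)
    (fun rs i => (X (rs.1, rs.2) : F) ^ (i.1 : ℕ) *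
      ((u₁ / d₁) ^ (rs.1 : ℕ) * (u₂ / d₂) ^ (rs.2 : ℕ)) ^ (i.2 : ℕ)) (by
    intro p hp
    refine G4_zero_estimate K L R S q (u₁ / d₁) (u₂ / d₂) hθ₁ hθ₂ hinj hR hLR hcard p ?_
    intro r hr s hs
    have := hp (⟨r, hr⟩, ⟨s, hs⟩)
    simp only [X] at this
    rw [← this]
    refine Finset.sum_congr rfl fun i _ => ?_
    ring)
  set M : Matrix (Fin K × Fin L) (Fin K × Fin L) F := Matrix.of fun i j =>
    (X ((f j).1, (f j).2) : F) ^ (i.1 : ℕ) *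
      ((u₁ / d₁) ^ ((f j).1 : ℕ) * (u₂ / d₂) ^ ((f j).2 : ℕ)) ^ (i.2 : ℕ) with hM
  have hMdet : M.det ≠ 0 := by
    rw [← Matrix.det_transpose]
    exact hf
  have hXb : ∀ j, |((X ((f j).1, (f j).2) : ℤ) : ℝ)| ≤ (q * S : ℕ) := by
    intro j
    have h1 := (f j).1.2
    have h2 := (f j).2.2
    have h3 : |X ((f j).1, (f j).2)| ≤ ((q * S : ℕ) : ℤ) := by
      simp only [X]
      push_cast
      have h4 : (((f j).1 : ℕ) : ℤ) < q := by exact_mod_cast lt_of_lt_of_le h1 hR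
      have h5 : (((f j).2 : ℕ) : ℤ) + 1 ≤ S := by exact_mod_cast h2
      have h6 : (0 : ℤ) ≤ ((f j).1 : ℕ) := by positivity
      have h7 : (0 : ℤ) ≤ ((f j).2 : ℕ) := by positivity
      have h8 : (0 : ℤ) ≤ q := by positivity
      have h9 : (1 : ℤ) ≤ S := by exact_mod_cast hS
      rw [abs_le]
      constructor <;> nlinarith
    exact_mod_cast h3
  -- integral matrix
  set w : F := d₁ ^ (L * R) * d₂ ^ (L * S) with hw
  have hw0 : w ≠ 0 := mul_ne_zero (pow_ne_zero _ nd₁) (pow_ne_zero _ nd₂)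
  have hent : ∀ i j, w * M i j = (X ((f j).1, (f j).2) : F) ^ (i.1 : ℕ) *
      ((u₁ ^ (((f j).1 : ℕ) * (i.2 : ℕ)) * d₁ ^ (L * R - ((f j).1 : ℕ) * (i.2 : ℕ))) *
      (u₂ ^ (((f j).2 : ℕ) * (i.2 : ℕ)) * d₂ ^ (L * S - ((f j).2 : ℕ) * (i.2 : ℕ)))) := by
    intro i j
    have h1 : ((f j).1 : ℕ) * (i.2 : ℕ) ≤ L * R := by
      rw [mul_comm L]; exact Nat.mul_le_mul (f j).1.2.le i.2.2.le
    have h2 : ((f j).2 : ℕ) * (i.2 : ℕ) ≤ L * S := by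
      rw [mul_comm L]; exact Nat.mul_le_mul (f j).2.2.le i.2.2.le
    have h3 : d₁ ^ (L * R) = d₁ ^ (L * R - ((f j).1 : ℕ) * (i.2 : ℕ)) *
        d₁ ^ (((f j).1 : ℕ) * (i.2 : ℕ)) := by
      rw [← pow_add, Nat.sub_add_cancel h1]
    have h4 : d₂ ^ (L * S) = d₂ ^ (L * S - ((f j).2 : ℕ) * (i.2 : ℕ)) *
        d₂ ^ (((f j).2 : ℕ) * (i.2 : ℕ)) := by
      rw [← pow_add, Nat.sub_add_cancel h2]
    rw [hw, h3, h4, hM]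
    simp only [Matrix.of_apply]
    rw [mul_pow, ← pow_mul, ← pow_mul, div_pow, div_pow]
    have h5 : d₁ ^ (((f j).1 : ℕ) * (i.2 : ℕ)) ≠ 0 := pow_ne_zero _ nd₁
    have h6 : d₂ ^ (((f j).2 : ℕ) * (i.2 : ℕ)) ≠ 0 := pow_ne_zero _ nd₂
    field_simp
  set W : ℝ := L * (R * H₁ + S * H₂) with hW
  have hW0 : 0 ≤ W := by positivity
  have hpowb : ∀ (σ : F →ₐ[ℚ] ℂ) (u d : F) (H : ℝ) (a b : ℕ), a ≤ b → ‖σ u‖ ≤ Real.exp H →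
      ‖σ d‖ ≤ Real.exp H → ‖σ (u ^ a * d ^ (b - a))‖ ≤ Real.exp (b * H) := by
    intro σ u d H a b hab hu hd
    rw [map_mul, map_pow, map_pow, norm_mul, norm_pow, norm_pow]
    calc _ ≤ Real.exp H ^ a * Real.exp H ^ (b - a) := by gcongr
      _ = Real.exp H ^ b := by rw [← pow_add, Nat.add_sub_cancel' hab]
      _ = _ := by rw [Real.exp_nat_mul]
  have hentb : ∀ (σ : F →ₐ[ℚ] ℂ) i j, ‖σ (w * M i j)‖ ≤ (q * S : ℕ) ^ K * Real.exp W := by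
    intro σ i j
    rw [hent, map_mul, norm_mul]
    have h1 : ((f j).1 : ℕ) * (i.2 : ℕ) ≤ L * R := by
      rw [mul_comm L]; exact Nat.mul_le_mul (f j).1.2.le i.2.2.le
    have h2 : ((f j).2 : ℕ) * (i.2 : ℕ) ≤ L * S := by
      rw [mul_comm L]; exact Nat.mul_le_mul (f j).2.2.le i.2.2.le
    gcongr
    · rw [map_pow, map_intCast, norm_pow, Complex.norm_intCast]
      exact (pow_le_pow_left₀ (abs_nonneg _) (hXb j) _).trans (pow_le_pow_right₀ hZ1 i.1.2.le)
    · rw [map_mul, norm_mul]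
      have h3 := hpowb σ _ _ _ _ _ h1 (bu₁ σ) (bd₁ σ)
      have h4 := hpowb σ _ _ _ _ _ h2 (bu₂ σ) (bd₂ σ)
      calc _ ≤ Real.exp ((L * R : ℕ) * H₁) * Real.exp ((L * S : ℕ) * H₂) := by gcongr
        _ = Real.exp W := by
          rw [← Real.exp_add, hW]; push_cast; ring_nf
  have hdets : (w • M).det = w ^ ρ * M.det := by rw [Matrix.det_smul, hcardι]
  have hint : IsIntegral ℤ (w • M).det := by
    apply G4_isIntegral_det
    intro i j
    rw [Matrix.smul_apply, smul_eq_mul, hent]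
    have h0 : IsIntegral ℤ ((X ((f j).1, (f j).2) : ℤ) : F) := by
      have := isIntegral_algebraMap (R := ℤ) (A := F) (x := X ((f j).1, (f j).2))
      simpa using this
    exact (h0.pow _).mul (((iu₁.pow _).mul (id₁.pow _)).mul ((iu₂.pow _).mul (id₂.pow _)))
  have hne : (w • M).det ≠ 0 := by
    rw [hdets]; exact mul_ne_zero (pow_ne_zero _ hw0) hMdet
  have hρ1 : 1 ≤ ρ := by
    have : 0 < K := by
      rcases Nat.eq_zero_or_pos K with h | h
      · subst h; simp at hJ2
      · exact h
    have : 0 < K * (L0 + 1) := by positivity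
    omega
  have hρR : (1 : ℝ) ≤ ρ := by exact_mod_cast hρ1
  have hfacle : ((ρ.factorial : ℕ) : ℝ) ≤ (ρ : ℝ) ^ ρ := by exact_mod_cast Nat.factorial_le_pow ρ
  set b : ℝ := (q * S : ℕ) ^ K * Real.exp W with hb
  have hb1 : 1 ≤ b := one_le_mul_of_one_le_of_one_le (one_le_pow₀ hZ1) (Real.one_le_exp hW0)
  set Bd : ℝ := (ρ : ℝ) ^ ρ * b ^ ρ with hBd
  have hBd1 : 1 ≤ Bd := one_le_mul_of_one_le_of_one_le (one_le_pow₀ hρR) (one_le_pow₀ hb1)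
  have hσdet : ∀ σ : F →ₐ[ℚ] ℂ, ‖σ (w • M).det‖ ≤ Bd := by
    intro σ
    rw [AlgHom.map_det]
    refine (G4_det_le _ (fun _ => b) ?_).trans ?_
    · intro i j
      have := hentb σ i j
      simpa using this
    · rw [Finset.prod_const, Finset.card_univ, hcardι]
      exact mul_le_mul_of_nonneg_right hfacle (by positivity)
  have hL1 := G4_liouville D hD _ hint hne σ₀ Bd hBd1 hσdet
  -- upper bound
  have hup := G4_upper (K := K) L0 η Λ (q * S : ℕ) Y S hZ1
    (fun j => ((X ((f j).1, (f j).2) : ℤ) : ℝ)) (fun j => ((f j).2 : ℕ)) hXb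
    (fun j => (f j).2.2.le) hY hJ hJ2 hΛ hΛ2
  have hMσ : ‖σ₀ M.det‖ = ‖(Matrix.of fun i j : Fin K × Fin (2 * (L0 + 1)) =>
      ((((X ((f j).1, (f j).2) : ℤ) : ℝ) ^ (i.1 : ℕ) * Real.exp ((i.2 : ℕ) *
      (η * ((X ((f j).1, (f j).2) : ℤ) : ℝ) + ((f j).2 : ℕ) * Λ)) : ℝ) : ℂ)).det‖ := by
    rw [AlgHom.map_det]
    congr 2
    ext i j
    simp only [hM, AlgHom.mapMatrix_apply, Matrix.map_apply, Matrix.of_apply, map_mul, map_pow,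
      map_intCast, e₁, e₂]
    have h1 : (Real.exp η ^ ((f j).1 : ℕ) * Real.exp (Λ - q * η) ^ ((f j).2 : ℕ)) ^ (i.2 : ℕ) =
      Real.exp ((i.2 : ℕ) *
      (η * ((X ((f j).1, (f j).2) : ℤ) : ℝ) + ((f j).2 : ℕ) * Λ)) := by
      rw [← Real.exp_nat_mul, ← Real.exp_nat_mul, ← Real.exp_add, ← Real.exp_nat_mul]
      congr 1
      simp only [X]
      push_cast
      ring
    rw [← h1]
    push_cast
    rfl
  rw [← hMσ] at hup
  have hwσ : ‖σ₀ w‖ ≤ Real.exp W := by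
    rw [hw, map_mul, norm_mul, map_pow, map_pow, norm_pow, norm_pow]
    calc _ ≤ Real.exp H₁ ^ (L * R) * Real.exp H₂ ^ (L * S) := by
          have := bd₁ σ₀
          have := bd₂ σ₀
          gcongr
      _ = Real.exp W := by
          rw [← Real.exp_nat_mul, ← Real.exp_nat_mul, ← Real.exp_add, hW]; push_cast; ring_nf
  rw [hdets, map_mul, map_pow, norm_mul, norm_pow] at hL1
  set n := K * (L0 + 1) with hn
  set J := K * L0 with hJd
  set Z : ℝ := ((q * S : ℕ) : ℝ) with hZ
  have hfinal : (1 : ℝ) ≤ (Real.exp W ^ ρ * (2 ^ ρ * (ρ : ℝ) ^ ρ *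
        ((Z ^ K * Real.exp Y) ^ n * (Z ^ K * (4 * Real.exp (-(J : ℝ)))) ^ n))) * Bd ^ (D - 1) := by
    refine hL1.trans ?_
    have hBp : 0 ≤ Bd := by linarith
    gcongr
    refine hup.trans ?_
    gcongr
  have hlog := Real.log_nonneg hfinal
  have hZp : 0 < Z := by linarith
  have hρp : (0 : ℝ) < ρ := by linarith
  have hbp : 0 < b := by linarith
  have hBp : 0 < Bd := by linarith
  have lb : Real.log b = K * Real.log Z + W := by
    rw [hb, Real.log_mul (by positivity) (by positivity), Real.log_pow, Real.log_exp]
  have lBd : Real.log Bd = ρ * (Real.log ρ + (K * Real.log Z + W)) := by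
    rw [hBd, Real.log_mul (by positivity) (by positivity), Real.log_pow, Real.log_pow, lb]; ring
  have l4 : Real.log 4 = 2 * Real.log 2 := by
    rw [show (4 : ℝ) = 2 ^ 2 by norm_num, Real.log_pow]; norm_num
  have hρn : (ρ : ℝ) = 2 * n := by rw [hρ]; push_cast; ring
  have hlog2 : Real.log ((Real.exp W ^ ρ * (2 ^ ρ * (ρ : ℝ) ^ ρ *
        ((Z ^ K * Real.exp Y) ^ n * (Z ^ K * (4 * Real.exp (-(J : ℝ)))) ^ n))) * Bd ^ (D - 1)) =
      ρ * W + (ρ * Real.log 2 + ρ * Real.log ρ + (n * (K * Real.log Z + Y) +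
        n * (K * Real.log Z + (2 * Real.log 2 + -J)))) +
        ((D - 1 : ℕ) : ℝ) * (ρ * (Real.log ρ + (K * Real.log Z + W))) := by
    rw [Real.log_mul (by positivity) (by positivity), Real.log_mul (by positivity) (by positivity),
      Real.log_mul (by positivity) (by positivity), Real.log_mul (by positivity) (by positivity),
      Real.log_mul (by positivity) (by positivity)]
    rw [Real.log_pow, Real.log_pow, Real.log_pow, Real.log_pow, Real.log_pow, Real.log_pow, lBd,
      Real.log_mul (by positivity) (by positivity), Real.log_mul (by positivity) (by positivity),
      Real.log_mul (by positivity) (by positivity), Real.log_pow, Real.log_exp, Real.log_exp,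
      Real.log_exp, l4]
  rw [hlog2, Nat.cast_sub hD0] at hlog
  have h99 : ρ * W + (ρ * Real.log 2 + ρ * Real.log ρ + (n * (K * Real.log Z + Y) +
        n * (K * Real.log Z + (2 * Real.log 2 + -J)))) +
        ((D : ℝ) - (1 : ℕ)) * (ρ * (Real.log ρ + (K * Real.log Z + W))) =
      ρ * (D * (Real.log ρ + K * Real.log Z + W) + 2 * Real.log 2 + (Y - J) / 2) := by
    have : (n : ℝ) = ρ / 2 := by rw [hρn]; ring
    rw [this]; push_cast; ring
  rw [h99] at hlog
  nlinarith

set_option maxHeartbeats 1000000 in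
theorem G4_apply {F : Type*} [Field F] [NumberField F] (G : ℕ) (hG : 449 ≤ G)
    (hD : Module.finrank ℚ F ≤ 3 * G) (σ₀ : F →ₐ[ℚ] ℂ) (u₁ d₁ u₂ d₂ : F)
    (iu₁ : IsIntegral ℤ u₁) (id₁ : IsIntegral ℤ d₁) (iu₂ : IsIntegral ℤ u₂)
    (id₂ : IsIntegral ℤ d₂) (nu₁ : u₁ ≠ 0) (nd₁ : d₁ ≠ 0) (nu₂ : u₂ ≠ 0) (nd₂ : d₂ ≠ 0)
    (η Λ : ℝ) (hη : η ≠ 0) (q : ℕ)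
    (e₁ : σ₀ (u₁ / d₁) = (Real.exp η : ℂ)) (e₂ : σ₀ (u₂ / d₂) = (Real.exp (Λ - q * η) : ℂ))
    (N M' X H₁ H₂ : ℕ) (hX : X = 10 ^ 13 * G ^ 6) (hN : 10 ^ 41 * G ^ 18 ≤ N)
    (hlogN : Real.log N ≤ G) (hM1 : 1 ≤ M') (hMX : M' ≤ X) (hqM : q * M' ≤ N)
    (hNq : N ≤ 4 * ((q + 1) * M')) (hηX : |η| ≤ 1 / X) (hΛN : |Λ| ≤ Real.exp (-(N : ℝ) / 3))
    (hH₁ : H₁ = 5 * M') (hH₂ : H₂ = 2 * (q / X) + 20 * X)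
    (bu₁ : ∀ σ : F →ₐ[ℚ] ℂ, ‖σ u₁‖ ≤ Real.exp H₁) (bd₁ : ∀ σ : F →ₐ[ℚ] ℂ, ‖σ d₁‖ ≤ Real.exp H₁)
    (bu₂ : ∀ σ : F →ₐ[ℚ] ℂ, ‖σ u₂‖ ≤ Real.exp H₂)
    (bd₂ : ∀ σ : F →ₐ[ℚ] ℂ, ‖σ d₂‖ ≤ Real.exp H₂) : False := by
  obtain ⟨L0, hL0⟩ : ∃ L0, L0 + 1 = 120 * G ^ 2 :=
    ⟨120 * G ^ 2 - 1, Nat.sub_add_cancel (by nlinarith)⟩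
  obtain ⟨ρ₀, hρ₀⟩ : ∃ x : ℕ, x = (100 * G + 1) * (240 * G ^ 2) := ⟨_, rfl⟩
  obtain ⟨R, hR⟩ : ∃ x : ℕ, x = ρ₀ * H₂ := ⟨_, rfl⟩
  obtain ⟨S, hS⟩ : ∃ x : ℕ, x = ρ₀ * H₁ := ⟨_, rfl⟩
  obtain ⟨K, hK⟩ : ∃ x : ℕ, x = 100 * G * (ρ₀ * (H₁ * H₂)) := ⟨_, rfl⟩
  have hL : 2 * (L0 + 1) = 240 * G ^ 2 := by rw [hL0]; ring
  have hG1 : 1 ≤ G := by omega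
  have hXpos : 0 < X := by rw [hX]; positivity
  have hG2 : 1 ≤ G ^ 2 := Nat.one_le_pow _ _ hG1
  have hH₁p : 0 < H₁ := by omega
  have hH₂p : 20 ≤ H₂ := by omega
  have hρ₀p : 0 < ρ₀ := by rw [hρ₀]; positivity
  have hqXn : q ≤ X * (q / X) + X := by
    have := Nat.div_add_mod q X
    have := Nat.mod_lt q hXpos
    omega
  have hqX2 : X * (q / X) ≤ q := Nat.mul_div_le q X
  -- real versions
  have hGr : (449 : ℝ) ≤ G := by exact_mod_cast hG
  have hXr : (X : ℝ) = 10 ^ 13 * (G : ℝ) ^ 6 := by rw [hX]; push_cast; ring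
  have hXrp : (0 : ℝ) < X := by exact_mod_cast hXpos
  have hNr : (10 : ℝ) ^ 41 * (G : ℝ) ^ 18 ≤ N := by exact_mod_cast hN
  have hM1r : (1 : ℝ) ≤ M' := by exact_mod_cast hM1
  have hMXr : (M' : ℝ) ≤ X := by exact_mod_cast hMX
  have hqMr : (q : ℝ) * M' ≤ N := by exact_mod_cast hqM
  have hNqr : (N : ℝ) ≤ 4 * ((q + 1) * M') := by exact_mod_cast hNq
  have hqXr : (q : ℝ) / X ≤ H₂ := by
    rw [div_le_iff₀ hXrp]
    have h : q ≤ H₂ * X := by rw [hH₂]; nlinarith only [hqXn, hXpos]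
    exact_mod_cast h
  have hH₂r : (H₂ : ℝ) ≤ 2 * (q / X) + 20 * X := by
    rw [hH₂]; push_cast
    have : ((q / X : ℕ) : ℝ) ≤ (q : ℝ) / X := Nat.cast_div_le
    linarith
  have hH₁r : (H₁ : ℝ) = 5 * M' := by rw [hH₁]; push_cast; ring
  have hH₁1 : (5 : ℝ) ≤ H₁ := by rw [hH₁r]; linarith
  have hH₂1 : (20 : ℝ) ≤ H₂ := by exact_mod_cast hH₂p
  have hρr : (ρ₀ : ℝ) = (100 * G + 1) * (240 * (G : ℝ) ^ 2) := by rw [hρ₀]; push_cast; ring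
  have hρub : (ρ₀ : ℝ) ≤ 24001 * (G : ℝ) ^ 3 := by
    rw [hρr]; nlinarith only [sq_nonneg (G : ℝ), hGr, mul_nonneg (sq_nonneg (G : ℝ)) (sub_nonneg.2 hGr)]
  have hρrp : (1 : ℝ) ≤ ρ₀ := by exact_mod_cast hρ₀p
  have hKr : (K : ℝ) = 100 * G * (ρ₀ * (H₁ * H₂)) := by rw [hK]; push_cast; ring
  have hSr : (S : ℝ) = ρ₀ * H₁ := by rw [hS]; push_cast; ring
  have hRr : (R : ℝ) = ρ₀ * H₂ := by rw [hR]; push_cast; ring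
  have hNp : (1 : ℝ) ≤ N := by
    have : (1 : ℝ) ≤ (G : ℝ) ^ 18 := one_le_pow₀ (by linarith)
    linarith
  obtain ⟨Lr, hLr⟩ : ∃ x : ℝ, x = 240 * (G : ℝ) ^ 2 := ⟨_, rfl⟩
  have hLc : ((2 * (L0 + 1) : ℕ) : ℝ) = Lr := by rw [hL, hLr]; push_cast; rfl
  have hL0r : ((K * L0 : ℕ) : ℝ) = K * (Lr / 2 - 1) := by
    have : (L0 : ℝ) + 1 = 120 * (G : ℝ) ^ 2 := by exact_mod_cast hL0
    have h2 : (L0 : ℝ) = 120 * (G : ℝ) ^ 2 - 1 := by linarith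
    push_cast; rw [h2, hLr]; ring
  have hLr100 : 1000 ≤ Lr := by rw [hLr]; nlinarith only [hGr]
  have hH12 : (H₁ : ℝ) * H₂ ≤ 10 * (N / X) + 100 * (X : ℝ) ^ 2 := by
    calc (H₁ : ℝ) * H₂ ≤ (5 * M') * (2 * (q / X) + 20 * X) := by rw [hH₁r]; gcongr
      _ = 10 * ((q * M') / X) + 100 * (M' * X) := by ring
      _ ≤ 10 * (N / X) + 100 * (X * X) := by gcongr
      _ = _ := by ring
  have hH12p : 0 < (H₁ : ℝ) * H₂ := by positivity
  have hKL : (K : ℝ) * Lr ≤ N / 500 := by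
    have h1 : (K : ℝ) * Lr ≤ 577000000 * (G : ℝ) ^ 6 * (H₁ * H₂) := by
      rw [hKr, hLr]
      have : 100 * (G : ℝ) * (ρ₀ * (H₁ * H₂)) * (240 * (G : ℝ) ^ 2) =
        (24000 * (G : ℝ) ^ 3 * ρ₀) * (H₁ * H₂) := by ring
      rw [this]
      refine mul_le_mul_of_nonneg_right ?_ hH12p.le
      calc 24000 * (G : ℝ) ^ 3 * ρ₀ ≤ 24000 * (G : ℝ) ^ 3 * (24001 * (G : ℝ) ^ 3) := by gcongr
        _ = 576024000 * (G : ℝ) ^ 6 := by ring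
        _ ≤ _ := by gcongr; norm_num
    have h2 : 577000000 * (G : ℝ) ^ 6 * (H₁ * H₂) ≤
        577000000 * (G : ℝ) ^ 6 * (10 * (N / X) + 100 * (X : ℝ) ^ 2) := by gcongr
    have h3 : (G : ℝ) ^ 6 * (N / X) = N / 10 ^ 13 := by
      rw [hXr]; field_simp
    have h4 : (G : ℝ) ^ 6 * (X : ℝ) ^ 2 = 10 ^ 26 * (G : ℝ) ^ 18 := by
      rw [hXr]; ring
    have h5 : 577000000 * (G : ℝ) ^ 6 * (10 * (N / X) + 100 * (X : ℝ) ^ 2) =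
      5770000000 * ((G : ℝ) ^ 6 * (N / X)) + 57700000000 * ((G : ℝ) ^ 6 * (X : ℝ) ^ 2) := by ring
    rw [h5, h3, h4] at h2
    have h6 : (10 : ℝ) ^ 26 * (G : ℝ) ^ 18 ≤ N / 10 ^ 15 := by
      rw [le_div_iff₀ (by positivity)]; linarith
    refine (h1.trans h2).trans ?_
    linarith
  have hGpow : (1 : ℝ) ≤ G := by linarith
  have hRq : (R : ℝ) ≤ q := by
    rw [hRr]
    have h1 : (ρ₀ : ℝ) * H₂ ≤ 24001 * (G : ℝ) ^ 3 * (2 * (q / X) + 20 * X) := by gcongr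
    have h2 : (G : ℝ) ^ 3 * (q / X) ≤ q / 10 ^ 13 := by
      rw [hXr]
      rw [mul_div_assoc', div_le_div_iff₀ (by positivity) (by positivity)]
      have : (G : ℝ) ^ 3 ≤ (G : ℝ) ^ 6 := pow_le_pow_right₀ hGpow (by norm_num)
      have h0 : (0 : ℝ) ≤ (q : ℝ) * 10 ^ 13 := by positivity
      nlinarith only [this, h0]
    have h3 : (10 : ℝ) ^ 27 * (G : ℝ) ^ 12 ≤ q + 1 := by
      have h4 : (10 : ℝ) ^ 41 * (G : ℝ) ^ 18 ≤ 4 * ((q + 1) * (10 ^ 13 * (G : ℝ) ^ 6)) := by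
        refine (hNr.trans hNqr).trans ?_
        rw [← hXr]; gcongr
      have h5 : 4 * (10 : ℝ) ^ 13 * (G : ℝ) ^ 6 * (10 ^ 27 * (G : ℝ) ^ 12) ≤
          4 * (10 : ℝ) ^ 13 * (G : ℝ) ^ 6 * (q + 1) := by
        have : (0 : ℝ) ≤ (G : ℝ) ^ 18 := by positivity
        calc _ = 4 * (10 : ℝ) ^ 40 * (G : ℝ) ^ 18 := by ring
          _ ≤ (10 : ℝ) ^ 41 * (G : ℝ) ^ 18 := by gcongr; norm_num
          _ ≤ _ := h4
          _ = _ := by ring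
      exact le_of_mul_le_mul_left h5 (by positivity)
    have h6 : (G : ℝ) ^ 3 * X ≤ (q + 1) / 10 ^ 14 := by
      rw [hXr, le_div_iff₀ (by positivity)]
      have : (G : ℝ) ^ 9 ≤ (G : ℝ) ^ 12 := pow_le_pow_right₀ hGpow (by norm_num)
      calc (G : ℝ) ^ 3 * (10 ^ 13 * (G : ℝ) ^ 6) * 10 ^ 14 = 10 ^ 27 * (G : ℝ) ^ 9 := by ring
        _ ≤ 10 ^ 27 * (G : ℝ) ^ 12 := by gcongr
        _ ≤ _ := h3
    have h7 : (1 : ℝ) ≤ q := by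
      have : (1 : ℝ) ≤ (G : ℝ) ^ 12 := one_le_pow₀ hGpow
      linarith
    have h8 : 24001 * (G : ℝ) ^ 3 * (2 * (q / X) + 20 * X) =
      48002 * ((G : ℝ) ^ 3 * (q / X)) + 480020 * ((G : ℝ) ^ 3 * X) := by ring
    rw [h8] at h1
    linarith
  have hRqn : R ≤ q := by exact_mod_cast hRq
  have hLR : 2 * (L0 + 1) ≤ R := by
    rw [hL, hR, hρ₀]
    calc 240 * G ^ 2 = 1 * (240 * G ^ 2) * 1 := by ring
      _ ≤ _ := by gcongr <;> omega
  have hcard : K * (2 * (L0 + 1)) < (R - 2 * (L0 + 1)) * S := by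
    rw [hL]
    have h1 : R - 240 * G ^ 2 = 100 * G * (240 * G ^ 2) * H₂ + (240 * G ^ 2) * (H₂ - 1) := by
      obtain ⟨h, rfl⟩ : ∃ h, H₂ = h + 1 := ⟨H₂ - 1, by omega⟩
      rw [hR, hρ₀, Nat.add_sub_cancel]
      have : (100 * G + 1) * (240 * G ^ 2) * (h + 1) = 100 * G * (240 * G ^ 2) * (h + 1) +
        240 * G ^ 2 * h + 240 * G ^ 2 := by ring
      rw [this, Nat.add_sub_cancel]
    rw [h1, hK, hS]
    have h2 : 0 < (240 * G ^ 2) * (H₂ - 1) * (ρ₀ * H₁) := by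
      have : 0 < H₂ - 1 := by omega
      positivity
    calc _ = 100 * G * (240 * G ^ 2) * H₂ * (ρ₀ * H₁) := by ring
      _ < 100 * G * (240 * G ^ 2) * H₂ * (ρ₀ * H₁) + (240 * G ^ 2) * (H₂ - 1) * (ρ₀ * H₁) := by
        omega
      _ = _ := by ring
  have hSK : (S : ℝ) ≤ K := by
    rw [hSr, hKr]
    have : (1 : ℝ) ≤ 100 * G * H₂ :=
      one_le_mul_of_one_le_of_one_le (by linarith) (by linarith)
    have h2 : (0 : ℝ) ≤ ρ₀ * H₁ := by positivity
    calc (ρ₀ : ℝ) * H₁ ≤ (ρ₀ * H₁) * (100 * G * H₂) := le_mul_of_one_le_right h2 this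
      _ = _ := by ring
  have hS1 : (1 : ℝ) ≤ S := by
    rw [hSr]; exact one_le_mul_of_one_le_of_one_le hρrp (by linarith)
  have hK1 : (1 : ℝ) ≤ K := hS1.trans hSK
  have hKGG : (G : ℝ) * 100 ≤ K := by
    rw [hKr]
    have : (1 : ℝ) ≤ ρ₀ * (H₁ * H₂) := one_le_mul_of_one_le_of_one_le hρrp
      (one_le_mul_of_one_le_of_one_le (by linarith) (by linarith))
    calc (G : ℝ) * 100 = 100 * G * 1 := by ring
      _ ≤ _ := by gcongr
  have hq1 : (1 : ℝ) ≤ q := by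
    refine le_trans ?_ hRq
    rw [hRr]; exact one_le_mul_of_one_le_of_one_le hρrp (by linarith)
  have hKN : (K : ℝ) * Lr ≤ N := by linarith
  have hKN' : (K : ℝ) ≤ N := le_trans (le_mul_of_one_le_right (by linarith) (by linarith)) hKN
  have hSN : (S : ℝ) ≤ N := hSK.trans hKN'
  have hqN : (q : ℝ) ≤ N := le_trans (le_mul_of_one_le_right (by linarith) hM1r) hqMr
  have hLrp : 0 < Lr := by linarith
  have hKp : (0 : ℝ) < K := by linarith
  obtain ⟨Y, hY⟩ : ∃ x : ℝ, x = Lr * (1 / X) * (q * S) := ⟨_, rfl⟩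
  have hYK : Y ≤ K * Lr / 100 := by
    have h1 : Y = Lr * (q / X) * (ρ₀ * H₁) := by rw [hY, hSr]; ring
    rw [h1, hKr]
    have h2 : Lr * (q / X) * (ρ₀ * H₁) ≤ Lr * H₂ * (ρ₀ * H₁) := by gcongr
    have h3 : (0 : ℝ) ≤ Lr * H₂ * (ρ₀ * H₁) := by positivity
    calc _ ≤ Lr * H₂ * (ρ₀ * H₁) := h2
      _ ≤ Lr * H₂ * (ρ₀ * H₁) * G := le_mul_of_one_le_right h3 hGpow
      _ = _ := by ring
  have hY0 : 0 ≤ Y := by rw [hY, hLr]; positivity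
  have hKL0 : K * Lr * (49 / 100) ≤ ((K * L0 : ℕ) : ℝ) := by
    rw [hL0r]
    calc K * Lr * (49 / 100) = K * (Lr * (49 / 100)) := by ring
      _ ≤ _ := by gcongr; linarith
  have hKL0' : ((K * L0 : ℕ) : ℝ) ≤ N / 500 := by
    rw [hL0r]
    refine le_trans ?_ hKL
    gcongr; linarith
  have hKLp : 1000 ≤ (K : ℝ) * Lr := by
    calc (1000 : ℝ) ≤ 1 * Lr := by linarith
      _ ≤ _ := by gcongr
  have hlog1 : Real.log ((2 * (K * (L0 + 1)) : ℕ) : ℝ) ≤ G := by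
    refine le_trans (Real.log_le_log ?_ ?_) hlogN
    · have : 0 < K := by exact_mod_cast (show (0 : ℝ) < K by linarith)
      exact_mod_cast (by positivity : 0 < 2 * (K * (L0 + 1)))
    · have : 2 * (K * (L0 + 1)) = K * (2 * (L0 + 1)) := by ring
      rw [this, Nat.cast_mul, hLc]; exact hKN
  have hlog2 : Real.log ((q * S : ℕ) : ℝ) ≤ 2 * G := by
    rw [Nat.cast_mul, Real.log_mul (by positivity) (by positivity)]
    have h1 := Real.log_le_log (by linarith) hqN
    have h2 := Real.log_le_log (by linarith) hSN
    linarith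
  have hmain : Lr * S * |Λ| * Real.exp Y ≤ Real.exp (-((K * L0 : ℕ) : ℝ)) := by
    have h1 : Lr * S ≤ Real.exp (N / 500) := by
      have h2 : Lr * S ≤ N / 500 := by
        refine le_trans ?_ hKL
        rw [mul_comm]; gcongr
      have := Real.add_one_le_exp ((N : ℝ) / 500)
      linarith
    calc Lr * S * |Λ| * Real.exp Y ≤ Real.exp (N / 500) * Real.exp (-(N : ℝ) / 3) *
          Real.exp (N / 500) := by
          gcongr
          linarith
      _ = Real.exp (N / 500 + -(N : ℝ) / 3 + N / 500) := by rw [Real.exp_add, Real.exp_add]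
      _ ≤ _ := by
          apply Real.exp_le_exp.mpr
          linarith
  refine G4_two_logs (3 * G) (by omega) hD σ₀ u₁ d₁ u₂ d₂ iu₁ id₁ iu₂ id₂ nu₁ nd₁ nu₂ nd₂
    η Λ hη q e₁ e₂ H₁ H₂ bu₁ bd₁ bu₂ bd₂ K L0 R S hRqn hLR hcard (by positivity) (by positivity)
    Y ?_ ?_ ?_ ?_ ?_ ?_
  · rw [hLc, hY, Nat.cast_mul]; gcongr
  · linarith
  · have : (2 : ℝ) ≤ ((K * L0 : ℕ) : ℝ) := by linarith
    exact_mod_cast this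
  · rw [hLc]
    have h1 : (1 : ℝ) ≤ Real.exp Y := Real.one_le_exp hY0
    have h2 : Real.exp (-((K * L0 : ℕ) : ℝ)) ≤ 1 := by
      rw [Real.exp_le_one_iff]; simp; positivity
    have h3 : 0 ≤ Lr * S * |Λ| := by positivity
    exact (le_mul_of_one_le_right h3 h1).trans (hmain.trans h2)
  · rw [hLc]; exact hmain
  · rw [hLc, hRr, hSr]
    have hl2 : Real.log 2 < 1 := by linarith [Real.log_two_lt_d9]
    have h1 : ((3 * G : ℕ) : ℝ) = 3 * G := by push_cast; ring
    rw [h1]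
    have h2 : 3 * (G : ℝ) * (Lr * (ρ₀ * H₂ * H₁ + ρ₀ * H₁ * H₂)) = 6 / 100 * (K * Lr) := by
      rw [hKr]; ring
    have h3 : 3 * (G : ℝ) * (K * Real.log ((q * S : ℕ) : ℝ)) ≤ K * Lr / 40 := by
      have : 3 * (G : ℝ) * (K * Real.log ((q * S : ℕ) : ℝ)) ≤ 3 * G * (K * (2 * G)) := by gcongr
      refine this.trans (le_of_eq ?_)
      rw [hLr]; ring
    have h4 : 3 * (G : ℝ) * Real.log ((2 * (K * (L0 + 1)) : ℕ) : ℝ) ≤ K * Lr / 40 := by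
      have : 3 * (G : ℝ) * Real.log ((2 * (K * (L0 + 1)) : ℕ) : ℝ) ≤ 3 * G * G := by gcongr
      have h5 : 3 * (G : ℝ) * G ≤ Lr / 40 := by rw [hLr]; nlinarith only [sq_nonneg (G : ℝ)]
      have h6 : Lr ≤ K * Lr := le_mul_of_one_le_left hLrp.le hK1
      linarith
    have h7 : 3 * (G : ℝ) * (Real.log ((2 * (K * (L0 + 1)) : ℕ) : ℝ) +
        K * Real.log ((q * S : ℕ) : ℝ) + Lr * (ρ₀ * H₂ * H₁ + ρ₀ * H₁ * H₂)) =
      3 * (G : ℝ) * Real.log ((2 * (K * (L0 + 1)) : ℕ) : ℝ) +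
      3 * (G : ℝ) * (K * Real.log ((q * S : ℕ) : ℝ)) +
      3 * (G : ℝ) * (Lr * (ρ₀ * H₂ * H₁ + ρ₀ * H₁ * H₂)) := by ring
    rw [h7, h2]
    linarith

open Polynomial in
theorem G4_monic (k : ℕ) {R : Type*} [CommRing R] [Nontrivial R] :
    (X ^ (k + 1) + (C (-2) * X ^ k + C 1) : R[X]).Monic ∧
    (X ^ (k + 1) + (C (-2) * X ^ k + C 1) : R[X]).natDegree = k + 1 := by
  have h : (C (-2) * X ^ k + C 1 : R[X]).degree < (k + 1 : ℕ) := by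
    refine lt_of_le_of_lt (degree_add_le _ _) (max_lt ?_ ?_)
    · exact lt_of_le_of_lt (degree_C_mul_X_pow_le _ _) (by exact_mod_cast Nat.lt_succ_self k)
    · exact lt_of_le_of_lt degree_C_le (by exact_mod_cast Nat.succ_pos k)
  have hm := monic_X_pow_add h
  refine ⟨hm, ?_⟩
  rw [natDegree_eq_of_degree_eq_some]
  rw [degree_add_eq_left_of_degree_lt]
  · simp
  · simpa using h

theorem G4_int (k : ℕ) {F : Type*} [Field F] (a : F) (haF : a ^ k * (2 - a) = 1) :
    IsIntegral ℤ a := by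
  refine ⟨_, (G4_monic k (R := ℤ)).1, ?_⟩
  simp
  linear_combination -haF

theorem G4_int_inv (k : ℕ) (hk : 0 < k) {F : Type*} [Field F] (a : F)
    (haF : a ^ k * (2 - a) = 1) : IsIntegral ℤ a⁻¹ := by
  have hi := G4_int k a haF
  obtain ⟨j, rfl⟩ : ∃ j, k = j + 1 := ⟨k - 1, by omega⟩
  have h2 : IsIntegral ℤ (2 : F) := by
    have := isIntegral_algebraMap (R := ℤ) (A := F) (x := 2)
    simpa using this
  have : a⁻¹ = a ^ j * (2 - a) := by
    refine inv_eq_of_mul_eq_one_right ?_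
    rw [← haF]; ring
  rw [this]
  exact (hi.pow _).mul (h2.sub hi)

theorem G4_conj (k : ℕ) (hk : 2 ≤ k) (z : ℂ) (hz : z ^ k * (2 - z) = 1) :
    ‖z‖ ≤ Real.exp 1 ∧ ‖z⁻¹‖ ≤ Real.exp 1 := by
  have he := Real.exp_one_gt_d9
  have hn : ‖z‖ ^ k * ‖2 - z‖ = 1 := by rw [← norm_pow, ← norm_mul, hz, norm_one]
  have h1 : ‖z‖ ≤ Real.exp 1 := by
    by_contra! h
    have h2 : ‖z‖ - 2 ≤ ‖2 - z‖ := by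
      have := norm_sub_norm_le z 2
      rw [norm_sub_rev] at this
      simpa using this
    have h3 : ‖z‖ ^ 2 ≤ ‖z‖ ^ k := pow_le_pow_right₀ (by linarith) hk
    nlinarith
  refine ⟨h1, ?_⟩
  have hz0 : z ≠ 0 := by
    rintro rfl
    rw [zero_pow (by omega)] at hz
    simp at hz
  have hp : 0 < ‖z‖ := norm_pos_iff.2 hz0
  have h2 : ‖z⁻¹‖ ^ k ≤ Real.exp 1 ^ k := by
    have h3 : ‖z⁻¹‖ ^ k = ‖2 - z‖ := by
      rw [norm_inv, inv_pow]
      exact inv_eq_of_mul_eq_one_right hn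
    rw [h3]
    have h4 : ‖2 - z‖ ≤ 2 + ‖z‖ := by
      have := norm_sub_le (2 : ℂ) z
      simpa using this
    have h5 : Real.exp 1 ^ 2 ≤ Real.exp 1 ^ k := pow_le_pow_right₀ (by linarith) hk
    nlinarith
  exact le_of_pow_le_pow_left₀ (by omega) (by positivity) h2

theorem G4_zpow_norm (z : ℂ) (h1 : ‖z‖ ≤ Real.exp 1) (h2 : ‖z⁻¹‖ ≤ Real.exp 1) (s : ℤ) :
    ‖z ^ s‖ ≤ Real.exp |(s : ℝ)| := by
  rcases le_total 0 s with h | h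
  · lift s to ℕ using h
    rw [zpow_natCast, norm_pow, Int.cast_natCast, Nat.abs_cast]
    calc _ ≤ Real.exp 1 ^ s := by gcongr
      _ = _ := by rw [← Real.exp_nat_mul]; simp
  · obtain ⟨t, rfl⟩ : ∃ t : ℕ, s = -t := ⟨(-s).toNat, by omega⟩
    rw [zpow_neg, zpow_natCast, ← inv_pow, norm_pow]
    push_cast
    rw [abs_neg, Nat.abs_cast]
    calc _ ≤ Real.exp 1 ^ t := by gcongr
      _ = _ := by rw [← Real.exp_nat_mul]; simp

theorem G4_zpow_int {F : Type*} [Field F] (a : F) (h1 : IsIntegral ℤ a) (h2 : IsIntegral ℤ a⁻¹)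
    (s : ℤ) : IsIntegral ℤ (a ^ s) := by
  rcases le_total 0 s with h | h
  · lift s to ℕ using h
    rw [zpow_natCast]; exact h1.pow _
  · obtain ⟨t, rfl⟩ : ∃ t : ℕ, s = -t := ⟨(-s).toNat, by omega⟩
    rw [zpow_neg, zpow_natCast, ← inv_pow]; exact h2.pow _

theorem G4_log10 : 2 < Real.log 10 ∧ Real.log 10 < 2.311 := by
  have h1 := Real.log_two_gt_d9
  have h2 := Real.log_two_lt_d9
  have h3 : 3 * Real.log 10 < 10 * Real.log 2 := by
    have : Real.log ((10 : ℝ) ^ 3) < Real.log ((2 : ℝ) ^ 10) :=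
      Real.log_lt_log (by norm_num) (by norm_num)
    rw [Real.log_pow, Real.log_pow] at this
    exact_mod_cast this
  have h4 : 3 * Real.log 2 ≤ Real.log 10 := by
    have : Real.log ((2 : ℝ) ^ 3) ≤ Real.log 10 :=
      Real.log_le_log (by norm_num) (by norm_num)
    rw [Real.log_pow] at this
    exact_mod_cast this
  constructor <;> linarith

theorem G4_logα (α : ℝ) (ha1 : 1.9 < α) (ha2 : α < 2) :
    0.64 < Real.log α ∧ Real.log α < 0.694 := by
  have h1 := Real.log_two_gt_d9
  have h2 := Real.log_two_lt_d9
  have h3 : Real.log α < Real.log 2 := Real.log_lt_log (by linarith) ha2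
  have h4 : Real.log (2 / α) ≤ 2 / α - 1 := Real.log_le_sub_one_of_pos (by positivity)
  rw [Real.log_div (by norm_num) (by linarith)] at h4
  have h5 : 2 / α ≤ 2 / 1.9 := by gcongr
  have h6 : (2 : ℝ) / 1.9 ≤ 1.0527 := by norm_num
  constructor <;> linarith

set_option maxHeartbeats 1000000 in
theorem G4_large_F {F : Type*} [Field F] [NumberField F] (σ₀ : F →ₐ[ℚ] ℂ) (a : F) (α : ℝ)
    (hσa : σ₀ a = (α : ℂ)) (k : ℕ) (hk : 900 < k) (haF : a ^ k * (2 - a) = 1)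
    (ha1 : 1.9 < α) (ha2 : α < 2) (hden : 1.8 ≤ (k + 1) * α - 2 * k)
    (hden2 : (k + 1) * α - 2 * k ≤ 2)
    (G N M A : ℕ) (hG : 449 ≤ G) (hkG : k + 1 ≤ 3 * G) (hD : Module.finrank ℚ F ≤ 3 * G)
    (hN : 10 ^ 41 * G ^ 18 ≤ N) (hlogN : Real.log N ≤ G) (hA1 : 1 ≤ A)
    (hA : (A : ℝ) ≤ Real.exp k) (hMN : M ≤ N) (hNM : N ≤ 4 * M) (Λ : ℝ)
    (hΛ : Λ = N * Real.log α - M * Real.log 10 +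
      Real.log (9 * (α - 1) / (A * ((k + 1) * α - 2 * k))))
    (hΛN : |Λ| ≤ Real.exp (-(N : ℝ) / 3)) : False := by
  obtain ⟨X, hX⟩ : ∃ x : ℕ, x = 10 ^ 13 * G ^ 6 := ⟨_, rfl⟩
  have hG1 : 1 ≤ G := by omega
  have hXpos : 0 < X := by rw [hX]; positivity
  have hXr : (0 : ℝ) < X := by exact_mod_cast hXpos
  have hXk : 1000 * k ≤ X := by
    have h1 : G ^ 1 ≤ G ^ 6 := Nat.pow_le_pow_right hG1 (by norm_num)
    rw [pow_one] at h1
    rw [hX]; omega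
  obtain ⟨l10a, l10b⟩ := G4_log10
  obtain ⟨lαa, lαb⟩ := G4_logα α ha1 ha2
  obtain ⟨N', M', hM0, hMX, hdir⟩ :=
    Real.exists_int_int_abs_mul_sub_le (Real.log 10 / Real.log α) hXpos
  lift M' to ℕ using hM0.le
  have hM1 : 1 ≤ M' := by exact_mod_cast hM0
  have hMX' : M' ≤ X := by exact_mod_cast hMX
  obtain ⟨η, hηd⟩ : ∃ η : ℝ, η = N' * Real.log α - M' * Real.log 10 := ⟨_, rfl⟩
  have hlαp : 0 < Real.log α := by linarith
  have hηX : |η| ≤ 1 / X := by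
    have h1 : η = -(Real.log α * ((M' : ℤ) * (Real.log 10 / Real.log α) - N')) := by
      rw [hηd]; push_cast; field_simp; ring
    rw [h1, abs_neg, abs_mul, abs_of_pos hlαp]
    calc _ ≤ 1 * (1 / ((X : ℝ) + 1)) := by gcongr; linarith
      _ ≤ 1 / X := by rw [one_mul]; gcongr; linarith
  have hη1 : |η| ≤ 1 / 2 := hηX.trans (by
    have : 2 ≤ X := by omega
    have : (2 : ℝ) ≤ X := by exact_mod_cast this
    gcongr)
  have hM1r : (1 : ℝ) ≤ M' := by exact_mod_cast hM1
  have hηab := abs_le.1 hη1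
  have hN'0 : (0 : ℝ) < N' := by
    by_contra! h
    have : (N' : ℝ) * Real.log α ≤ 0 := mul_nonpos_of_nonpos_of_nonneg h hlαp.le
    have h2 : 1 * 2 ≤ M' * Real.log 10 := by gcongr
    linarith [hηab.1]
  have hN'0' : 0 < N' := by exact_mod_cast hN'0
  lift N' to ℕ using hN'0'.le
  simp only [Int.cast_natCast] at hηd hN'0 hdir
  have hN'b : (N' : ℝ) ≤ 5 * M' := by
    have h1 : (N' : ℝ) * 0.64 ≤ N' * Real.log α := by gcongr
    have h2 : M' * Real.log 10 ≤ M' * 2.311 := by gcongr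
    linarith [hηab.2]
  -- field facts
  have hint := G4_int k a haF
  have hinv := G4_int_inv k (by omega) a haF
  have ha0 : a ≠ 0 := by
    rintro rfl
    rw [zero_pow (by omega)] at haF; simp at haF
  have hconj : ∀ σ : F →ₐ[ℚ] ℂ, ‖σ a‖ ≤ Real.exp 1 ∧ ‖(σ a)⁻¹‖ ≤ Real.exp 1 := by
    intro σ
    apply G4_conj k (by omega)
    have := congrArg σ haF
    rw [map_mul, map_pow, map_sub, map_one, map_ofNat] at this
    exact this
  have hnatint : ∀ j : ℕ, IsIntegral ℤ (j : F) := by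
    intro j
    have := isIntegral_algebraMap (R := ℤ) (A := F) (x := j)
    simpa using this
  have hαp : 0 < α := by linarith
  have hη : η ≠ 0 := by
    intro h0
    have h1 : (N' : ℝ) * Real.log α = M' * Real.log 10 := by linarith
    rw [← Real.log_pow, ← Real.log_pow] at h1
    have h2 : α ^ N' = 10 ^ M' := Real.log_injOn_pos (Set.mem_Ioi.2 (by positivity))
      (Set.mem_Ioi.2 (by positivity)) h1
    have h3 : a ^ N' = (10 : F) ^ M' := by
      apply σ₀.injective
      change σ₀ (a ^ N') = σ₀ ((10 : F) ^ M')
      rw [map_pow, map_pow, hσa]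
      have : σ₀ 10 = 10 := map_ofNat σ₀ 10
      rw [this]
      exact_mod_cast congrArg (fun x : ℝ => (x : ℂ)) h2
    have h4 : IsIntegral ℤ ((10 : F) ^ M')⁻¹ := by
      rw [← h3, ← inv_pow]; exact hinv.pow _
    have h5 : IsIntegral ℤ ((10 : F)⁻¹) := by
      have : (10 : F)⁻¹ = 10 ^ (M' - 1) * ((10 : F) ^ M')⁻¹ := by
        obtain ⟨j, rfl⟩ : ∃ j, M' = j + 1 := ⟨M' - 1, by omega⟩
        rw [Nat.add_sub_cancel]
        field_simp
        ring
      rw [this]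
      exact (by simpa using (hnatint 10).pow (M' - 1) : IsIntegral ℤ ((10 : F) ^ (M' - 1))).mul h4
    have h6 : IsIntegral ℤ ((10 : ℚ)⁻¹) := by
      have : (10 : F)⁻¹ = algebraMap ℚ F (10 : ℚ)⁻¹ := by simp
      rw [this] at h5
      exact (isIntegral_algebraMap_iff (algebraMap ℚ F).injective).1 h5
    obtain ⟨y, hy⟩ := IsIntegrallyClosed.isIntegral_iff.1 h6
    have h7 : (y : ℚ) * 10 = 1 := by
      have : (y : ℚ) = (10 : ℚ)⁻¹ := by simpa using hy
      rw [this]; norm_num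
    have h8 : y * 10 = 1 := by exact_mod_cast h7
    omega
  -- division
  obtain ⟨q, hq⟩ : ∃ q : ℕ, q = M / M' := ⟨_, rfl⟩
  obtain ⟨t, ht⟩ : ∃ t : ℕ, t = M % M' := ⟨_, rfl⟩
  have htM : t < M' := by rw [ht]; exact Nat.mod_lt _ hM1
  have hMqt : M' * q + t = M := by rw [hq, ht]; exact Nat.div_add_mod M M'
  obtain ⟨s, hs⟩ : ∃ s : ℤ, s = N - q * N' := ⟨_, rfl⟩
  have hMqtr : (M' : ℝ) * q + t = M := by exact_mod_cast hMqt
  have hsr : (s : ℝ) = N - q * N' := by rw [hs]; push_cast; ring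
  obtain ⟨dn, hdn⟩ : ∃ x : ℝ, x = (k + 1) * α - 2 * k := ⟨_, rfl⟩
  rw [← hdn] at hden hden2 hΛ
  obtain ⟨β, hβ⟩ : ∃ x : ℝ, x = 9 * (α - 1) / (A * dn) := ⟨_, rfl⟩
  rw [← hβ] at hΛ
  have hA1r : (1 : ℝ) ≤ A := by exact_mod_cast hA1
  have hdnp : 0 < dn := by linarith
  have hβp : 0 < β := by
    rw [hβ]; apply div_pos (by linarith); positivity
  have hΛq : Λ - q * η = s * Real.log α - t * Real.log 10 + Real.log β := by
    rw [hΛ, hηd, hsr, ← hMqtr]; ring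
  have hkr : (901 : ℝ) ≤ k := by exact_mod_cast hk
  have hβlog : |Real.log β| ≤ k := by
    rw [abs_le]
    constructor
    · rw [Real.le_log_iff_exp_le hβp, hβ, le_div_iff₀ (by positivity), Real.exp_neg]
      have : (Real.exp k)⁻¹ * A ≤ 1 := by
        rw [inv_mul_le_one₀ (Real.exp_pos _)]; exact hA
      calc (Real.exp k)⁻¹ * (A * dn) = ((Real.exp k)⁻¹ * A) * dn := by ring
        _ ≤ 1 * 2 := by gcongr
        _ ≤ _ := by linarith
    · rw [Real.log_le_iff_le_exp hβp]
      have h1 : β ≤ 9 := by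
        rw [hβ, div_le_iff₀ (by positivity)]
        have h2 : 1 * 1 ≤ (A : ℝ) * dn := by gcongr; linarith
        linarith
      have := Real.add_one_le_exp (k : ℝ)
      linarith
  have hNp : (0 : ℝ) ≤ N := by positivity
  have hΛ1 : |Λ| ≤ 1 := hΛN.trans (by rw [Real.exp_le_one_iff]; linarith)
  have htr : (t : ℝ) ≤ X := by
    have : t ≤ X := by omega
    exact_mod_cast this
  have hXkr : 1000 * (k : ℝ) ≤ X := by exact_mod_cast hXk
  obtain ⟨H₂, hH₂⟩ : ∃ x : ℕ, x = 2 * (q / X) + 20 * X := ⟨_, rfl⟩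
  have hqη : |q * η| ≤ (q / X : ℕ) + 1 := by
    rw [abs_mul, Nat.abs_cast]
    have h1 : (q : ℝ) * |η| ≤ q * (1 / X) := by gcongr
    have h2 : (q : ℝ) * (1 / X) ≤ (q / X : ℕ) + 1 := by
      rw [mul_one_div, div_le_iff₀ hXr]
      have h3 := Nat.div_add_mod q X
      have h4 := Nat.mod_lt q hXpos
      have h5 : q ≤ (q / X + 1) * X := by nlinarith only [h3, h4]
      exact_mod_cast h5
    linarith
  have hsb : |(s : ℝ)| + 5 ≤ H₂ := by
    have h1 : s * Real.log α = Λ - q * η + t * Real.log 10 - Real.log β := by linarith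
    have h2 : |(s : ℝ)| * Real.log α ≤ 1 + ((q / X : ℕ) + 1) + 3 * X + k := by
      have h3 : |(s : ℝ)| * Real.log α = |Λ - q * η + t * Real.log 10 - Real.log β| := by
        rw [← h1, abs_mul, abs_of_pos hlαp]
      rw [h3]
      have h4 : 0 ≤ t * Real.log 10 := by positivity
      have h5 : t * Real.log 10 ≤ 3 * X := by
        calc t * Real.log 10 ≤ X * 3 := by gcongr; linarith
          _ = _ := by ring
      have := abs_le.1 hΛ1
      have := abs_le.1 hqη
      have := abs_le.1 hβlog
      rw [abs_le]
      constructor <;> linarith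
    rw [hH₂]
    push_cast
    have h6 : |(s : ℝ)| * 0.64 ≤ |(s : ℝ)| * Real.log α := by gcongr
    have h7 : (0 : ℝ) ≤ ((q / X : ℕ) : ℝ) := by positivity
    linarith
  have hH₂X : 2 * (k : ℝ) + 3 * t ≤ H₂ := by
    rw [hH₂]
    push_cast
    have h7 : (0 : ℝ) ≤ ((q / X : ℕ) : ℝ) := by positivity
    linarith
  -- the numbers
  obtain ⟨b, hb⟩ : ∃ b : F, b = (k + 1 : ℕ) * a - (2 * k : ℕ) := ⟨_, rfl⟩
  have hσb : σ₀ b = (dn : ℂ) := by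
    rw [hb, hdn, map_sub, map_mul, map_natCast, map_natCast, hσa]; push_cast; ring
  have hb0 : b ≠ 0 := by
    intro h
    rw [h, map_zero] at hσb
    have : dn = 0 := by exact_mod_cast hσb.symm
    linarith
  have ha10 : a - 1 ≠ 0 := by
    intro h
    have h2 : σ₀ (a - 1) = ((α - 1 : ℝ) : ℂ) := by rw [map_sub, hσa]; simp
    rw [h, map_zero] at h2
    have : α - 1 = 0 := by exact_mod_cast h2.symm
    linarith
  have hA0 : (A : F) ≠ 0 := by exact_mod_cast (by omega : A ≠ 0)
  have h10 : ((10 : ℕ) : F) ≠ 0 := by norm_num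
  have he := Real.exp_one_gt_d9
  have he2 := Real.exp_one_lt_d9
  have h10e : ∀ j : ℕ, (10 : ℝ) ^ j ≤ Real.exp (3 * j) := by
    intro j
    have h1 : (10 : ℝ) ≤ Real.exp 3 := by
      have : Real.exp 3 = Real.exp 1 ^ 3 := by rw [← Real.exp_nat_mul]; norm_num
      rw [this]
      calc (10 : ℝ) ≤ 2.7 ^ 3 := by norm_num
        _ ≤ _ := by gcongr; linarith
    calc (10 : ℝ) ^ j ≤ Real.exp 3 ^ j := by gcongr
      _ = _ := by rw [← Real.exp_nat_mul]; ring_nf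
  refine G4_apply G hG hD σ₀ (a ^ N') (((10 : ℕ) : F) ^ M') (((9 : ℕ) : F) * (a - 1) * a ^ s)
    ((A : F) * b * ((10 : ℕ) : F) ^ t) (hint.pow _) ((hnatint 10).pow _)
    (((hnatint 9).mul (hint.sub isIntegral_one)).mul (G4_zpow_int a hint hinv s))
    (((hnatint A).mul (hb ▸ ((hnatint (k + 1)).mul hint).sub (hnatint (2 * k)))).mul
      ((hnatint 10).pow _)) (pow_ne_zero _ ha0) (pow_ne_zero _ h10)
    (mul_ne_zero (mul_ne_zero (by norm_num) ha10) (zpow_ne_zero _ ha0))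
    (mul_ne_zero (mul_ne_zero hA0 hb0) (pow_ne_zero _ h10)) η Λ hη q ?_ ?_ N M' X (5 * M') H₂ hX
    hN hlogN hM1 hMX' ?_ ?_ hηX hΛN rfl hH₂ ?_ ?_ ?_ ?_
  · rw [map_div₀, map_pow, map_pow, map_natCast, hσa, hηd, Real.exp_sub, ← Real.log_pow,
      ← Real.log_pow, Real.exp_log (by positivity), Real.exp_log (by positivity)]
    push_cast; rfl
  · rw [hΛq, Real.exp_add, Real.exp_sub, Real.exp_log hβp, ← Real.log_pow, ← Real.log_zpow,
      Real.exp_log (by positivity), Real.exp_log (by positivity)]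
    rw [map_div₀, map_mul, map_mul, map_mul, map_mul, map_zpow₀, map_pow, map_natCast, map_natCast,
      map_natCast, map_sub, hσa, hσb, map_one, hβ]
    push_cast
    have h1 : (A : ℂ) ≠ 0 := by exact_mod_cast (by omega : A ≠ 0)
    have h2 : (dn : ℂ) ≠ 0 := by exact_mod_cast hdnp.ne'
    field_simp
  · nlinarith only [hMqt, hMN]
  · have h1 : M < (q + 1) * M' := by nlinarith only [hMqt, htM]
    omega
  · intro σ
    rw [map_pow, norm_pow]
    push_cast
    calc _ ≤ Real.exp 1 ^ N' := by gcongr; exact (hconj σ).1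
      _ = Real.exp N' := by rw [← Real.exp_nat_mul]; simp
      _ ≤ _ := Real.exp_le_exp.2 hN'b
  · intro σ
    rw [map_pow, map_natCast, norm_pow]
    push_cast
    rw [Complex.norm_ofNat]
    refine (h10e M').trans (Real.exp_le_exp.2 (by linarith))
  · intro σ
    rw [map_mul, map_mul, map_zpow₀, map_natCast, map_sub, map_one, norm_mul, norm_mul]
    have h1 := G4_zpow_norm _ (hconj σ).1 (hconj σ).2 s
    have h2 : ‖σ a - 1‖ ≤ Real.exp 1 + 1 := by
      have := norm_sub_le (σ a) 1
      rw [norm_one] at this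
      linarith [(hconj σ).1]
    have h3 : 9 * (Real.exp 1 + 1) ≤ Real.exp 5 := by
      have : Real.exp 5 = Real.exp 1 ^ 5 := by rw [← Real.exp_nat_mul]; norm_num
      rw [this]
      calc 9 * (Real.exp 1 + 1) ≤ 2.7 ^ 5 := by norm_num; linarith
        _ ≤ _ := by gcongr; linarith
    have h4 : ‖((9 : ℕ) : ℂ)‖ = 9 := by simp
    rw [h4]
    calc _ ≤ 9 * (Real.exp 1 + 1) * Real.exp |(s : ℝ)| := by gcongr
      _ ≤ Real.exp 5 * Real.exp |(s : ℝ)| := by gcongr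
      _ = Real.exp (|(s : ℝ)| + 5) := by rw [← Real.exp_add, add_comm]
      _ ≤ _ := Real.exp_le_exp.2 hsb
  · intro σ
    rw [map_mul, map_mul, map_natCast, map_pow, map_natCast, norm_mul, norm_mul, norm_pow]
    have h1 : ‖σ b‖ ≤ Real.exp k := by
      rw [hb, map_sub, map_mul, map_natCast, map_natCast]
      have h5 := norm_sub_le (((k + 1 : ℕ) : ℂ) * σ a) ((2 * k : ℕ) : ℂ)
      rw [norm_mul, Complex.norm_natCast, Complex.norm_natCast] at h5
      have h6 : ((k + 1 : ℕ) : ℝ) * ‖σ a‖ ≤ ((k + 1 : ℕ) : ℝ) * 3 := by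
        gcongr; linarith [(hconj σ).1]
      push_cast at h5 h6 ⊢
      have h7 := Real.quadratic_le_exp_of_nonneg (show (0 : ℝ) ≤ k by linarith)
      nlinarith only [h5, h6, h7, hkr]
    have h4 : ‖((10 : ℕ) : ℂ)‖ = 10 := by simp
    rw [h4, Complex.norm_natCast]
    calc _ ≤ Real.exp k * Real.exp k * Real.exp (3 * t) := by
          gcongr; exact h10e t
      _ = Real.exp (2 * k + 3 * t) := by rw [← Real.exp_add, ← Real.exp_add]; ring_nf
      _ ≤ _ := Real.exp_le_exp.2 hH₂X

theorem G4_root (k : ℕ) (hk : 900 < k) :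
    ∃ α : ℝ, 1.9 < α ∧ α < 2 ∧ α ^ k * (2 - α) = 1 ∧ (k : ℝ) * (2 - α) ≤ 1 / 100 := by
  have h100 : ∀ j : ℕ, 900 ≤ j → (100 : ℝ) * j ≤ 1.9 ^ j := by
    intro j hj
    induction j, hj using Nat.le_induction with
    | base =>
      have h1 : (1.9 : ℝ) ^ 20 ≤ 1.9 ^ 900 := pow_le_pow_right₀ (by norm_num) (by norm_num)
      have h2 : (100 : ℝ) * (900 : ℕ) ≤ 1.9 ^ 20 := by norm_num
      exact h2.trans h1
    | succ j hj ih =>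
      rw [pow_succ]
      have : (900 : ℝ) ≤ j := by exact_mod_cast hj
      push_cast
      linarith
  have hkr : (901 : ℝ) ≤ k := by exact_mod_cast hk
  have h1 := h100 k hk.le
  have hcont : ContinuousOn (fun x : ℝ => x ^ k * (2 - x)) (Set.Icc 1.9 2) := by fun_prop
  have hivt := intermediate_value_Icc' (by norm_num : (1.9 : ℝ) ≤ 2) hcont
  have hmem : (1 : ℝ) ∈ Set.Icc ((2 : ℝ) ^ k * (2 - 2)) ((1.9 : ℝ) ^ k * (2 - 1.9)) := by
    constructor
    · norm_num
    · linarith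
  obtain ⟨α, ⟨ha1, ha2⟩, ha⟩ := hivt hmem
  simp only at ha
  have h2 : α ≠ 2 := by rintro rfl; simp at ha
  have h19 : α ≠ 1.9 := by
    rintro rfl
    linarith
  have hb1 : 1.9 < α := lt_of_le_of_ne ha1 (Ne.symm h19)
  have hb2 : α < 2 := lt_of_le_of_ne ha2 h2
  refine ⟨α, hb1, hb2, ha, ?_⟩
  have h3 : (1.9 : ℝ) ^ k ≤ α ^ k := pow_le_pow_left₀ (by norm_num) ha1 k
  have h4 : (100 * k) * (2 - α) ≤ 1 := by
    rw [← ha]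
    apply mul_le_mul_of_nonneg_right _ (by linarith)
    linarith
  linarith

theorem G4_rec2 (k : ℕ) (F : ℤ → ℤ)
    (hFrec : ∀ n : ℤ, 2 ≤ n → F n = ∑ i ∈ Finset.range k, F (n - 1 - (i : ℤ)))
    (n : ℤ) (hn : 2 ≤ n) : F (n + 1) = 2 * F n - F (n - k) := by
  have h1 := hFrec (n + 1) (by omega)
  have h2 := hFrec n hn
  have h3 := Finset.sum_range_succ (fun i : ℕ => F (n - (i : ℤ))) k
  rw [Finset.sum_range_succ'] at h3
  have h4 : ∑ i ∈ Finset.range k, F (n - ((i + 1 : ℕ) : ℤ)) = F n := by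
    rw [h2]; refine Finset.sum_congr rfl fun i _ => ?_
    congr 1; push_cast; ring
  have h5 : ∑ i ∈ Finset.range k, F (n - (i : ℤ)) = F (n + 1) := by
    rw [h1]; refine Finset.sum_congr rfl fun i _ => ?_
    congr 1; ring
  rw [h4, h5] at h3
  simp at h3
  linarith

theorem G4_two (k : ℕ) (hk : 900 < k) (F : ℤ → ℤ)
    (hF0 : ∀ n : ℤ, 2 - (k : ℤ) ≤ n → n ≤ 0 → F n = 0) (hF1 : F 1 = 1)
    (hFrec : ∀ n : ℤ, 2 ≤ n → F n = ∑ i ∈ Finset.range k, F (n - 1 - (i : ℤ))) : F 2 = 1 := by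
  rw [hFrec 2 le_rfl]
  rw [Finset.sum_eq_single 0]
  · simpa using hF1
  · intro i hi h0
    apply hF0
    · have := Finset.mem_range.1 hi; omega
    · omega
  · intro h; exact absurd (Finset.mem_range.2 (by omega)) h

theorem G4_bounds (k : ℕ) (hk : 900 < k) (F : ℤ → ℤ)
    (hF0 : ∀ n : ℤ, 2 - (k : ℤ) ≤ n → n ≤ 0 → F n = 0) (hF1 : F 1 = 1)
    (hFrec : ∀ n : ℤ, 2 ≤ n → F n = ∑ i ∈ Finset.range k, F (n - 1 - (i : ℤ)))
    (n : ℕ) : 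
    (1 - (n : ℝ) * 2⁻¹ ^ k ≤ F (n + 2) * 2⁻¹ ^ n) ∧ (F (n + 2) * 2⁻¹ ^ n ≤ (1 : ℝ)) := by
  have hF2 := G4_two k hk F hF0 hF1 hFrec
  have hnn : ∀ m : ℕ, ∀ j : ℤ, 2 - (k : ℤ) ≤ j → j ≤ m + 1 → 0 ≤ F j := by
    intro m
    induction m with
    | zero =>
      intro j h1 h2
      rcases le_or_gt j 0 with h | h
      · rw [hF0 j h1 h]
      · have : j = 1 := by omega
        rw [this, hF1]; norm_num
    | succ m ih =>
      intro j h1 h2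
      rcases le_or_gt j (m + 1) with h | h
      · exact ih j h1 h
      · rw [hFrec j (by omega)]
        refine Finset.sum_nonneg fun i hi => ?_
        have := Finset.mem_range.1 hi
        exact ih _ (by omega) (by omega)
  have hub : ∀ m : ℕ, F (m + 2) ≤ 2 ^ m := by
    intro m
    induction m with
    | zero => simp [hF2]
    | succ m ih =>
      have h1 := G4_rec2 k F hFrec (m + 2) (by omega)
      have h2 := hnn (m + 2) (m + 2 - k) (by omega) (by omega)
      have h3 : ((m + 1 : ℕ) : ℤ) + 2 = m + 2 + 1 := by push_cast; ring
      rw [h3, h1, pow_succ]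
      linarith
  constructor
  · induction n with
    | zero => simp [hF2]
    | succ m ih =>
      have h1 := G4_rec2 k F hFrec (m + 2) (by omega)
      have h3 : ((m + 1 : ℕ) : ℤ) + 2 = m + 2 + 1 := by push_cast; ring
      rw [h3, h1]
      have h4 : (F (m + 2 - k) : ℝ) * 2⁻¹ ^ (m + 1) ≤ 2⁻¹ ^ k := by
        rcases le_or_gt (m + 2 - k : ℤ) 0 with h | h
        · rw [hF0 _ (by omega) h]; simp
        · rcases eq_or_lt_of_le (show 1 ≤ (m + 2 - k : ℤ) by omega) with h5 | h5
          · rw [← h5, hF1]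
            have : m + 1 = k := by omega
            rw [this]; simp
          · obtain ⟨p, hp⟩ : ∃ p : ℕ, m = p + k := ⟨m - k, by omega⟩
            have h6 := hub p
            have h7 : (m + 2 - k : ℤ) = p + 2 := by omega
            rw [h7]
            have h8 : (F (p + 2) : ℝ) ≤ 2 ^ p := by exact_mod_cast h6
            calc (F (p + 2) : ℝ) * 2⁻¹ ^ (m + 1) ≤ 2 ^ p * 2⁻¹ ^ (m + 1) := by gcongr
              _ = 2 ^ p * 2⁻¹ ^ p * 2⁻¹ ^ k * 2⁻¹ := by rw [hp]; ring
              _ = 2⁻¹ ^ k * 2⁻¹ := by rw [← mul_pow]; norm_num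
              _ ≤ _ := by
                have : (0 : ℝ) < 2⁻¹ ^ k := by positivity
                linarith
      push_cast
      have h9 : (2 * (F (m + 2) : ℝ) - F (m + 2 - k)) * 2⁻¹ ^ (m + 1) =
        F (m + 2) * 2⁻¹ ^ m - F (m + 2 - k) * 2⁻¹ ^ (m + 1) := by ring
      rw [h9]
      linarith
  · have h8 : (F (n + 2) : ℝ) ≤ 2 ^ n := by exact_mod_cast hub n
    calc (F (n + 2) : ℝ) * 2⁻¹ ^ n ≤ 2 ^ n * 2⁻¹ ^ n := by gcongr
      _ = 1 := by rw [← mul_pow]; norm_num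

theorem G4_binet (k : ℕ) (hk : 900 < k) (F : ℤ → ℤ)
    (hF0 : ∀ n : ℤ, 2 - (k : ℤ) ≤ n → n ≤ 0 → F n = 0) (hF1 : F 1 = 1)
    (hFrec : ∀ n : ℤ, 2 ≤ n → F n = ∑ i ∈ Finset.range k, F (n - 1 - (i : ℤ)))
    (α g : ℝ) (ha1 : 1.9 < α) (ha2 : α < 2) (ha : α ^ k * (2 - α) = 1)
    (hg : g * ((k + 1) * α - 2 * k) = α - 1) (hg0 : 0 ≤ g) (hg1 : g ≤ 1)
    (n : ℕ) : |(F (n + 1) : ℝ) - g * α ^ n| ≤ 1 := by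
  have hF2 := G4_two k hk F hF0 hF1 hFrec
  have hα0 : α ≠ 0 := by linarith
  have hαp : 0 < α := by linarith
  have hH : ∀ m : ℕ, (F (m + 2) : ℝ) - ∑ i ∈ Finset.range k, α ^ i * (2 - α) * F (m + 1 - i) =
      (α - 1) * α ^ m := by
    intro m
    induction m with
    | zero =>
      rw [Finset.sum_eq_single 0]
      · simp [hF2, hF1]; ring
      · intro i hi h0
        have := Finset.mem_range.1 hi
        rw [hF0 _ (by omega) (by omega)]; simp
      · intro h; exact absurd (Finset.mem_range.2 (by omega)) h
    | succ m ih =>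
      have h1 := G4_rec2 k F hFrec (m + 2) (by omega)
      have h3 : ((m + 1 : ℕ) : ℤ) + 2 = m + 2 + 1 := by push_cast; ring
      have h4 := Finset.sum_range_succ
        (fun i : ℕ => α ^ i * (2 - α) * (F (m + 2 - i) : ℝ)) k
      rw [Finset.sum_range_succ'] at h4
      have h5 : ∑ i ∈ Finset.range k, α ^ (i + 1) * (2 - α) *
          (F (m + 2 - ((i + 1 : ℕ) : ℤ)) : ℝ) =
          α * ∑ i ∈ Finset.range k, α ^ i * (2 - α) * F (m + 1 - i) := by
        rw [Finset.mul_sum]; refine Finset.sum_congr rfl fun i _ => ?_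
        have : (m + 2 - ((i + 1 : ℕ) : ℤ)) = m + 1 - i := by push_cast; ring
        rw [this]; ring
      rw [h5, ha] at h4
      have h6 : ∑ i ∈ Finset.range k, α ^ i * (2 - α) * (F (((m + 1 : ℕ) : ℤ) + 1 - i) : ℝ) =
          ∑ i ∈ Finset.range k, α ^ i * (2 - α) * (F (m + 2 - i) : ℝ) := by
        refine Finset.sum_congr rfl fun i _ => ?_
        have : (((m + 1 : ℕ) : ℤ) + 1 - i) = m + 2 - i := by push_cast; ring
        rw [this]
      rw [h6, h3, h1]
      push_cast
      simp only [pow_zero, Nat.cast_zero, sub_zero, one_mul] at h4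
      rw [pow_succ]
      linear_combination α * ih + h4
  have hsum1 : ∑ i ∈ Finset.range k, α ^ i * (2 - α) = 1 := by
    rw [← Finset.sum_mul, geom_sum_eq (by linarith)]
    have : α - 1 ≠ 0 := by linarith
    field_simp
    linear_combination ha
  have hmain : ∀ m : ℕ, ∀ j : ℤ, 2 - (k : ℤ) ≤ j → j ≤ m + 1 →
      |(F j : ℝ) - g * α ^ (j - 1)| ≤ 1 := by
    intro m
    induction m with
    | zero =>
      intro j h1 h2
      rcases le_or_gt j 0 with h | h
      · rw [hF0 j h1 h]
        have h3 : α ^ (j - 1) ≤ 1 := zpow_le_one_of_nonpos₀ (by linarith) (by omega)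
        have h4 : 0 < α ^ (j - 1) := zpow_pos hαp _
        rw [abs_le]
        push_cast
        constructor <;> nlinarith
      · have : j = 1 := by omega
        rw [this, hF1]; simp
        rw [abs_le]; constructor <;> linarith
    | succ m ih =>
      intro j h1 h2
      rcases le_or_gt j (m + 1) with h | h
      · exact ih j h1 h
      · have hj : j = m + 2 := by push_cast at h2; omega
        have h3 := hH m
        have h4 : (F j : ℝ) - g * α ^ (j - 1) = ∑ i ∈ Finset.range k, α ^ i * (2 - α) *
            ((F (m + 1 - i) : ℝ) - g * α ^ ((m + 1 - i : ℤ) - 1)) := by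
          have h5 : ∀ i : ℕ, α ^ i * (2 - α) *
            ((F (m + 1 - i) : ℝ) - g * α ^ ((m + 1 - i : ℤ) - 1)) =
              α ^ i * (2 - α) * F (m + 1 - i) - g * (2 - α) * α ^ m := by
            intro i
            have : α ^ ((m + 1 - i : ℤ) - 1) * α ^ i = α ^ m := by
              rw [← zpow_natCast, ← zpow_add₀ hα0, ← zpow_natCast]; congr 1; ring
            rw [← this]; ring
          simp only [h5]
          rw [Finset.sum_sub_distrib, Finset.sum_const, Finset.card_range, nsmul_eq_mul]
          have h6 : α ^ (j - 1) = α ^ m * α := by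
            rw [hj, ← pow_succ, ← zpow_natCast]; congr 1; push_cast; ring
          rw [h6, hj]
          linear_combination h3 - α ^ m * hg
        rw [h4]
        refine (Finset.abs_sum_le_sum_abs _ _).trans ?_
        rw [← hsum1]
        refine Finset.sum_le_sum fun i hi => ?_
        have := Finset.mem_range.1 hi
        have hnn : 0 ≤ α ^ i * (2 - α) := mul_nonneg (by positivity) (by linarith)
        rw [abs_mul, abs_of_nonneg hnn]
        exact mul_le_of_le_one_right hnn (ih _ (by omega) (by omega))
  have := hmain n (n + 1) (by omega) le_rfl
  simpa using this

open IntermediateField in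
theorem G4_large (α : ℝ) (k : ℕ) (hk : 900 < k) (ha : α ^ k * (2 - α) = 1)
    (ha1 : 1.9 < α) (ha2 : α < 2) (hden : 1.8 ≤ (k + 1) * α - 2 * k)
    (hden2 : (k + 1) * α - 2 * k ≤ 2)
    (G N M A : ℕ) (hG : 449 ≤ G) (hkG : k + 1 ≤ 3 * G)
    (hN : 10 ^ 41 * G ^ 18 ≤ N) (hlogN : Real.log N ≤ G) (hA1 : 1 ≤ A)
    (hA : (A : ℝ) ≤ Real.exp k) (hMN : M ≤ N) (hNM : N ≤ 4 * M) (Λ : ℝ)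
    (hΛ : Λ = N * Real.log α - M * Real.log 10 +
      Real.log (9 * (α - 1) / (A * ((k + 1) * α - 2 * k))))
    (hΛN : |Λ| ≤ Real.exp (-(N : ℝ) / 3)) : False := by
  have hroot : Polynomial.aeval α (Polynomial.X ^ (k + 1) +
      (Polynomial.C (-2) * Polynomial.X ^ k + Polynomial.C 1) : Polynomial ℚ) = 0 := by
    simp
    linear_combination -ha
  have hint : IsIntegral ℚ α := ⟨_, (G4_monic k (R := ℚ)).1, by simpa using hroot⟩
  have : FiniteDimensional ℚ ℚ⟮α⟯ := adjoin.finiteDimensional hint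
  have : NumberField ℚ⟮α⟯ := { to_charZero := inferInstance, to_finiteDimensional := inferInstance }
  have hdeg : Module.finrank ℚ ℚ⟮α⟯ ≤ 3 * G := by
    rw [adjoin.finrank hint]
    refine le_trans ?_ hkG
    have h1 := minpoly.min ℚ α (G4_monic k (R := ℚ)).1 hroot
    have h2 := Polynomial.natDegree_le_natDegree h1
    rwa [(G4_monic k (R := ℚ)).2] at h2
  have hgen : ((AdjoinSimple.gen ℚ α : ℚ⟮α⟯) : ℝ) = α := AdjoinSimple.coe_gen ℚ α
  refine G4_large_F (F := ℚ⟮α⟯)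
    ((Complex.ofRealAm.restrictScalars ℚ).comp (IntermediateField.val ℚ⟮α⟯))
    (AdjoinSimple.gen ℚ α) α ?_ k hk ?_ ha1 ha2 hden hden2 G N M A hG hkG hdeg hN hlogN hA1 hA
    hMN hNM Λ hΛ hΛN
  · exact congrArg (fun y : ℝ => (y : ℂ)) hgen
  · apply Subtype.ext
    push_cast
    rw [hgen]
    exact_mod_cast ha

theorem G4_pow_bound (G : ℕ) (hG : 449 ≤ G) : 10 ^ 41 * G ^ 18 ≤ 2 ^ G := by
  induction G, hG using Nat.le_induction with
  | base =>
    have h : (2 : ℕ) ^ 449 = 2 ^ 200 * (2 ^ 200 * 2 ^ 49) := by rw [← pow_add, ← pow_add]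
    rw [h]
    norm_num
  | succ G hG ih =>
    have h1 : (449 * (G + 1)) ^ 18 ≤ (450 * G) ^ 18 := Nat.pow_le_pow_left (by omega) _
    rw [mul_pow, mul_pow] at h1
    have h2 : 450 ^ 18 ≤ 2 * 449 ^ 18 := by norm_num
    have h3 : 449 ^ 18 * (G + 1) ^ 18 ≤ 449 ^ 18 * (2 * G ^ 18) :=
      calc _ ≤ 450 ^ 18 * G ^ 18 := h1
        _ ≤ (2 * 449 ^ 18) * G ^ 18 := Nat.mul_le_mul_right _ h2
        _ = _ := by ring
    have h4 : (G + 1) ^ 18 ≤ 2 * G ^ 18 := Nat.le_of_mul_le_mul_left h3 (by positivity)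
    rw [pow_succ 2]
    calc 10 ^ 41 * (G + 1) ^ 18 ≤ 10 ^ 41 * (2 * G ^ 18) := Nat.mul_le_mul_left _ h4
      _ = 10 ^ 41 * G ^ 18 * 2 := by ring
      _ ≤ _ := Nat.mul_le_mul_right _ ih

set_option maxHeartbeats 1000000 in
theorem G4_case_large (k : ℕ) (hk : 900 < k) (F : ℤ → ℤ)
    (hF0 : ∀ n : ℤ, 2 - (k : ℤ) ≤ n → n ≤ 0 → F n = 0) (hF1 : F 1 = 1)
    (hFrec : ∀ n : ℤ, 2 ≤ n → F n = ∑ i ∈ Finset.range k, F (n - 1 - (i : ℤ)))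
    (p ℓ M A : ℕ) (c : ℝ) (T : ℝ) (hT : T = Real.exp (k / 2 * Real.log 2))
    (hℓ : 1 ≤ ℓ) (hℓT : (10 : ℝ) ^ ℓ ≤ T) (hℓM : ℓ + 1 ≤ M)
    (hA1 : 9 / 10 * (10 : ℝ) ^ ℓ ≤ A) (hA2 : (A : ℝ) ≤ 9 * 10 ^ ℓ) (hc : |c| ≤ 9 * 10 ^ ℓ)
    (heq : 9 * (F (p + 2) : ℝ) = A * 10 ^ M + c) (hp : 5 * T ≤ p) : False := by
  have hkr : (901 : ℝ) ≤ k := by exact_mod_cast hk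
  have l2a := Real.log_two_gt_d9
  have l2b := Real.log_two_lt_d9
  obtain ⟨α, ha1, ha2, ha, hka⟩ := G4_root k hk
  have hα0 : 0 < α := by linarith
  obtain ⟨lαa, lαb⟩ := G4_logα α ha1 ha2
  obtain ⟨l10a, l10b⟩ := G4_log10
  have hden : 1.8 ≤ (k + 1) * α - 2 * k := by linarith
  have hden2 : (k + 1) * α - 2 * k ≤ 2 := by nlinarith
  obtain ⟨dn, hdn⟩ : ∃ x : ℝ, x = (k + 1) * α - 2 * k := ⟨_, rfl⟩
  have hden3 : 1.89 ≤ dn := by linarith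
  have hden' : dn ≤ 2 := by linarith
  have hdnp : 0 < dn := by linarith
  have hdnα : α - 1 / 100 ≤ dn := by linarith
  obtain ⟨g, hg⟩ : ∃ x : ℝ, x = (α - 1) / dn := ⟨_, rfl⟩
  have hgd : g * dn = α - 1 := by rw [hg]; field_simp
  have hg45 : 0.45 ≤ g := by rw [hg, le_div_iff₀ hdnp]; linarith
  have hg1 : g ≤ 1 := by rw [hg, div_le_one hdnp]; linarith
  obtain ⟨N, hN⟩ : ∃ x : ℕ, x = p + 1 := ⟨_, rfl⟩
  have hbin := G4_binet k hk F hF0 hF1 hFrec α g ha1 ha2 ha (by rw [← hdn]; exact hgd)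
    (by linarith) hg1 N
  have hNc : ((N : ℤ) + 1) = p + 2 := by rw [hN]; push_cast; ring
  rw [hNc] at hbin
  have hbd := (G4_bounds k hk F hF0 hF1 hFrec p).2
  have hFub : (F (p + 2) : ℝ) ≤ 2 ^ p := by
    have h1 : (2 : ℝ) ^ p * 2⁻¹ ^ p = 1 := by rw [← mul_pow]; norm_num
    have h2 : (F (p + 2) : ℝ) = F (p + 2) * 2⁻¹ ^ p * 2 ^ p := by
      rw [mul_assoc, mul_comm (2⁻¹ ^ p), h1, mul_one]
    rw [h2]
    calc _ ≤ 1 * (2 : ℝ) ^ p := by gcongr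
      _ = _ := one_mul _
  have hT0 : 0 < T := by rw [hT]; positivity
  -- G
  obtain ⟨G, hGd⟩ : ∃ x : ℕ, x = Nat.log 2 N := ⟨_, rfl⟩
  have hN0 : N ≠ 0 := by omega
  have hG1 : 2 ^ G ≤ N := by rw [hGd]; exact Nat.pow_log_le_self 2 hN0
  have hG2 : N < 2 ^ (G + 1) := by rw [hGd]; exact Nat.lt_pow_succ_log_self (by norm_num) N
  have hpN : (p : ℝ) + 1 = N := by rw [hN]; push_cast; ring
  have hG2r : (N : ℝ) < 2 ^ (G + 1) := by exact_mod_cast hG2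
  have hNpos : (0 : ℝ) < N := by rw [← hpN]; positivity
  have hlogT : Real.log T = k / 2 * Real.log 2 := by rw [hT, Real.log_exp]
  have hlN : Real.log N < (G + 1) * Real.log 2 := by
    have := Real.log_lt_log hNpos hG2r
    rw [Real.log_pow] at this
    exact_mod_cast this
  have hkG2 : (k : ℝ) < 2 * G := by
    have h1 : Real.log (2 ^ 2 * T) ≤ Real.log N := Real.log_le_log (by positivity) (by linarith)
    rw [Real.log_mul (by norm_num) hT0.ne', Real.log_pow, hlogT] at h1
    push_cast at h1
    have h2 : (2 + (k : ℝ) / 2) * Real.log 2 < (G + 1) * Real.log 2 := by linarith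
    have := lt_of_mul_lt_mul_right h2 (by linarith)
    linarith
  have hkG : k < 2 * G := by exact_mod_cast hkG2
  have hG449 : 449 ≤ G := by omega
  have hGr : (449 : ℝ) ≤ G := by exact_mod_cast hG449
  have hlogN : Real.log N ≤ G := by nlinarith
  have hNbig := (G4_pow_bound G hG449).trans hG1
  have hNG : 1000 * (G : ℝ) ≤ N := by
    have h1 : G ^ 1 ≤ G ^ 18 := Nat.pow_le_pow_right (by omega) (by norm_num)
    rw [pow_one] at h1
    have : 1000 * G ≤ N := by omega
    exact_mod_cast this
  clear hNbig
  -- bounds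
  have hℓ10 : (10 : ℝ) ≤ 10 ^ ℓ := by
    calc (10 : ℝ) = 10 ^ 1 := by norm_num
      _ ≤ _ := pow_le_pow_right₀ (by norm_num) hℓ
  have hMℓ : (10 : ℝ) * 10 ^ ℓ ≤ 10 ^ M := by
    rw [← pow_succ']; exact pow_le_pow_right₀ (by norm_num) hℓM
  have hA9 : (9 : ℝ) ≤ A := by linarith
  have hA1n : 1 ≤ A := by exact_mod_cast (show (1 : ℝ) ≤ A by linarith)
  have hcab := abs_le.1 hc
  have hbab := abs_le.1 hbin
  have h10M : (0 : ℝ) < 10 ^ M := by positivity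
  have hMN : M ≤ N := by
    have h1 : 9 * (10 : ℝ) ^ M ≤ A * 10 ^ M := by gcongr
    have h2 : (10 : ℝ) ^ M ≤ 2 ^ N := by
      rw [hN, pow_succ]; linarith
    have h3 : (2 : ℝ) ^ M ≤ 2 ^ N := (pow_le_pow_left₀ (by norm_num) (by norm_num) M).trans h2
    exact (pow_le_pow_iff_right₀ (by norm_num : (1 : ℝ) < 2)).1 h3
  have hNM : (N : ℝ) ≤ 4 * M := by
    have h1 : α ^ N ≤ 7 * (T * 10 ^ M) := by
      have h2 : (A : ℝ) * 10 ^ M ≤ (9 * T) * 10 ^ M := by gcongr; linarith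
      have h3 : T * 1 ≤ T * 10 ^ M := by gcongr; linarith
      have h4 : 0.45 * α ^ N ≤ g * α ^ N := by gcongr
      linarith
    have h5 := Real.log_le_log (by positivity) h1
    rw [Real.log_pow, Real.log_mul (by norm_num) (by positivity),
      Real.log_mul hT0.ne' (by positivity), Real.log_pow, hlogT] at h5
    have h6 : Real.log 7 ≤ 7 - 1 := Real.log_le_sub_one_of_pos (by norm_num)
    have h7 : (N : ℝ) * 0.64 ≤ N * Real.log α := by gcongr
    have h8 : (M : ℝ) * Real.log 10 ≤ M * 2.311 := by gcongr
    have h9 : (k : ℝ) / 2 * Real.log 2 ≤ k / 2 * 1 := by gcongr; linarith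
    linarith
  have hNMn : N ≤ 4 * M := by exact_mod_cast hNM
  have hAk : (A : ℝ) ≤ Real.exp k := by
    have h1 : (9 : ℝ) ≤ Real.exp 3 := by
      have : Real.exp 3 = Real.exp 1 ^ 3 := by rw [← Real.exp_nat_mul]; norm_num
      rw [this]
      have he := Real.exp_one_gt_d9
      calc (9 : ℝ) ≤ 2.7 ^ 3 := by norm_num
        _ ≤ _ := by gcongr; linarith
    calc (A : ℝ) ≤ 9 * T := by linarith
      _ ≤ Real.exp 3 * Real.exp (k / 2 * Real.log 2) := by rw [hT]; gcongr
      _ = Real.exp (3 + k / 2 * Real.log 2) := by rw [Real.exp_add]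
      _ ≤ _ := by
        apply Real.exp_le_exp.2
        have h9 : (k : ℝ) / 2 * Real.log 2 ≤ k / 2 * 1 := by gcongr; linarith
        linarith
  have hAp : (0 : ℝ) < A := by linarith
  -- lambda
  obtain ⟨x, hx⟩ : ∃ x : ℝ, x = (c - 9 * ((F (p + 2) : ℝ) - g * α ^ N)) / (A * 10 ^ M) :=
    ⟨_, rfl⟩
  have hx1 : 1 + x = α ^ N / 10 ^ M * (9 * (α - 1) / (A * dn)) := by
    have h1 : 9 * (α - 1) / (A * dn) = 9 * g / A := by rw [hg]; field_simp
    rw [h1, hx]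
    field_simp
    linear_combination -heq
  have hxb : |x| ≤ 20 / 10 ^ M := by
    rw [hx, abs_div, abs_of_pos (show (0 : ℝ) < A * 10 ^ M by positivity),
      div_le_div_iff₀ (by positivity) h10M]
    have h1 : |c - 9 * ((F (p + 2) : ℝ) - g * α ^ N)| ≤ 18 * 10 ^ ℓ := by
      rw [abs_le]; constructor <;> linarith
    calc _ ≤ 18 * 10 ^ ℓ * (10 : ℝ) ^ M := by gcongr
      _ ≤ 20 * A * 10 ^ M := mul_le_mul_of_nonneg_right (by linarith) h10M.le
      _ = _ := by ring
  have h40 : 40 / (10 : ℝ) ^ M ≤ Real.exp (-(N : ℝ) / 3) := by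
    rw [div_le_iff₀ h10M]
    have h1 : Real.exp (N / 2) ≤ (10 : ℝ) ^ M := by
      have : (10 : ℝ) ^ M = Real.exp (M * Real.log 10) := by
        rw [← Real.log_pow, Real.exp_log h10M]
      rw [this]
      apply Real.exp_le_exp.2
      have : (M : ℝ) * 2 ≤ M * Real.log 10 := by gcongr
      linarith
    calc (40 : ℝ) ≤ Real.exp (N / 6) := by
          have := Real.add_one_le_exp ((N : ℝ) / 6)
          linarith
      _ = Real.exp (-(N : ℝ) / 3) * Real.exp (N / 2) := by rw [← Real.exp_add]; ring_nf
      _ ≤ _ := by gcongr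
  have h4001 : 40 / (10 : ℝ) ^ M ≤ 1 := h40.trans (by rw [Real.exp_le_one_iff]; linarith)
  have h2040 : 20 / (10 : ℝ) ^ M = 40 / (10 : ℝ) ^ M / 2 := by ring
  have hxab := abs_le.1 hxb
  have hxp : 1 / 2 ≤ 1 + x := by linarith [hxab.1]
  have hΛb : |Real.log (1 + x)| ≤ Real.exp (-(N : ℝ) / 3) := by
    refine le_trans ?_ h40
    have h1 : Real.log (1 + x) ≤ 1 + x - 1 := Real.log_le_sub_one_of_pos (by linarith)
    have h2 := Real.one_sub_inv_le_log_of_pos (show 0 < 1 + x by linarith)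
    have h3 : -(2 * |x|) ≤ 1 - (1 + x)⁻¹ := by
      have h4 : 1 - (1 + x)⁻¹ = x * (1 + x)⁻¹ := by
        field_simp
        ring
      rw [h4]
      have h5 : (1 + x)⁻¹ ≤ 2 := by
        rw [inv_le_comm₀ (by linarith) (by norm_num)]; linarith
      have h6 : 0 < (1 + x)⁻¹ := by positivity
      have h7 : -(|x| * (1 + x)⁻¹) ≤ x * (1 + x)⁻¹ := by
        rw [← neg_mul]; gcongr; exact neg_abs_le x
      have h8 : |x| * (1 + x)⁻¹ ≤ |x| * 2 := by gcongr
      linarith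
    have := abs_nonneg x
    have := le_abs_self x
    rw [abs_le]
    constructor <;> linarith
  refine G4_large α k hk ha ha1 ha2 hden hden2 G N M A hG449 (by omega)
    ((G4_pow_bound G hG449).trans hG1) hlogN hA1n hAk hMN hNMn (Real.log (1 + x)) ?_ hΛb
  have hα1 : 0 < α - 1 := by linarith
  rw [hx1, ← hdn, Real.log_mul (by positivity) (by positivity),
    Real.log_div (by positivity) (by positivity), Real.log_pow, Real.log_pow]

theorem Gamma4_small
    (k : ℕ) (hk : 900 < k) (F : ℤ → ℤ)
    (hF0 : ∀ n : ℤ, 2 - (k : ℤ) ≤ n → n ≤ 0 → F n = 0)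
    (hF1 : F 1 = 1)
    (hFrec : ∀ n : ℤ, 2 ≤ n → F n = ∑ i ∈ Finset.range k, F (n - 1 - (i : ℤ)))
    (n : ℤ) (hn : 9 ≤ n) (hnk : (k : ℤ) + 2 ≤ n)
    (d1 d2 : ℕ) (hd1 : d1 ≤ 9) (hd2 : d2 ≤ 9) (hd1pos : 0 < d1) (hne : d1 ≠ d2)
    (ℓ m : ℕ) (hℓ : 1 ≤ ℓ) (hm : 1 ≤ m)
    (heq : F n = (d1 : ℤ) * ((10 ^ ℓ - 1) / 9) * 10 ^ (ℓ + m)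
        + (d2 : ℤ) * ((10 ^ m - 1) / 9) * 10 ^ ℓ
        + (d1 : ℤ) * ((10 ^ ℓ - 1) / 9))
    (hmin : (ℓ : ℝ) * Real.log 10 / Real.log 2 < (k : ℝ) / 2) :
    |1 / 9 * ((d1 : ℝ) * 10 ^ ℓ - ((d1 : ℝ) - (d2 : ℝ))) * 10 ^ (ℓ + m)
        * (2 : ℝ) ^ (-(n - 2)) - 1|
      < 8 * (2 : ℝ) ^ (-((k : ℝ) / 2)) := by
  obtain ⟨p, hp⟩ : ∃ p : ℕ, n = p + 2 := ⟨(n - 2).toNat, by omega⟩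
  have hpk : k ≤ p := by omega
  have hdiv : ∀ j : ℕ, 9 * (((10 : ℤ) ^ j - 1) / 9) = 10 ^ j - 1 := by
    intro j
    apply Int.mul_ediv_cancel'
    have := sub_dvd_pow_sub_pow (10 : ℤ) 1 j
    simpa using this
  obtain ⟨c, hc⟩ : ∃ x : ℝ, x = ((d1 : ℝ) - d2) * 10 ^ ℓ - d1 := ⟨_, rfl⟩
  have h9Z : 9 * F n = ((d1 : ℤ) * 10 ^ ℓ - (d1 - d2)) * 10 ^ (ℓ + m) +
      (((d1 : ℤ) - d2) * 10 ^ ℓ - d1) := by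
    have h1 := hdiv ℓ
    have h2 := hdiv m
    rw [heq, pow_add]
    linear_combination ((d1 : ℤ) * (10 ^ ℓ * 10 ^ m) + d1) * h1 + (d2 : ℤ) * 10 ^ ℓ * h2
  have h9 : 9 * (F (p + 2) : ℝ) = ((d1 : ℝ) * 10 ^ ℓ - (d1 - d2)) * 10 ^ (ℓ + m) + c := by
    rw [hc, ← hp]; exact_mod_cast h9Z
  obtain ⟨T, hT⟩ : ∃ x : ℝ, x = Real.exp (k / 2 * Real.log 2) := ⟨_, rfl⟩
  have hT0 : 0 < T := by rw [hT]; positivity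
  have hl2 : 0 < Real.log 2 := by linarith [Real.log_two_gt_d9]
  have hℓT : (10 : ℝ) ^ ℓ ≤ T := by
    rw [div_lt_iff₀ hl2] at hmin
    rw [hT, ← Real.log_le_iff_le_exp (by positivity), Real.log_pow]
    exact hmin.le
  have hT2 : T * T = 2 ^ k := by
    rw [hT, ← Real.exp_add, ← Real.exp_log (show (0 : ℝ) < 2 ^ k by positivity), Real.log_pow]
    ring_nf
  have hTi : (2 : ℝ) ^ (-((k : ℝ) / 2)) = T⁻¹ := by
    rw [Real.rpow_def_of_pos (by norm_num), hT, ← Real.exp_neg]; ring_nf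
  have hℓ10 : (10 : ℝ) ≤ 10 ^ ℓ := by
    calc (10 : ℝ) = 10 ^ 1 := by norm_num
      _ ≤ _ := pow_le_pow_right₀ (by norm_num) hℓ
  have r1 : (1 : ℝ) ≤ d1 := by exact_mod_cast hd1pos
  have r2 : (d1 : ℝ) ≤ 9 := by exact_mod_cast hd1
  have r3 : (d2 : ℝ) ≤ 9 := by exact_mod_cast hd2
  have r4 : (0 : ℝ) ≤ d2 := by positivity
  have hcb : |c| ≤ 9 * 10 ^ ℓ := by
    rw [hc, abs_le]
    have h1 : -8 * (10 : ℝ) ^ ℓ ≤ ((d1 : ℝ) - d2) * 10 ^ ℓ := by gcongr; linarith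
    have h2 : ((d1 : ℝ) - d2) * 10 ^ ℓ ≤ 9 * (10 : ℝ) ^ ℓ := by gcongr; linarith
    constructor <;> linarith
  rcases le_or_gt (5 * T) p with hcase | hcase
  · exfalso
    obtain ⟨A, hA⟩ : ∃ x : ℕ, x = d1 * (10 ^ ℓ - 1) + d2 := ⟨_, rfl⟩
    have hAr : (A : ℝ) = (d1 : ℝ) * 10 ^ ℓ - (d1 - d2) := by
      rw [hA]; push_cast [Nat.one_le_pow ℓ 10 (by norm_num)]; ring
    rw [← hAr] at h9
    have h1 : (0 : ℝ) ≤ 10 ^ ℓ - 1 := by linarith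
    have hAr' : (A : ℝ) = (d1 : ℝ) * (10 ^ ℓ - 1) + d2 := by rw [hAr]; ring
    refine G4_case_large k hk F hF0 hF1 hFrec p ℓ (ℓ + m) A c T hT hℓ hℓT (by omega) ?_ ?_ hcb h9
      hcase
    · have : 1 * ((10 : ℝ) ^ ℓ - 1) ≤ d1 * (10 ^ ℓ - 1) := by gcongr
      linarith
    · have : d1 * ((10 : ℝ) ^ ℓ - 1) ≤ 9 * (10 ^ ℓ - 1) := by gcongr
      linarith
  · obtain ⟨b1, b2⟩ := G4_bounds k hk F hF0 hF1 hFrec p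
    have hz : (2 : ℝ) ^ (-(n - 2)) = 2⁻¹ ^ p := by
      rw [hp, show -((p : ℤ) + 2 - 2) = -(p : ℤ) by ring, zpow_neg, zpow_natCast, inv_pow]
    rw [hz, hTi]
    have h1 : 1 / 9 * ((d1 : ℝ) * 10 ^ ℓ - ((d1 : ℝ) - (d2 : ℝ))) * 10 ^ (ℓ + m) * 2⁻¹ ^ p - 1 =
        (F (p + 2) * 2⁻¹ ^ p - 1) - c / 9 * 2⁻¹ ^ p := by
      linear_combination (-(1 / 9) * (2⁻¹ : ℝ) ^ p) * h9
    rw [h1]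
    have hki : (2⁻¹ : ℝ) ^ k = T⁻¹ * T⁻¹ := by rw [inv_pow, ← hT2, mul_inv]
    have hTT : T * T⁻¹ = 1 := mul_inv_cancel₀ hT0.ne'
    have hTip : 0 < T⁻¹ := by positivity
    have h2 : (p : ℝ) * 2⁻¹ ^ k ≤ 5 * T⁻¹ := by
      calc (p : ℝ) * 2⁻¹ ^ k ≤ (5 * T) * (T⁻¹ * T⁻¹) := by rw [hki]; gcongr
        _ = 5 * (T * T⁻¹) * T⁻¹ := by ring
        _ = _ := by rw [hTT]; ring
    have h3 : |c / 9 * 2⁻¹ ^ p| ≤ T⁻¹ := by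
      rw [abs_mul, abs_div, abs_of_pos (show (0 : ℝ) < 9 by norm_num),
        abs_of_pos (show (0 : ℝ) < 2⁻¹ ^ p by positivity)]
      have h4 : (2⁻¹ : ℝ) ^ p ≤ 2⁻¹ ^ k := pow_le_pow_of_le_one (by norm_num) (by norm_num) hpk
      calc |c| / 9 * 2⁻¹ ^ p ≤ T * (T⁻¹ * T⁻¹) := by
            rw [← hki]; gcongr; linarith
        _ = (T * T⁻¹) * T⁻¹ := by ring
        _ = _ := by rw [hTT]; ring
    have h5 := abs_le.1 h3
    rw [abs_lt]
    constructor <;> linarith [h5.1, h5.2]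
end
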